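/- arXiv:1707.09550 — 2 statements merged into one kernel-verified Lean document; each statement's English description precedes it below -/
import Mathlib

section
/- (Key modified-energy estimate.) Let s ∈ ℕ with s ≥ 7, let j be an index with data (λ_j, a_j, b_j, c_j, d_j), p_j := a_j+b_j+c_j+d_j ≥ 3, and let M_{NR,j} be the multiplier defined with this s. Then there exists C > 0 (depending on s, p_j, λ_j and the constant C₀ in M_H) such that for all real-valued f, g ∈ C^∞(𝕋): | (−1)^s (N_j(f) − N_j(g), ∂_x^{2s}(f−g))_{L²} + P_{N_j}(f) ‖∂_x^{s+1}(f−g)‖_{L²}² + Γ^{(p_j)}((ik_{p_j})^{s+1}(ik_{p_j+1})^{s+1} M_{NR,j}; f,…,f,f−g,f−g) | ≤ C [ ‖f−g‖_{H^s}² (‖f‖_{H⁸}+‖g‖_{H⁸})^{p_j−1} + ‖f−g‖_{H⁷}² (‖f‖_{H^s}+‖g‖_{H^s})² (‖f‖_{H⁷}+‖g‖_{H⁷})^{p_j−3} + ‖f−g‖_{H⁷}² ‖g‖_{H^{s+3}}² (‖f‖_{H⁷}+‖g‖_{H⁷})^{p_j−3} ], where in the Γ-expression the first p_j−1 arguments are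 f and the last two are f−g. -/
/- Proposition multi_est: the key modified-energy multilinear estimate. -/

namespace FifthOrderStmt18

open scoped NNReal Classical

/-- Maximum of a nonnegative real-valued family over a finset (`0` if the finset is empty). -/
noncomputable def fmax {α : Type*} (s : Finset α) (f : α → ℝ) : ℝ :=
  ((s.sup fun i => Real.toNNReal (f i) : ℝ≥0) : ℝ)

/-- Fourier coefficient of a `2π`-periodic function `f : ℝ → ℂ`:
`f̂(k) = (1/2π) ∫_0^{2π} f(x) e^{-ikx} dx`. -/
noncomputable def fhat (f : ℝ → ℂ) (k : ℤ) : ℂ :=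
  (Complex.ofReal (2 * Real.pi))⁻¹ *
    ∫ x in (0:ℝ)..(2 * Real.pi), f x * Complex.exp (-Complex.I * (k : ℂ) * (x : ℂ))

/-- The multilinear form
`Γ^(p)(M; f₁,…,f_{p+1}) = Σ_{k ∈ Z₀^(p)} M(k) ∏_{l=1}^{p+1} f̂_l(k_l)`,
where `Z₀^(p) = {k ∈ ℤ^{p+1} : k₁ + ⋯ + k_{p+1} = 0}` (indices shifted to start at `0`). -/
noncomputable def Gam (p : ℕ) (M : (Fin (p + 1) → ℤ) → ℂ) (F : Fin (p + 1) → ℝ → ℂ) : ℂ :=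
  ∑' k : {k : Fin (p + 1) → ℤ // (∑ i, k i) = 0}, M k.1 * ∏ i, fhat (F i) (k.1 i)

/-- The argument tuple `(f, …, f, g, g)`: `p − 1` copies of `f` followed by two copies of `g`. -/
def tup (p : ℕ) (f g : ℝ → ℂ) : Fin (p + 1) → ℝ → ℂ :=
  fun i => if (i : ℕ) < p - 1 then f else g

/-- Sobolev norm `‖f‖_{H^s} = (Σ_k (1+k²)^s |f̂(k)|²)^{1/2}`. -/
noncomputable def hsNormC (s : ℕ) (f : ℝ → ℂ) : ℝ :=
  Real.sqrt (∑' k : ℤ, (1 + (k : ℝ) ^ 2) ^ s * ‖fhat f k‖ ^ 2)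

/-- `‖∂_x^m f‖_{L²}² = Σ_k k^{2m} |f̂(k)|²`. -/
noncomputable def dxNormSq (m : ℕ) (f : ℝ → ℂ) : ℝ :=
  ∑' k : ℤ, (k : ℝ) ^ (2 * m) * ‖fhat f k‖ ^ 2

/-- Complexification of a real-valued function. -/
def cF (f : ℝ → ℝ) : ℝ → ℂ := fun x => (f x : ℂ)

/-- `k_{(1,p-1)} = k₁ + ⋯ + k_{p-1}` (with indices shifted to start at `0`). -/
def ksum1 (p : ℕ) (k : Fin (p + 1) → ℤ) : ℤ :=
  ∑ i ∈ Finset.univ.filter (fun i : Fin (p + 1) => (i : ℕ) < p - 1), k i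

/-- The high-frequency cut-off `M_H^(p)` with constant `C₀`:
`1` when `min{|k_p|^{4/5}, |k_{p+1}|^{4/5}} ≥ C₀ max{|k₁|,…,|k_{p-1}|}`, else `0`. -/
noncomputable def MH (C₀ : ℝ) (p : ℕ) (k : Fin (p + 1) → ℤ) : ℂ :=
  if C₀ * fmax (Finset.univ.filter (fun i : Fin (p + 1) => (i : ℕ) < p - 1))
        (fun i => |(k i : ℝ)|)
      ≤ min (|(k (⟨p - 1, by omega⟩ : Fin (p + 1)) : ℝ)| ^ ((4:ℝ)/5))
            (|(k (Fin.last p) : ℝ)| ^ ((4:ℝ)/5))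
  then 1 else 0

/-- The non-zero-sum cut-off `M_NZ^(p)`: `1` when `k_{(1,p-1)} ≠ 0`, else `0`. -/
def MNZ (p : ℕ) (k : Fin (p + 1) → ℤ) : ℂ :=
  if ksum1 p k ≠ 0 then 1 else 0

/-- `D_{a,b,c}(k) = ∏_{l=1}^{a}(ik_l)³ ∏_{l=a+1}^{a+b}(ik_l)² ∏_{l=a+b+1}^{a+b+c}(ik_l)`. -/
noncomputable def Dabc (p a b c : ℕ) (k : Fin (p + 1) → ℤ) : ℂ :=
  (∏ i ∈ Finset.univ.filter (fun i : Fin (p + 1) => (i : ℕ) < a),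
      (Complex.I * (k i : ℂ)) ^ 3)
    * (∏ i ∈ Finset.univ.filter (fun i : Fin (p + 1) => a ≤ (i : ℕ) ∧ (i : ℕ) < a + b),
        (Complex.I * (k i : ℂ)) ^ 2)
    * (∏ i ∈ Finset.univ.filter
          (fun i : Fin (p + 1) => a + b ≤ (i : ℕ) ∧ (i : ℕ) < a + b + c),
        (Complex.I * (k i : ℂ)))

/-- The multiplier
`M_{NR} = M_H M_NZ λ ((s−3/2) a (ik_{(1,p-1)}) D_{a-1,b,c} + b D_{a,b-1,c})`
(the conventions for `a = 0` resp. `b = 0` are automatic since the corresponding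
terms carry the factors `a` resp. `b`). -/
noncomputable def MNR (C₀ : ℝ) (s p : ℕ) (lam : ℝ) (a b c : ℕ)
    (k : Fin (p + 1) → ℤ) : ℂ :=
  MH C₀ p k * MNZ p k * (lam : ℂ) *
    (((s : ℂ) - 3/2) * (a : ℂ) * (Complex.I * (ksum1 p k : ℂ)) * Dabc p (a - 1) b c k
      + (b : ℂ) * Dabc p a (b - 1) c k)

/-- `P_{N_j}(f) = (λ_j b_j/2π) ∫_𝕋 (∂_x³f)^{a_j}(∂_x²f)^{b_j-1}(∂_xf)^{c_j}f^{d_j} dx`. -/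
noncomputable def PNj (lam : ℝ) (a b c d : ℕ) (f : ℝ → ℝ) : ℝ :=
  (lam * (b : ℝ) / (2 * Real.pi)) *
    ∫ x in (0:ℝ)..(2 * Real.pi),
      (iteratedDeriv 3 f x) ^ a * (iteratedDeriv 2 f x) ^ (b - 1) *
        (deriv f x) ^ c * (f x) ^ d

/-- The monomial nonlinearity `N_j(f) = λ_j (∂_x³f)^{a_j}(∂_x²f)^{b_j}(∂_xf)^{c_j}f^{d_j}`. -/
noncomputable def NjF (lam : ℝ) (a b c d : ℕ) (f : ℝ → ℝ) (x : ℝ) : ℝ :=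
  lam * (iteratedDeriv 3 f x) ^ a * (iteratedDeriv 2 f x) ^ b *
    (deriv f x) ^ c * (f x) ^ d

/-- A product of summable nonnegative families, indexed by integer tuples, is summable and its sum
is the product of the sums. -/
theorem hasSum_pi_prod {n : ℕ} (F : Fin n → ℤ → ℝ) (h0 : ∀ i k, 0 ≤ F i k)
    (hs : ∀ i, Summable (F i)) :
    HasSum (fun k : Fin n → ℤ => ∏ i, F i (k i)) (∏ i, ∑' k, F i k) := by
  induction n with
  | zero =>
    simp only [Finset.univ_eq_empty, Finset.prod_empty]
    exact hasSum_unique _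
  | succ n ih =>
    have h1 := ih (fun i => F i.succ) (fun i k => h0 _ _) (fun i => hs _)
    have hsum := Summable.mul_of_nonneg (f := F 0)
      (g := fun k : Fin n → ℤ => ∏ i : Fin n, F i.succ (k i)) (hs 0) h1.summable (fun k => h0 _ _)
      (fun k => Finset.prod_nonneg fun i _ => h0 _ _)
    have h2 := HasSum.mul (hs 0).hasSum h1 hsum
    rw [← (Fin.insertNthEquiv (fun _ => ℤ) 0).hasSum_iff, Fin.prod_univ_succ]
    convert! h2 using 2 with z
    simp [Fin.prod_univ_succ]

/-- The Japanese bracket `1 + |k|`. -/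
noncomputable def jap (k : ℤ) : ℝ := 1 + |(k : ℝ)|

theorem one_le_jap (k : ℤ) : 1 ≤ jap k := by
  unfold jap; linarith [abs_nonneg (k : ℝ)]

theorem jap_pos (k : ℤ) : 0 < jap k := zero_lt_one.trans_le (one_le_jap k)

theorem abs_le_jap (k : ℤ) : |(k : ℝ)| ≤ jap k := by
  unfold jap; linarith [abs_nonneg (k : ℝ)]

/-- Rapidly decreasing sequences. -/
def Rapid (u : ℤ → ℂ) : Prop := ∀ n : ℕ, Summable fun k => jap k ^ n * ‖u k‖

/-- The weighted `ℓ¹` norm. -/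
noncomputable def wOne (n : ℕ) (u : ℤ → ℂ) : ℝ := ∑' k, jap k ^ n * ‖u k‖

/-- The square of the weighted `ℓ²` norm. -/
noncomputable def wTwo (n : ℕ) (u : ℤ → ℂ) : ℝ := ∑' k, (jap k ^ n * ‖u k‖) ^ 2

theorem wOne_nonneg (n : ℕ) (u : ℤ → ℂ) : 0 ≤ wOne n u :=
  tsum_nonneg fun k => mul_nonneg (pow_nonneg (jap_pos k).le _) (norm_nonneg _)

theorem wTwo_nonneg (n : ℕ) (u : ℤ → ℂ) : 0 ≤ wTwo n u :=
  tsum_nonneg fun _ => sq_nonneg _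

theorem Rapid.summable_sq {u : ℤ → ℂ} (hu : Rapid u) (n : ℕ) :
    Summable fun k => (jap k ^ n * ‖u k‖) ^ 2 := by
  have h0 : ∀ k, 0 ≤ jap k ^ n * ‖u k‖ := fun k =>
    mul_nonneg (pow_nonneg (jap_pos k).le _) (norm_nonneg _)
  refine Summable.of_nonneg_of_le (fun k => sq_nonneg _) (fun k => ?_)
    ((hu n).mul_left (wOne n u))
  rw [sq]
  exact mul_le_mul_of_nonneg_right ((hu n).le_tsum k (fun j _ => h0 j)) (h0 k)

theorem tsum_mul_le_sqrt {ι : Type*} {A B : ι → ℝ} (hA : ∀ i, 0 ≤ A i) (hB : ∀ i, 0 ≤ B i)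
    (sA : Summable fun i => A i ^ 2) (sB : Summable fun i => B i ^ 2) :
    Summable (fun i => A i * B i) ∧
      ∑' i, A i * B i ≤ √(∑' i, A i ^ 2) * √(∑' i, B i ^ 2) := by
  have hs := Real.summable_mul_of_Lp_Lq_of_nonneg Real.HolderConjugate.two_two hA hB
    (by simpa using sA) (by simpa using sB)
  refine ⟨hs, ?_⟩
  have h := Real.inner_le_Lp_mul_Lq_tsum_of_nonneg Real.HolderConjugate.two_two hA hB
    (by simpa using sA) (by simpa using sB)
  simpa [Real.sqrt_eq_rpow] using h

/-- The last frequency `y` of a tuple summing to zero, in terms of the others. -/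
def lastFreq {q : ℕ} (z : ℤ × (Fin q → ℤ)) : ℤ := -(z.1 + ∑ i, z.2 i)

/-- The involution exchanging `x` and `y`. -/
def swapFreq (q : ℕ) : ℤ × (Fin q → ℤ) ≃ ℤ × (Fin q → ℤ) where
  toFun z := (lastFreq z, z.2)
  invFun z := (lastFreq z, z.2)
  left_inv z := by ext <;> simp [lastFreq]
  right_inv z := by ext <;> simp [lastFreq]

theorem lastFreq_swapFreq {q : ℕ} (z : ℤ × (Fin q → ℤ)) : lastFreq (swapFreq q z) = z.1 := by
  simp [lastFreq, swapFreq]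

theorem multilinear_bound {q : ℕ} {A B : ℤ → ℝ} {F : Fin q → ℤ → ℝ} (hA : ∀ k, 0 ≤ A k)
    (hB : ∀ k, 0 ≤ B k) (hF : ∀ i k, 0 ≤ F i k) (sA : Summable fun k => A k ^ 2)
    (sB : Summable fun k => B k ^ 2) (sF : ∀ i, Summable (F i)) :
    Summable (fun z : ℤ × (Fin q → ℤ) => A z.1 * B (lastFreq z) * ∏ i, F i (z.2 i)) ∧
      ∑' z : ℤ × (Fin q → ℤ), A z.1 * B (lastFreq z) * ∏ i, F i (z.2 i) ≤
        √(∑' k, A k ^ 2) * √(∑' k, B k ^ 2) * ∏ i, ∑' k, F i k := by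
  have hP0 : ∀ k : Fin q → ℤ, 0 ≤ ∏ i, F i (k i) := fun k => Finset.prod_nonneg fun i _ => hF _ _
  have hT0 : 0 ≤ ∏ i, ∑' k, F i k := Finset.prod_nonneg fun i _ => tsum_nonneg (hF i)
  have hP := hasSum_pi_prod F hF sF
  have key : ∀ D : ℤ → ℝ, (Summable fun k => D k ^ 2) →
      HasSum (fun z : ℤ × (Fin q → ℤ) => (D z.1 * √(∏ i, F i (z.2 i))) ^ 2)
        ((∑' k, D k ^ 2) * ∏ i, ∑' k, F i k) := by
    intro D sD
    have hs := Summable.mul_of_nonneg (f := fun k => D k ^ 2)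
      (g := fun k : Fin q → ℤ => ∏ i, F i (k i)) sD hP.summable (fun k => sq_nonneg _) hP0
    have h := HasSum.mul sD.hasSum hP hs
    convert! h using 2 with z
    rw [mul_pow, Real.sq_sqrt (hP0 _)]
  have kA := key A sA
  have kB := (swapFreq q).hasSum_iff.mpr (key B sB)
  have h := tsum_mul_le_sqrt (A := fun z : ℤ × (Fin q → ℤ) => A z.1 * √(∏ i, F i (z.2 i)))
    (B := fun z : ℤ × (Fin q → ℤ) => B (lastFreq z) * √(∏ i, F i (z.2 i)))
    (fun z => mul_nonneg (hA _) (Real.sqrt_nonneg _))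
    (fun z => mul_nonneg (hB _) (Real.sqrt_nonneg _)) kA.summable kB.summable
  have e : ∀ z : ℤ × (Fin q → ℤ), A z.1 * √(∏ i, F i (z.2 i)) *
      (B (lastFreq z) * √(∏ i, F i (z.2 i))) = A z.1 * B (lastFreq z) * ∏ i, F i (z.2 i) := by
    intro z
    rw [mul_mul_mul_comm, Real.mul_self_sqrt (hP0 _)]
  simp only [e] at h
  refine ⟨h.1, h.2.trans_eq ?_⟩
  have eB : ∑' z : ℤ × (Fin q → ℤ), (B (lastFreq z) * √(∏ i, F i (z.2 i))) ^ 2 =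
    (∑' k, B k ^ 2) * ∏ i, ∑' k, F i k := kB.tsum_eq
  rw [kA.tsum_eq, eB, Real.sqrt_mul (tsum_nonneg fun k => sq_nonneg _),
    Real.sqrt_mul (tsum_nonneg fun k => sq_nonneg _), mul_mul_mul_comm, Real.mul_self_sqrt hT0]

/-- The value at `z` of the product of Fourier coefficients. -/
noncomputable def coeffProd {q : ℕ} (u : ℤ → ℂ) (w₁ w₂ : ℤ → ℂ) (z : ℤ × (Fin q → ℤ)) : ℂ :=
  w₁ z.1 * w₂ (lastFreq z) * ∏ i, u (z.2 i)

theorem symbol_bound {q : ℕ} {u w₁ w₂ : ℤ → ℂ} (hu : Rapid u) (h₁ : Rapid w₁) (h₂ : Rapid w₂)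
    {M : ℤ × (Fin q → ℤ) → ℂ} {C : ℝ} {n₁ n₂ n₃ : ℕ}
    (hM : ∀ z, ‖M z‖ ≤ C * (jap z.1 ^ n₁ * jap (lastFreq z) ^ n₂ * ∏ i, jap (z.2 i) ^ n₃)) :
    Summable (fun z => M z * coeffProd u w₁ w₂ z) ∧
      ‖∑' z, M z * coeffProd u w₁ w₂ z‖ ≤
        C * (√(wTwo n₁ w₁) * √(wTwo n₂ w₂) * wOne n₃ u ^ q) := by
  have hn : ∀ (n : ℕ) (v : ℤ → ℂ) (k : ℤ), 0 ≤ jap k ^ n * ‖v k‖ := fun n v k =>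
    mul_nonneg (pow_nonneg (jap_pos k).le _) (norm_nonneg _)
  obtain ⟨hs, hb⟩ := multilinear_bound (q := q) (A := fun k => jap k ^ n₁ * ‖w₁ k‖)
    (B := fun k => jap k ^ n₂ * ‖w₂ k‖) (F := fun _ k => jap k ^ n₃ * ‖u k‖)
    (hn _ _) (hn _ _) (fun _ => hn _ _) (h₁.summable_sq n₁) (h₂.summable_sq n₂) (fun _ => hu n₃)
  have hC : 0 ≤ C := by
    have := (norm_nonneg _).trans (hM 0)
    refine nonneg_of_mul_nonneg_left this ?_
    have := fun k => jap_pos k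
    have hp : 0 < ∏ i, jap ((0 : ℤ × (Fin q → ℤ)).2 i) ^ n₃ :=
      Finset.prod_pos fun i _ => pow_pos (jap_pos _) _
    exact mul_pos (mul_pos (pow_pos (jap_pos _) _) (pow_pos (jap_pos _) _)) hp
  have hle : ∀ z, ‖M z * coeffProd u w₁ w₂ z‖ ≤ C * (jap z.1 ^ n₁ * ‖w₁ z.1‖ *
      (jap (lastFreq z) ^ n₂ * ‖w₂ (lastFreq z)‖) * ∏ i, jap (z.2 i) ^ n₃ * ‖u (z.2 i)‖) := by
    intro z
    rw [norm_mul, coeffProd, norm_mul, norm_mul, norm_prod, Finset.prod_mul_distrib]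
    calc _ ≤ C * (jap z.1 ^ n₁ * jap (lastFreq z) ^ n₂ * ∏ i, jap (z.2 i) ^ n₃) *
          (‖w₁ z.1‖ * ‖w₂ (lastFreq z)‖ * ∏ i, ‖u (z.2 i)‖) := by
          gcongr
          exact hM z
      _ = _ := by ring
  refine ⟨Summable.of_norm_bounded (hs.mul_left C) hle, ?_⟩
  refine (tsum_of_norm_bounded (hs.mul_left C).hasSum hle).trans ?_
  rw [tsum_mul_left]
  refine mul_le_mul_of_nonneg_left (hb.trans_eq ?_) hC
  simp [wTwo, wOne]

theorem abs_add_three_mul_le {A B D a b d : ℝ} (hA : |A| ≤ a) (hB : |B| ≤ b) (hD : |D| ≤ d) :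
    |A + B + D| ≤ a + b + d :=
  (abs_add_three A B D).trans (by linarith)

/-- Expansion of the odd power sums `x ^ (2r+1) + y ^ (2r+1)` near `x + y = 0`. -/
theorem odd_power_sum (r : ℕ) : ∃ C : ℝ, 0 ≤ C ∧ ∀ x y : ℝ, (x + y) ^ 2 ≤ |x * y| →
    |x ^ (2 * r + 1) + y ^ (2 * r + 1) - (2 * r + 1) * (x + y) * (-(x * y)) ^ r| * |x * y| ≤
      C * |x + y| ^ 3 * |x * y| ^ r := by
  induction r using Nat.twoStepInduction with
  | zero => exact ⟨0, le_rfl, fun x y _ => by simp⟩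
  | one =>
    refine ⟨1, zero_le_one, fun x y _ => ?_⟩
    have : x ^ (2 * 1 + 1) + y ^ (2 * 1 + 1) - (2 * ((1 : ℕ) : ℝ) + 1) * (x + y) * (-(x * y)) ^ 1 =
      (x + y) ^ 3 := by push_cast; ring
    rw [this, abs_pow]; simp
  | more r ih0 ih1 =>
    obtain ⟨C0, h0, H0⟩ := ih0
    obtain ⟨C1, h1, H1⟩ := ih1
    refine ⟨3 * C1 + C0 + (2 * r + 3), by positivity, fun x y hxy => ?_⟩
    specialize H0 x y hxy
    specialize H1 x y hxy
    set P := -(x * y) with hP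
    set e := x + y with he
    have hPa : |x * y| = |P| := by rw [hP, abs_neg]
    rw [hPa] at hxy H0 H1 ⊢
    set A0 := x ^ (2 * r + 1) + y ^ (2 * r + 1) - (2 * r + 1) * e * P ^ r with hA0
    set A1 := x ^ (2 * (r + 1) + 1) + y ^ (2 * (r + 1) + 1) -
      (2 * ((r + 1 : ℕ) : ℝ) + 1) * e * P ^ (r + 1) with hA1
    have hid : x ^ (2 * (r + 2) + 1) + y ^ (2 * (r + 2) + 1) -
        (2 * ((r + 2 : ℕ) : ℝ) + 1) * e * P ^ (r + 2) =
        (e ^ 2 + 2 * P) * A1 + -(P ^ 2 * A0) + (2 * r + 3) * e ^ 3 * P ^ (r + 1) := by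
      rw [hA0, hA1, hP, he]; push_cast; ring
    have hfac : |e ^ 2 + 2 * P| ≤ 3 * |P| := by
      rw [abs_le]
      constructor <;> cases abs_cases P <;> nlinarith [sq_nonneg e]
    have b1 : |(e ^ 2 + 2 * P) * A1| ≤ 3 * |P| * |A1| := by rw [abs_mul]; gcongr
    have b2 : |-(P ^ 2 * A0)| ≤ |P| ^ 2 * |A0| := by rw [abs_neg, abs_mul, abs_pow]
    have b3 : |(2 * r + 3) * e ^ 3 * P ^ (r + 1)| ≤ (2 * r + 3) * |e| ^ 3 * |P| ^ (r + 1) := by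
      rw [abs_mul, abs_mul, abs_pow, abs_pow, abs_of_nonneg (by positivity : (0:ℝ) ≤ 2 * r + 3)]
    rw [hid]
    calc _ ≤ (3 * |P| * |A1| + |P| ^ 2 * |A0| + (2 * r + 3) * |e| ^ 3 * |P| ^ (r + 1)) * |P| := by
          gcongr; exact abs_add_three_mul_le b1 b2 b3
      _ = 3 * |P| * (|A1| * |P|) + |P| ^ 2 * (|A0| * |P|) +
          (2 * r + 3) * |e| ^ 3 * |P| ^ (r + 2) := by ring
      _ ≤ 3 * |P| * (C1 * |e| ^ 3 * |P| ^ (r + 1)) + |P| ^ 2 * (C0 * |e| ^ 3 * |P| ^ r) +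
          (2 * r + 3) * |e| ^ 3 * |P| ^ (r + 2) := by gcongr
      _ = _ := by ring

/-- Expansion of the even power sums `x ^ (2r) + y ^ (2r)` near `x + y = 0`. -/
theorem even_power_sum (r : ℕ) : ∃ C : ℝ, 0 ≤ C ∧ ∀ x y : ℝ, (x + y) ^ 2 ≤ |x * y| →
    |x ^ (2 * r) + y ^ (2 * r) - 2 * (-(x * y)) ^ r| * |x * y| ≤
      C * |x + y| ^ 2 * |x * y| ^ r := by
  induction r using Nat.twoStepInduction with
  | zero => exact ⟨0, le_rfl, fun x y _ => by norm_num⟩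
  | one =>
    refine ⟨1, zero_le_one, fun x y _ => ?_⟩
    have : x ^ (2 * 1) + y ^ (2 * 1) - 2 * (-(x * y)) ^ 1 = (x + y) ^ 2 := by ring
    rw [this, abs_pow]; simp
  | more r ih0 ih1 =>
    obtain ⟨C0, h0, H0⟩ := ih0
    obtain ⟨C1, h1, H1⟩ := ih1
    refine ⟨3 * C1 + C0 + 2, by positivity, fun x y hxy => ?_⟩
    specialize H0 x y hxy
    specialize H1 x y hxy
    set P := -(x * y) with hP
    set e := x + y with he
    have hPa : |x * y| = |P| := by rw [hP, abs_neg]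
    rw [hPa] at hxy H0 H1 ⊢
    set A0 := x ^ (2 * r) + y ^ (2 * r) - 2 * P ^ r with hA0
    set A1 := x ^ (2 * (r + 1)) + y ^ (2 * (r + 1)) - 2 * P ^ (r + 1) with hA1
    have hid : x ^ (2 * (r + 2)) + y ^ (2 * (r + 2)) - 2 * P ^ (r + 2) =
        (e ^ 2 + 2 * P) * A1 + -(P ^ 2 * A0) + 2 * e ^ 2 * P ^ (r + 1) := by
      rw [hA0, hA1, hP, he]; ring
    have hfac : |e ^ 2 + 2 * P| ≤ 3 * |P| := by
      rw [abs_le]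
      constructor <;> cases abs_cases P <;> nlinarith [sq_nonneg e]
    have b1 : |(e ^ 2 + 2 * P) * A1| ≤ 3 * |P| * |A1| := by rw [abs_mul]; gcongr
    have b2 : |-(P ^ 2 * A0)| ≤ |P| ^ 2 * |A0| := by rw [abs_neg, abs_mul, abs_pow]
    have b3 : |2 * e ^ 2 * P ^ (r + 1)| ≤ 2 * |e| ^ 2 * |P| ^ (r + 1) := by
      rw [abs_mul, abs_mul, abs_pow, abs_pow, abs_of_nonneg (by positivity : (0:ℝ) ≤ 2)]
    rw [hid]
    calc _ ≤ (3 * |P| * |A1| + |P| ^ 2 * |A0| + 2 * |e| ^ 2 * |P| ^ (r + 1)) * |P| := by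
          gcongr; exact abs_add_three_mul_le b1 b2 b3
      _ = 3 * |P| * (|A1| * |P|) + |P| ^ 2 * (|A0| * |P|) +
          2 * |e| ^ 2 * |P| ^ (r + 2) := by ring
      _ ≤ 3 * |P| * (C1 * |e| ^ 2 * |P| ^ (r + 1)) + |P| ^ 2 * (C0 * |e| ^ 2 * |P| ^ r) +
          2 * |e| ^ 2 * |P| ^ (r + 2) := by gcongr
      _ = _ := by ring

/-- The leading part of the symmetrized symbol `(ix)^m y^{2s}`, as a factor of
`-(ix)^{s+1} (iy)^{s+1}`. -/
noncomputable def leadFactor (s m : ℕ) (σ : ℂ) : ℂ :=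
  if m = 3 then ((s : ℂ) - 3 / 2) * (Complex.I * σ) else if m = 2 then 1 else 0

theorem I_mul_pow_mul (x y : ℂ) (n : ℕ) :
    (Complex.I * x) ^ n * (Complex.I * y) ^ n = (-(x * y)) ^ n := by
  rw [← mul_pow]; congr 1; linear_combination x * y * Complex.I_sq

theorem symmetrized_symbol (s m : ℕ) (hs : 7 ≤ s) (hm : m ≤ 3) :
    ∃ C : ℝ, 0 ≤ C ∧ ∀ x y : ℝ, (x + y) ^ 2 ≤ |x * y| →
      ‖(1 / 2 : ℂ) * ((Complex.I * x) ^ m * (y : ℂ) ^ (2 * s) +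
          (Complex.I * y) ^ m * (x : ℂ) ^ (2 * s)) +
        (Complex.I * x) ^ (s + 1) * (Complex.I * y) ^ (s + 1) *
          leadFactor s m (-((x : ℂ) + y))‖ ≤ C * (1 + |x + y|) ^ 3 * |x * y| ^ s := by
  simp only [I_mul_pow_mul]
  have hI3 : Complex.I ^ 3 = -Complex.I := by rw [pow_succ, Complex.I_sq]; ring
  have key : ∀ (R : ℝ) (c z : ℂ), ‖c‖ ≤ 1 → z = (R : ℂ) * c → ‖z‖ ≤ |R| := by
    rintro R c z hc rfl
    rw [norm_mul, Complex.norm_real, Real.norm_eq_abs]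
    exact mul_le_of_le_one_right (abs_nonneg _) hc
  have hpow : ∀ (t : ℝ) (n : ℕ), 0 ≤ t → n ≤ 3 → t ^ n ≤ (1 + t) ^ 3 := fun t n ht hn =>
    (pow_le_pow_left₀ ht (by linarith) n).trans (pow_le_pow_right₀ (by linarith) hn)
  interval_cases m
  · obtain ⟨C, hC, H⟩ := even_power_sum s
    refine ⟨C + 2, by positivity, fun x y hxy => ?_⟩
    have h1 := key ((x ^ (2 * s) + y ^ (2 * s)) / 1) (1 / 2) ((1 / 2 : ℂ) * ((Complex.I * x) ^ 0 * (y : ℂ) ^ (2 * s) +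
          (Complex.I * y) ^ 0 * (x : ℂ) ^ (2 * s)) +
        (-((x : ℂ) * y)) ^ (s + 1) * leadFactor s 0 (-((x : ℂ) + y))) (by norm_num)
        (by simp only [leadFactor]; push_cast; norm_num; ring)
    refine h1.trans ?_
    rw [div_one]
    by_cases h0 : |x * y| = 0
    · rw [h0] at hxy
      have he : x + y = 0 := by nlinarith
      have hx : x * y = 0 := abs_eq_zero.mp h0
      have : y = -x := by linarith
      subst this
      have : x = 0 := by nlinarith
      subst this
      simp [show s ≠ 0 by omega]
    · have hp : 0 < |x * y| := lt_of_le_of_ne (abs_nonneg _) (Ne.symm h0)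
      have h2 := H x y hxy
      have h3 : |x ^ (2 * s) + y ^ (2 * s) - 2 * (-(x * y)) ^ s| ≤ C * |x * y| ^ s := by
        refine le_of_mul_le_mul_right (h2.trans ?_) hp
        rw [sq_abs]
        calc C * (x + y) ^ 2 * |x * y| ^ s ≤ C * |x * y| * |x * y| ^ s := by gcongr
          _ = _ := by ring
      have h4 : |2 * (-(x * y)) ^ s| = 2 * |x * y| ^ s := by
        rw [abs_mul, abs_pow, abs_neg]; norm_num
      have h5 : |x ^ (2 * s) + y ^ (2 * s)| ≤ (C + 2) * |x * y| ^ s := by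
        calc _ = |(x ^ (2 * s) + y ^ (2 * s) - 2 * (-(x * y)) ^ s) + 2 * (-(x * y)) ^ s| := by
              congr 1; ring
          _ ≤ C * |x * y| ^ s + 2 * |x * y| ^ s := (abs_add_le _ _).trans (by rw [h4]; gcongr)
          _ = _ := by ring
      refine h5.trans ?_
      gcongr
      exact le_mul_of_one_le_right (by positivity)
        (one_le_pow₀ (by linarith [abs_nonneg (x + y)]))
  · obtain ⟨r, rfl⟩ : ∃ r, s = r + 1 := ⟨s - 1, by omega⟩
    obtain ⟨C, hC, H⟩ := odd_power_sum r
    refine ⟨C + (2 * r + 1), by positivity, fun x y hxy => ?_⟩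
    refine (key (x * y * (x ^ (2 * r + 1) + y ^ (2 * r + 1))) (Complex.I / 2) _ (by simp; norm_num)
      (by simp only [leadFactor]; push_cast; norm_num; ring)).trans ?_
    set B := x ^ (2 * r + 1) + y ^ (2 * r + 1)
    have h2 := H x y hxy
    have h4 : |x * y * ((2 * r + 1) * (x + y) * (-(x * y)) ^ r)| =
        (2 * r + 1) * |x + y| * |x * y| ^ (r + 1) := by
      rw [abs_mul (x * y), abs_mul (_ * (x + y)), abs_mul _ (x + y), abs_pow, abs_neg,
        abs_of_nonneg (by positivity : (0:ℝ) ≤ 2 * r + 1)]; ring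
    calc |x * y * B| = |x * y * (B - (2 * r + 1) * (x + y) * (-(x * y)) ^ r) +
            x * y * ((2 * r + 1) * (x + y) * (-(x * y)) ^ r)| := by congr 1; ring
      _ ≤ C * |x + y| ^ 3 * |x * y| ^ r + (2 * r + 1) * |x + y| * |x * y| ^ (r + 1) := by
          refine (abs_add_le _ _).trans ?_
          rw [h4, abs_mul, mul_comm |x * y|]
          gcongr
      _ = C * |x + y| * (x + y) ^ 2 * |x * y| ^ r +
            (2 * r + 1) * |x + y| * |x * y| ^ (r + 1) := by rw [← sq_abs (x + y)]; ring
      _ ≤ C * |x + y| * |x * y| * |x * y| ^ r + (2 * r + 1) * |x + y| * |x * y| ^ (r + 1) := by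
          gcongr
      _ = (C + (2 * r + 1)) * |x + y| ^ 1 * |x * y| ^ (r + 1) := by ring
      _ ≤ _ := by gcongr; exact hpow _ _ (abs_nonneg _) (by norm_num)
  · obtain ⟨r, rfl⟩ : ∃ r, s = r + 1 := ⟨s - 1, by omega⟩
    obtain ⟨C, hC, H⟩ := even_power_sum r
    refine ⟨C, hC, fun x y hxy => ?_⟩
    refine (key ((x * y) ^ 2 * (x ^ (2 * r) + y ^ (2 * r) - 2 * (-(x * y)) ^ r)) (-1 / 2) _
      (by simp; norm_num)
      (by simp only [leadFactor, mul_pow, Complex.I_sq]; push_cast; norm_num; ring)).trans ?_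
    have h2 := H x y hxy
    rw [abs_mul, abs_pow]
    calc _ = |x * y| * (|x ^ (2 * r) + y ^ (2 * r) - 2 * (-(x * y)) ^ r| * |x * y|) := by ring
      _ ≤ |x * y| * (C * |x + y| ^ 2 * |x * y| ^ r) := by gcongr
      _ = C * |x + y| ^ 2 * |x * y| ^ (r + 1) := by ring
      _ ≤ _ := by gcongr; exact hpow _ _ (abs_nonneg _) (by norm_num)
  · obtain ⟨r, rfl⟩ : ∃ r, s = r + 2 := ⟨s - 2, by omega⟩
    obtain ⟨C, hC, H⟩ := odd_power_sum r
    refine ⟨C, hC, fun x y hxy => ?_⟩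
    refine (key ((-(x * y)) ^ 3 *
      (x ^ (2 * r + 1) + y ^ (2 * r + 1) - (2 * r + 1) * (x + y) * (-(x * y)) ^ r)) (Complex.I / 2) _
      (by simp; norm_num)
      (by simp only [leadFactor, mul_pow, hI3]; push_cast; norm_num; ring)).trans ?_
    have h2 := H x y hxy
    rw [abs_mul, abs_pow, abs_neg]
    calc _ = |x * y| ^ 2 *
          (|x ^ (2 * r + 1) + y ^ (2 * r + 1) - (2 * r + 1) * (x + y) * (-(x * y)) ^ r| *
            |x * y|) := by ring
      _ ≤ |x * y| ^ 2 * (C * |x + y| ^ 3 * |x * y| ^ r) := by gcongr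
      _ = C * |x + y| ^ 3 * |x * y| ^ (r + 2) := by ring
      _ ≤ _ := by gcongr; linarith

/-- The sum of the absolute values of the frequencies of the low-frequency factors. -/
noncomputable def lowSize {q : ℕ} (k : Fin q → ℤ) : ℝ := ∑ i, |(k i : ℝ)|

theorem lowSize_nonneg {q : ℕ} (k : Fin q → ℤ) : 0 ≤ lowSize k :=
  Finset.sum_nonneg fun _ _ => abs_nonneg _

theorem abs_le_lowSize {q : ℕ} (k : Fin q → ℤ) (i : Fin q) : |(k i : ℝ)| ≤ lowSize k :=
  Finset.single_le_sum (f := fun i => |(k i : ℝ)|) (fun _ _ => abs_nonneg _) (Finset.mem_univ i)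

theorem abs_sum_le_lowSize {q : ℕ} (k : Fin q → ℤ) : |((∑ i, k i : ℤ) : ℝ)| ≤ lowSize k := by
  push_cast; exact Finset.abs_sum_le_sum_abs _ _

theorem one_add_lowSize_le {q : ℕ} (k : Fin q → ℤ) : 1 + lowSize k ≤ ∏ i, jap (k i) := by
  unfold lowSize
  induction q with
  | zero => simp
  | succ q ih =>
    rw [Fin.sum_univ_succ, Fin.prod_univ_succ]
    have h := ih fun i => k i.succ
    have h0 : (0 : ℝ) ≤ ∑ i : Fin q, |(k i.succ : ℝ)| :=
      Finset.sum_nonneg fun _ _ => abs_nonneg _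
    have h1 := abs_nonneg (k 0 : ℝ)
    calc _ ≤ jap (k 0) * (1 + ∑ i : Fin q, |(k i.succ : ℝ)|) := by unfold jap; nlinarith
      _ ≤ _ := mul_le_mul_of_nonneg_left h (jap_pos _).le

theorem cast_lastFreq {q : ℕ} (z : ℤ × (Fin q → ℤ)) :
    (lastFreq z : ℝ) = -((z.1 : ℝ) + ((∑ i, z.2 i : ℤ) : ℝ)) := by
  simp [lastFreq]

theorem abs_lastFreq_le {q : ℕ} (z : ℤ × (Fin q → ℤ)) :
    |(lastFreq z : ℝ)| ≤ |(z.1 : ℝ)| + lowSize z.2 := by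
  rw [cast_lastFreq, abs_neg]
  exact (abs_add_le _ _).trans (by gcongr; exact abs_sum_le_lowSize _)

theorem abs_fst_le {q : ℕ} (z : ℤ × (Fin q → ℤ)) :
    |(z.1 : ℝ)| ≤ |(lastFreq z : ℝ)| + lowSize z.2 := by
  have h := abs_lastFreq_le (swapFreq q z)
  rw [lastFreq_swapFreq] at h
  exact h

theorem fst_add_lastFreq {q : ℕ} (z : ℤ × (Fin q → ℤ)) :
    (z.1 : ℝ) + lastFreq z = -((∑ i, z.2 i : ℤ) : ℝ) := by
  rw [cast_lastFreq]; ring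

/-- The derivative symbol of the low-frequency factors. -/
noncomputable def lowSym {q : ℕ} (μ : Fin q → ℕ) (k : Fin q → ℤ) : ℂ :=
  ∏ i, (Complex.I * (k i : ℂ)) ^ μ i

theorem norm_I_mul_intCast (k : ℤ) : ‖Complex.I * (k : ℂ)‖ = |(k : ℝ)| := by
  rw [norm_mul, Complex.norm_I, one_mul, Complex.norm_intCast]

theorem norm_lowSym_le {q : ℕ} {μ : Fin q → ℕ} (hμ : ∀ i, μ i ≤ 3) (k : Fin q → ℤ) :
    ‖lowSym μ k‖ ≤ ∏ i, jap (k i) ^ 3 := by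
  rw [lowSym, norm_prod]
  refine Finset.prod_le_prod (fun _ _ => norm_nonneg _) fun i _ => ?_
  rw [norm_pow, norm_I_mul_intCast]
  exact (pow_le_pow_left₀ (abs_nonneg _) (abs_le_jap _) _).trans
    (pow_le_pow_right₀ (one_le_jap _) (hμ i))

/-- The symmetric region where both high frequencies dominate the low ones. -/
def HighRegion {q : ℕ} (z : ℤ × (Fin q → ℤ)) : Prop :=
  lowSize z.2 ≤ |(z.1 : ℝ)| ∧ lowSize z.2 ≤ |(lastFreq z : ℝ)|

theorem highRegion_swapFreq {q : ℕ} (z : ℤ × (Fin q → ℤ)) :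
    HighRegion (swapFreq q z) ↔ HighRegion z := by
  simp only [HighRegion, lastFreq_swapFreq]
  exact and_comm

/-- The combined cut-off: resonant frequencies together with the region of `MH`. -/
noncomputable def energyCutoff (C₀ : ℝ) {q : ℕ} (z : ℤ × (Fin q → ℤ)) : ℂ :=
  if ∑ i, z.2 i = 0 then 1 else
    if C₀ * fmax Finset.univ (fun i => |(z.2 i : ℝ)|) ≤
      min (|(z.1 : ℝ)| ^ ((4 : ℝ) / 5)) (|(lastFreq z : ℝ)| ^ ((4 : ℝ) / 5)) then 1 else 0

theorem fmax_le_lowSize {q : ℕ} (k : Fin q → ℤ) :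
    fmax Finset.univ (fun i => |(k i : ℝ)|) ≤ lowSize k := by
  have h : (Finset.univ.sup fun i => Real.toNNReal |(k i : ℝ)|) ≤ Real.toNNReal (lowSize k) :=
    Finset.sup_le fun i _ => Real.toNNReal_le_toNNReal (abs_le_lowSize k i)
  unfold fmax
  rw [← Real.coe_toNNReal _ (lowSize_nonneg k)]
  exact_mod_cast h

theorem sq_le_of_rpow_lt {t B : ℝ} (ht : 0 ≤ t) (hB : 1 ≤ B) (h : t ^ ((4 : ℝ) / 5) < B) :
    t ^ 2 ≤ B ^ 3 := by
  have h5 : (t ^ ((4 : ℝ) / 5)) ^ 5 = t ^ 4 := by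
    rw [← Real.rpow_natCast, ← Real.rpow_mul ht, ← Real.rpow_natCast t 4]; norm_num
  have h1 : t ^ 4 ≤ B ^ 5 := h5 ▸ pow_le_pow_left₀ (Real.rpow_nonneg ht _) h.le 5
  have h2 : (t ^ 2) ^ 2 ≤ (B ^ 3) ^ 2 := by
    calc (t ^ 2) ^ 2 = t ^ 4 := by ring
      _ ≤ B ^ 5 := h1
      _ ≤ B ^ 6 := pow_le_pow_right₀ hB (by norm_num)
      _ = (B ^ 3) ^ 2 := by ring
  exact le_of_sq_le_sq h2 (by positivity)

theorem cutoff_difference (C₀ : ℝ) (hC₀ : 0 < C₀) {q : ℕ} (z : ℤ × (Fin q → ℤ)) :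
    ‖(if HighRegion z then (1 : ℂ) else 0) - energyCutoff C₀ z‖ *
      (|(z.1 : ℝ)| * |(lastFreq z : ℝ)|) ≤ (4 + 2 * (1 + C₀) ^ 3) * (1 + lowSize z.2) ^ 3 := by
  set κ := lowSize z.2 with hκ
  have k0 : 0 ≤ κ := lowSize_nonneg _
  have hx := abs_fst_le z
  have hy := abs_lastFreq_le z
  have hx0 := abs_nonneg (z.1 : ℝ)
  have hy0 := abs_nonneg (lastFreq z : ℝ)
  set X := |(z.1 : ℝ)|
  set Y := |(lastFreq z : ℝ)|
  rw [← hκ] at hx hy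
  have hrhs : 0 ≤ (4 + 2 * (1 + C₀) ^ 3) * (1 + κ) ^ 3 := by positivity
  by_cases hR : HighRegion z
  · rw [if_pos hR]
    obtain ⟨r1, r2⟩ : κ ≤ X ∧ κ ≤ Y := hR
    unfold energyCutoff
    split_ifs with h1 h2
    · simpa using hrhs
    · simpa using hrhs
    · rw [sub_zero, norm_one, one_mul]
      have hK := fmax_le_lowSize z.2
      have hB : C₀ * fmax Finset.univ (fun i => |(z.2 i : ℝ)|) ≤ (1 + C₀) * (1 + κ) := by
        nlinarith
      have hB1 : 1 ≤ (1 + C₀) * (1 + κ) := by nlinarith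
      rw [not_le, min_lt_iff] at h2
      have hXY : X * Y ≤ 2 * ((1 + C₀) * (1 + κ)) ^ 3 := by
        rcases h2 with h2 | h2
        · have := sq_le_of_rpow_lt hx0 hB1 (h2.trans_le hB)
          nlinarith
        · have := sq_le_of_rpow_lt hy0 hB1 (h2.trans_le hB)
          nlinarith
      rw [mul_pow] at hXY
      have : 0 ≤ (1 + κ) ^ 3 := by positivity
      linarith
  · have hXY : X * Y ≤ 4 * (1 + κ) ^ 3 := by
      have hR' : ¬ (κ ≤ X ∧ κ ≤ Y) := hR
      have h1 : X ≤ 2 * κ ∧ Y ≤ 2 * κ := by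
        rw [not_and_or, not_le, not_le] at hR'
        rcases hR' with h | h <;> constructor <;> linarith
      have : X * Y ≤ (2 * κ) * (2 * κ) := mul_le_mul h1.1 h1.2 hy0 (by linarith)
      nlinarith [pow_nonneg k0 3]
    have hn : ‖(if HighRegion z then (1 : ℂ) else 0) - energyCutoff C₀ z‖ ≤ 1 := by
      rw [if_neg hR, zero_sub, norm_neg]
      unfold energyCutoff
      split_ifs <;> simp
    have : 0 ≤ (1 + C₀) ^ 3 * (1 + κ) ^ 3 := by positivity
    calc _ ≤ 1 * (X * Y) := by gcongr
      _ ≤ _ := by linarith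

theorem norm_leadFactor_le {s m : ℕ} (hs : 7 ≤ s) (σ : ℂ) :
    ‖leadFactor s m σ‖ ≤ s * (1 + ‖σ‖) := by
  have hs' : (7 : ℝ) ≤ s := by exact_mod_cast hs
  unfold leadFactor
  split_ifs
  · have : ((s : ℂ) - 3 / 2) = (((s : ℝ) - 3 / 2 : ℝ) : ℂ) := by push_cast; rfl
    rw [norm_mul, norm_mul, Complex.norm_I, one_mul, this, Complex.norm_real, Real.norm_eq_abs,
      abs_of_nonneg (by linarith)]
    nlinarith [norm_nonneg σ]
  · rw [norm_one]; nlinarith [norm_nonneg σ]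
  · rw [norm_zero]; positivity

/-- The energy symbol `(ix)^{s+1} (iy)^{s+1}` times the leading factor. -/
noncomputable def energySym (s m : ℕ) {q : ℕ} (z : ℤ × (Fin q → ℤ)) : ℂ :=
  (Complex.I * (z.1 : ℂ)) ^ (s + 1) * (Complex.I * (lastFreq z : ℂ)) ^ (s + 1) *
    leadFactor s m ((∑ i, z.2 i : ℤ) : ℂ)

/-- The symbol `(ix)^m y^{2s}` of the factor carrying the difference. -/
noncomputable def highSym (s m : ℕ) {q : ℕ} (z : ℤ × (Fin q → ℤ)) : ℂ :=
  (Complex.I * (z.1 : ℂ)) ^ m * (lastFreq z : ℂ) ^ (2 * s)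

theorem symmetrized_error (s m q : ℕ) (hs : 7 ≤ s) (hm : m ≤ 3) (C₀ : ℝ) (hC₀ : 0 < C₀) :
    ∃ C : ℝ, 0 ≤ C ∧ ∀ z : ℤ × (Fin q → ℤ),
      ‖(if HighRegion z then (1 : ℂ) else 0) *
          ((1 / 2 : ℂ) * (highSym s m z + highSym s m (swapFreq q z))) +
        energyCutoff C₀ z * energySym s m z‖ ≤
      C * ((1 + lowSize z.2) ^ 4 * (|(z.1 : ℝ)| ^ s * |(lastFreq z : ℝ)| ^ s)) := by
  obtain ⟨C, hC, H⟩ := symmetrized_symbol s m hs hm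
  refine ⟨C + (4 + 2 * (1 + C₀) ^ 3) * s, by positivity, fun z => ?_⟩
  have k0 : 0 ≤ lowSize z.2 := lowSize_nonneg _
  have hσ : ‖((∑ i, z.2 i : ℤ) : ℂ)‖ ≤ lowSize z.2 := by
    rw [Complex.norm_intCast]; exact abs_sum_le_lowSize _
  have h1 : ‖(if HighRegion z then (1 : ℂ) else 0) *
      ((1 / 2 : ℂ) * (highSym s m z + highSym s m (swapFreq q z)) + energySym s m z)‖ ≤
      C * ((1 + lowSize z.2) ^ 4 * (|(z.1 : ℝ)| ^ s * |(lastFreq z : ℝ)| ^ s)) := by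
    split_ifs with hR
    · have hxy := fst_add_lastFreq z
      have hsq : ((z.1 : ℝ) + lastFreq z) ^ 2 ≤ |(z.1 : ℝ) * lastFreq z| := by
        rw [hxy, abs_mul, neg_sq, ← sq_abs, sq]
        exact mul_le_mul ((abs_sum_le_lowSize _).trans hR.1) ((abs_sum_le_lowSize _).trans hR.2)
          (abs_nonneg _) (abs_nonneg _)
      have h := H _ _ hsq
      have hσ' : -(((z.1 : ℝ) : ℂ) + ((lastFreq z : ℝ) : ℂ)) = ((∑ i, z.2 i : ℤ) : ℂ) := by
        rw [← Complex.ofReal_add, hxy]; push_cast; ring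
      rw [hσ', hxy, abs_neg, abs_mul, mul_pow |(z.1 : ℝ)|] at h
      rw [one_mul]
      simp only [highSym, energySym, lastFreq_swapFreq]
      have e1 : (swapFreq q z).1 = lastFreq z := rfl
      rw [e1]
      simp only [Complex.ofReal_intCast] at h
      refine h.trans ?_
      rw [mul_assoc]
      gcongr ?_ * (?_ * _)
      calc _ ≤ (1 + lowSize z.2) ^ 3 := by gcongr; exact abs_sum_le_lowSize _
        _ ≤ _ := pow_le_pow_right₀ (by linarith) (by norm_num)
    · rw [zero_mul, norm_zero]; positivity
  have h2 : ‖((if HighRegion z then (1 : ℂ) else 0) - energyCutoff C₀ z) * energySym s m z‖ ≤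
      (4 + 2 * (1 + C₀) ^ 3) * s *
        ((1 + lowSize z.2) ^ 4 * (|(z.1 : ℝ)| ^ s * |(lastFreq z : ℝ)| ^ s)) := by
    have h3 := cutoff_difference C₀ hC₀ z
    have h4 : ‖leadFactor s m ((∑ i, z.2 i : ℤ) : ℂ)‖ ≤ s * (1 + lowSize z.2) :=
      (norm_leadFactor_le hs _).trans (by gcongr)
    rw [norm_mul, energySym, norm_mul, norm_mul, norm_pow, norm_pow, norm_I_mul_intCast,
      norm_I_mul_intCast]
    calc _ = ‖(if HighRegion z then (1 : ℂ) else 0) - energyCutoff C₀ z‖ *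
          (|(z.1 : ℝ)| * |(lastFreq z : ℝ)|) * (|(z.1 : ℝ)| ^ s * |(lastFreq z : ℝ)| ^ s) *
          ‖leadFactor s m ((∑ i, z.2 i : ℤ) : ℂ)‖ := by ring
      _ ≤ (4 + 2 * (1 + C₀) ^ 3) * (1 + lowSize z.2) ^ 3 *
          (|(z.1 : ℝ)| ^ s * |(lastFreq z : ℝ)| ^ s) * (s * (1 + lowSize z.2)) := by gcongr
      _ = _ := by ring
  calc _ = ‖(if HighRegion z then (1 : ℂ) else 0) *
      ((1 / 2 : ℂ) * (highSym s m z + highSym s m (swapFreq q z)) + energySym s m z) -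
      ((if HighRegion z then (1 : ℂ) else 0) - energyCutoff C₀ z) * energySym s m z‖ := by
        congr 1; ring
    _ ≤ _ := (norm_sub_le _ _).trans (by rw [add_mul]; exact add_le_add h1 h2)

theorem argmax_error (s m q : ℕ) (hm : m ≤ 3) (Q : ℤ × (Fin q → ℤ) → Prop)
    (hQ : ∀ z, Q z → ∀ i, |(z.2 i : ℝ)| ≤ |(z.1 : ℝ)|)
    (hQ' : ∀ z, ¬ Q z → |(z.1 : ℝ)| ≤ lowSize z.2) (z : ℤ × (Fin q → ℤ)) :
    ‖((if Q z then (1 : ℂ) else 0) - (if HighRegion z then 1 else 0)) * highSym s m z‖ ≤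
      (8 * (q + 2) ^ s : ℝ) *
        ((1 + lowSize z.2) ^ 4 * (|(z.1 : ℝ)| ^ s * |(lastFreq z : ℝ)| ^ s)) := by
  have k0 : 0 ≤ lowSize z.2 := lowSize_nonneg _
  have hx := abs_fst_le z
  have hy := abs_lastFreq_le z
  have hx0 := abs_nonneg (z.1 : ℝ)
  have hy0 := abs_nonneg (lastFreq z : ℝ)
  have hq0 : (0 : ℝ) ≤ q := Nat.cast_nonneg q
  have main : |(z.1 : ℝ)| ≤ 2 * lowSize z.2 → |(lastFreq z : ℝ)| ≤ (q + 2) * |(z.1 : ℝ)| →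
      ‖highSym s m z‖ ≤ (8 * (q + 2) ^ s : ℝ) *
        ((1 + lowSize z.2) ^ 4 * (|(z.1 : ℝ)| ^ s * |(lastFreq z : ℝ)| ^ s)) := by
    intro h1 h2
    rw [highSym, norm_mul, norm_pow, norm_pow, norm_I_mul_intCast, Complex.norm_intCast]
    have h3 : |(z.1 : ℝ)| ^ m ≤ 8 * (1 + lowSize z.2) ^ 4 :=
      calc |(z.1 : ℝ)| ^ m ≤ (2 * (1 + lowSize z.2)) ^ m := by gcongr; linarith
        _ ≤ (2 * (1 + lowSize z.2)) ^ 3 := pow_le_pow_right₀ (by linarith) hm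
        _ = 8 * (1 + lowSize z.2) ^ 3 := by ring
        _ ≤ _ := by gcongr ?_ * ?_; exact pow_le_pow_right₀ (by linarith) (by norm_num)
    calc _ = |(z.1 : ℝ)| ^ m * (|(lastFreq z : ℝ)| ^ s * |(lastFreq z : ℝ)| ^ s) := by ring
      _ ≤ 8 * (1 + lowSize z.2) ^ 4 *
          (((q + 2) * |(z.1 : ℝ)|) ^ s * |(lastFreq z : ℝ)| ^ s) := by gcongr
      _ = _ := by rw [mul_pow]; ring
  have hrhs : 0 ≤ (8 * (q + 2) ^ s : ℝ) *
        ((1 + lowSize z.2) ^ 4 * (|(z.1 : ℝ)| ^ s * |(lastFreq z : ℝ)| ^ s)) := by positivity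
  by_cases h : Q z <;> by_cases hR : HighRegion z
  · simpa [h, hR] using hrhs
  · have hκ : lowSize z.2 ≤ q * |(z.1 : ℝ)| := by
      calc lowSize z.2 ≤ ∑ _i : Fin q, |(z.1 : ℝ)| := Finset.sum_le_sum fun i _ => hQ z h i
        _ = _ := by simp
    simp only [h, hR, if_true, if_false, sub_zero, one_mul]
    refine main ?_ (by linarith)
    rw [HighRegion, not_and_or, not_le, not_le] at hR
    rcases hR with hR | hR <;> linarith
  · have h1 := hQ' z h
    simp only [h, hR, if_true, if_false, zero_sub, neg_mul, one_mul, norm_neg]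
    exact main (by linarith) (by nlinarith [hR.1])
  · simpa [h, hR] using hrhs

theorem weight_le {q : ℕ} (s : ℕ) (z : ℤ × (Fin q → ℤ)) :
    (1 + lowSize z.2) ^ 4 * (|(z.1 : ℝ)| ^ s * |(lastFreq z : ℝ)| ^ s) * ∏ i, jap (z.2 i) ^ 3 ≤
      jap z.1 ^ s * jap (lastFreq z) ^ s * ∏ i, jap (z.2 i) ^ 7 := by
  have h1 : (1 + lowSize z.2) ^ 4 ≤ ∏ i, jap (z.2 i) ^ 4 := by
    rw [Finset.prod_pow]
    exact pow_le_pow_left₀ (by linarith [lowSize_nonneg z.2]) (one_add_lowSize_le _) 4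
  have h2 : ∏ i, jap (z.2 i) ^ 7 = (∏ i, jap (z.2 i) ^ 4) * ∏ i, jap (z.2 i) ^ 3 := by
    rw [← Finset.prod_mul_distrib]
    exact Finset.prod_congr rfl fun i _ => by ring
  have h3 : 0 ≤ ∏ i, jap (z.2 i) ^ 3 := Finset.prod_nonneg fun i _ => (pow_pos (jap_pos _) _).le
  have h4 : 0 ≤ ∏ i, jap (z.2 i) ^ 4 := Finset.prod_nonneg fun i _ => (pow_pos (jap_pos _) _).le
  rw [h2]
  calc _ ≤ (∏ i, jap (z.2 i) ^ 4) * (jap z.1 ^ s * jap (lastFreq z) ^ s) *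
        ∏ i, jap (z.2 i) ^ 3 := by
        gcongr
        · exact pow_nonneg (jap_pos _).le _
        · exact abs_le_jap _
        · exact abs_le_jap _
    _ = _ := by ring

theorem norm_energyCutoff_le (C₀ : ℝ) {q : ℕ} (z : ℤ × (Fin q → ℤ)) : ‖energyCutoff C₀ z‖ ≤ 1 := by
  unfold energyCutoff
  split_ifs <;> simp

theorem norm_ite_one_le (P : Prop) [Decidable P] : ‖(if P then (1 : ℂ) else 0)‖ ≤ 1 := by
  split_ifs <;> simp

theorem prod_jap_pow_nonneg {q : ℕ} (n : ℕ) (k : Fin q → ℤ) : 0 ≤ ∏ i, jap (k i) ^ n :=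
  Finset.prod_nonneg fun _ _ => (pow_pos (jap_pos _) _).le

theorem coeffProd_swapFreq {q : ℕ} (u w : ℤ → ℂ) (z : ℤ × (Fin q → ℤ)) :
    coeffProd u w w (swapFreq q z) = coeffProd u w w z := by
  unfold coeffProd
  rw [lastFreq_swapFreq]
  simp only [swapFreq, Equiv.coe_fn_mk]
  ring

theorem norm_highSym_mul_lowSym_le {q s m : ℕ} (hm : m ≤ 3) {μ : Fin q → ℕ} (hμ : ∀ i, μ i ≤ 3)
    (z : ℤ × (Fin q → ℤ)) :
    ‖highSym s m z * lowSym μ z.2‖ ≤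
      1 * (jap z.1 ^ 3 * jap (lastFreq z) ^ (2 * s) * ∏ i, jap (z.2 i) ^ 3) := by
  rw [one_mul, norm_mul, highSym, norm_mul, norm_pow, norm_pow, norm_I_mul_intCast,
    Complex.norm_intCast]
  have h1 : |(z.1 : ℝ)| ^ m ≤ jap z.1 ^ 3 :=
    (pow_le_pow_left₀ (abs_nonneg _) (abs_le_jap _) _).trans
      (pow_le_pow_right₀ (one_le_jap _) hm)
  have h2 : |(lastFreq z : ℝ)| ^ (2 * s) ≤ jap (lastFreq z) ^ (2 * s) :=
    pow_le_pow_left₀ (abs_nonneg _) (abs_le_jap _) _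
  have := (pow_pos (jap_pos z.1) 3).le
  have := (pow_pos (jap_pos (lastFreq z)) (2 * s)).le
  gcongr
  exact norm_lowSym_le hμ _

theorem norm_energySym_mul_lowSym_le {q s m : ℕ} (hs : 7 ≤ s) {μ : Fin q → ℕ}
    (hμ : ∀ i, μ i ≤ 3) (z : ℤ × (Fin q → ℤ)) :
    ‖energySym s m z * lowSym μ z.2‖ ≤
      s * (jap z.1 ^ (s + 1) * jap (lastFreq z) ^ (s + 1) * ∏ i, jap (z.2 i) ^ 4) := by
  rw [norm_mul, energySym, norm_mul, norm_mul, norm_pow, norm_pow, norm_I_mul_intCast,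
    norm_I_mul_intCast]
  have h1 : |(z.1 : ℝ)| ^ (s + 1) ≤ jap z.1 ^ (s + 1) :=
    pow_le_pow_left₀ (abs_nonneg _) (abs_le_jap _) _
  have h2 : |(lastFreq z : ℝ)| ^ (s + 1) ≤ jap (lastFreq z) ^ (s + 1) :=
    pow_le_pow_left₀ (abs_nonneg _) (abs_le_jap _) _
  have h3 : ‖leadFactor s m ((∑ i, z.2 i : ℤ) : ℂ)‖ ≤ s * ∏ i, jap (z.2 i) := by
    refine (norm_leadFactor_le hs _).trans (mul_le_mul_of_nonneg_left ?_ (Nat.cast_nonneg s))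
    refine le_trans ?_ (one_add_lowSize_le z.2)
    rw [Complex.norm_intCast]
    gcongr
    exact abs_sum_le_lowSize _
  have h4 : ∏ i, jap (z.2 i) ^ 4 = (∏ i, jap (z.2 i)) * ∏ i, jap (z.2 i) ^ 3 := by
    rw [← Finset.prod_mul_distrib]
    exact Finset.prod_congr rfl fun i _ => by ring
  have h5 : 0 ≤ ∏ i, jap (z.2 i) := Finset.prod_nonneg fun _ _ => (jap_pos _).le
  have := (pow_pos (jap_pos z.1) (s + 1)).le
  have := (pow_pos (jap_pos (lastFreq z)) (s + 1)).le
  calc _ ≤ jap z.1 ^ (s + 1) * jap (lastFreq z) ^ (s + 1) * (s * ∏ i, jap (z.2 i)) *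
        ∏ i, jap (z.2 i) ^ 3 := by
        gcongr
        exact norm_lowSym_le hμ _
    _ = _ := by rw [h4]; ring

theorem summable_energySym {q s m : ℕ} (hs : 7 ≤ s) (C₀ : ℝ) {μ : Fin q → ℕ}
    (hμ : ∀ i, μ i ≤ 3) {u w : ℤ → ℂ} (hu : Rapid u) (hw : Rapid w) :
    Summable (fun z => energyCutoff C₀ z * energySym s m z * lowSym μ z.2 *
      coeffProd u w w z) :=
  (symbol_bound (q := q)
    (M := fun z => energyCutoff C₀ z * energySym s m z * lowSym μ z.2) hu hw hw fun z => by
      rw [mul_assoc, norm_mul]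
      exact (mul_le_of_le_one_left (norm_nonneg _) (norm_energyCutoff_le _ _)).trans
        (norm_energySym_mul_lowSym_le hs hμ z)).1

theorem symbol_bound_of_weight {q s : ℕ} {u w : ℤ → ℂ} (hu : Rapid u) (hw : Rapid w)
    {μ : Fin q → ℕ} (hμ : ∀ i, μ i ≤ 3) {M : ℤ × (Fin q → ℤ) → ℂ} {C : ℝ} (hC : 0 ≤ C)
    (hM : ∀ z, ‖M z‖ ≤
      C * ((1 + lowSize z.2) ^ 4 * (|(z.1 : ℝ)| ^ s * |(lastFreq z : ℝ)| ^ s))) :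
    Summable (fun z => M z * lowSym μ z.2 * coeffProd u w w z) ∧
      ‖∑' z, M z * lowSym μ z.2 * coeffProd u w w z‖ ≤ C * (wTwo s w * wOne 7 u ^ q) := by
  have h := symbol_bound (q := q) (M := fun z => M z * lowSym μ z.2) (C := C) (n₁ := s) (n₂ := s)
    (n₃ := 7) hu hw hw fun z => by
      rw [norm_mul]
      calc _ ≤ C * ((1 + lowSize z.2) ^ 4 * (|(z.1 : ℝ)| ^ s * |(lastFreq z : ℝ)| ^ s)) *
            ∏ i, jap (z.2 i) ^ 3 :=
            mul_le_mul (hM z) (norm_lowSym_le hμ _) (norm_nonneg _)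
              ((norm_nonneg _).trans (hM z))
        _ ≤ _ := by
            rw [mul_assoc]
            exact mul_le_mul_of_nonneg_left (weight_le s z) hC
  rwa [Real.mul_self_sqrt (wTwo_nonneg _ _)] at h

/-- The contribution of the terms in which the difference carries the largest frequency is
cancelled, up to an admissible error, by the modified energy. -/
theorem high_part_bound (s m q : ℕ) (hs : 7 ≤ s) (hm : m ≤ 3) (C₀ : ℝ) (hC₀ : 0 < C₀)
    (μ : Fin q → ℕ) (hμ : ∀ i, μ i ≤ 3) (Q : ℤ × (Fin q → ℤ) → Prop)
    (hQ : ∀ z, Q z → ∀ i, |(z.2 i : ℝ)| ≤ |(z.1 : ℝ)|)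
    (hQ' : ∀ z, ¬ Q z → |(z.1 : ℝ)| ≤ lowSize z.2) :
    ∃ C : ℝ, 0 ≤ C ∧ ∀ u w : ℤ → ℂ, Rapid u → Rapid w →
      ‖∑' z, (if Q z then (1 : ℂ) else 0) * highSym s m z * lowSym μ z.2 * coeffProd u w w z +
        ∑' z, energyCutoff C₀ z * energySym s m z * lowSym μ z.2 * coeffProd u w w z‖ ≤
        C * (wTwo s w * wOne 7 u ^ q) := by
  obtain ⟨C, hC, H⟩ := symmetrized_error s m q hs hm C₀ hC₀
  refine ⟨8 * (q + 2) ^ s + C, by positivity, fun u w hu hw => ?_⟩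
  have hE := symbol_bound_of_weight hu hw hμ hC H
  have hA := symbol_bound_of_weight hu hw hμ (by positivity) (argmax_error s m q hm Q hQ hQ')
  have hS3 := summable_energySym (m := m) hs C₀ hμ hu hw
  have hS2 := (symbol_bound (q := q)
    (M := fun z => (if HighRegion z then (1 : ℂ) else 0) * highSym s m z * lowSym μ z.2)
    hu hw hw fun z => by
      rw [mul_assoc, norm_mul]
      exact (mul_le_of_le_one_left (norm_nonneg _) (norm_ite_one_le _)).trans
        (norm_highSym_mul_lowSym_le hm hμ z)).1
  have hS2' : Summable fun z => (if HighRegion (swapFreq q z) then (1 : ℂ) else 0) *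
      highSym s m (swapFreq q z) * lowSym μ (swapFreq q z).2 * coeffProd u w w (swapFreq q z) :=
    (swapFreq q).summable_iff.mpr hS2
  have eS2 := (swapFreq q).tsum_eq fun z =>
    (if HighRegion z then (1 : ℂ) else 0) * highSym s m z * lowSym μ z.2 * coeffProd u w w z
  have e1 : ∑' z, (if Q z then (1 : ℂ) else 0) * highSym s m z * lowSym μ z.2 *
      coeffProd u w w z =
      ∑' z, ((if Q z then (1 : ℂ) else 0) - (if HighRegion z then 1 else 0)) * highSym s m z *
        lowSym μ z.2 * coeffProd u w w z +
      ∑' z, (if HighRegion z then (1 : ℂ) else 0) * highSym s m z * lowSym μ z.2 *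
        coeffProd u w w z := by
    rw [← hA.1.tsum_add hS2]
    exact tsum_congr fun z => by ring
  have e2 : ∑' z, (if HighRegion z then (1 : ℂ) else 0) * highSym s m z * lowSym μ z.2 *
        coeffProd u w w z +
      ∑' z, energyCutoff C₀ z * energySym s m z * lowSym μ z.2 * coeffProd u w w z =
      ∑' z, ((if HighRegion z then (1 : ℂ) else 0) *
          ((1 / 2 : ℂ) * (highSym s m z + highSym s m (swapFreq q z))) +
        energyCutoff C₀ z * energySym s m z) * lowSym μ z.2 * coeffProd u w w z := by
    have e3 : ∑' z, (if HighRegion z then (1 : ℂ) else 0) * highSym s m z * lowSym μ z.2 *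
        coeffProd u w w z = ∑' z, (1 / 2 : ℂ) *
          ((if HighRegion z then (1 : ℂ) else 0) * highSym s m z * lowSym μ z.2 *
            coeffProd u w w z +
          (if HighRegion (swapFreq q z) then (1 : ℂ) else 0) * highSym s m (swapFreq q z) *
            lowSym μ (swapFreq q z).2 * coeffProd u w w (swapFreq q z)) := by
      rw [tsum_mul_left, hS2.tsum_add hS2', eS2]
      ring
    rw [e3, ← (((hS2.add hS2').mul_left (1 / 2 : ℂ))).tsum_add hS3]
    refine tsum_congr fun z => ?_
    simp only [highRegion_swapFreq, coeffProd_swapFreq]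
    have : (swapFreq q z).2 = z.2 := rfl
    rw [this]
    ring
  rw [e1, add_assoc, e2, add_mul]
  exact (norm_add_le _ _).trans (add_le_add hA.2 hE.2)

theorem norm_prod_sub_prod_le {q : ℕ} (a b : Fin q → ℂ) :
    ‖∏ i, a i - ∏ i, b i‖ ≤
      ∑ l, ∏ i, if i = l then ‖a i - b i‖ else ‖a i‖ + ‖b i‖ := by
  induction q with
  | zero => simp
  | succ q ih =>
    have h := ih (fun i => a i.succ) (fun i => b i.succ)
    have h0 : ‖∏ i : Fin q, a i.succ‖ ≤ ∏ i : Fin q, (‖a i.succ‖ + ‖b i.succ‖) := by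
      rw [norm_prod]
      exact Finset.prod_le_prod (fun _ _ => norm_nonneg _) fun i _ => by
        linarith [norm_nonneg (b i.succ)]
    have e : a 0 * ∏ i : Fin q, a i.succ - b 0 * ∏ i : Fin q, b i.succ =
        (a 0 - b 0) * ∏ i : Fin q, a i.succ +
          b 0 * (∏ i : Fin q, a i.succ - ∏ i : Fin q, b i.succ) := by ring
    rw [Fin.prod_univ_succ, Fin.prod_univ_succ, e, Fin.sum_univ_succ]
    refine (norm_add_le _ _).trans (add_le_add ?_ ?_)
    · rw [norm_mul, Fin.prod_univ_succ]
      simp only [if_true, Fin.succ_ne_zero, if_false]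
      exact mul_le_mul_of_nonneg_left h0 (norm_nonneg _)
    · rw [norm_mul]
      simp only [Fin.prod_univ_succ, Fin.succ_inj, (Fin.succ_ne_zero _).symm, if_false,
        ← Finset.mul_sum]
      exact mul_le_mul (by linarith [norm_nonneg (a 0)]) h (norm_nonneg _) (by positivity)

theorem Rapid.sub {u v : ℤ → ℂ} (hu : Rapid u) (hv : Rapid v) : Rapid fun k => u k - v k := by
  intro n
  refine Summable.of_nonneg_of_le
    (fun k => mul_nonneg (pow_nonneg (jap_pos k).le _) (norm_nonneg _)) (fun k => ?_)
    ((hu n).add (hv n))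
  rw [← mul_add]
  exact mul_le_mul_of_nonneg_left (norm_sub_le _ _) (pow_nonneg (jap_pos k).le _)

theorem norm_highSym_le_of_le {q s m : ℕ} (hm : m ≤ 3) {z : ℤ × (Fin q → ℤ)}
    (hz : ∀ i, |(z.2 i : ℝ)| ≤ |(z.1 : ℝ)|) :
    ‖highSym s m z‖ ≤ (q + 1) ^ s * (jap z.1 ^ (s + 3) * jap (lastFreq z) ^ s) := by
  have hκ : lowSize z.2 ≤ q * |(z.1 : ℝ)| := by
    calc lowSize z.2 ≤ ∑ _i : Fin q, |(z.1 : ℝ)| := Finset.sum_le_sum fun i _ => hz i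
      _ = _ := by simp
  have hy : |(lastFreq z : ℝ)| ≤ (q + 1) * jap z.1 := by
    have h1 := abs_lastFreq_le z
    have h2 : (q + 1) * |(z.1 : ℝ)| ≤ (q + 1) * jap z.1 := by gcongr; exact abs_le_jap _
    linarith
  rw [highSym, norm_mul, norm_pow, norm_pow, norm_I_mul_intCast, Complex.norm_intCast]
  have h1 : |(z.1 : ℝ)| ^ m ≤ jap z.1 ^ 3 :=
    (pow_le_pow_left₀ (abs_nonneg _) (abs_le_jap _) _).trans
      (pow_le_pow_right₀ (one_le_jap _) hm)
  have hj := (jap_pos z.1).le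
  calc |(z.1 : ℝ)| ^ m * |(lastFreq z : ℝ)| ^ (2 * s) =
        |(z.1 : ℝ)| ^ m * (|(lastFreq z : ℝ)| ^ s * |(lastFreq z : ℝ)| ^ s) := by ring
    _ ≤ jap z.1 ^ 3 * (((q + 1) * jap z.1) ^ s * jap (lastFreq z) ^ s) := by
        gcongr
        exact abs_le_jap _
    _ = _ := by rw [mul_pow]; ring

/-- The contribution of the terms in which one of the original functions carries the largest
frequency. -/
theorem low_part_bound (s m q : ℕ) (hm : m ≤ 3) (μ : Fin q → ℕ) (hμ : ∀ i, μ i ≤ 3)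
    (Q : ℤ × (Fin q → ℤ) → Prop) (hQ : ∀ z, Q z → ∀ i, |(z.2 i : ℝ)| ≤ |(z.1 : ℝ)|)
    {u v : ℤ → ℂ} (hu : Rapid u) (hv : Rapid v) :
    Summable (fun z => (if Q z then (1 : ℂ) else 0) * highSym s m z * lowSym μ z.2 *
        ((∏ i, u (z.2 i) - ∏ i, v (z.2 i)) * (v z.1 * (u (lastFreq z) - v (lastFreq z))))) ∧
      ‖∑' z, (if Q z then (1 : ℂ) else 0) * highSym s m z * lowSym μ z.2 *
        ((∏ i, u (z.2 i) - ∏ i, v (z.2 i)) * (v z.1 * (u (lastFreq z) - v (lastFreq z))))‖ ≤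
      (q + 1) ^ s * (√(wTwo (s + 3) v) * √(wTwo s fun k => u k - v k) *
        (q * (wOne 3 (fun k => u k - v k) * (wOne 3 u + wOne 3 v) ^ (q - 1)))) := by
  have hw := hu.sub hv
  have hn : ∀ (n : ℕ) (v : ℤ → ℂ) (k : ℤ), 0 ≤ jap k ^ n * ‖v k‖ := fun n v k =>
    mul_nonneg (pow_nonneg (jap_pos k).le _) (norm_nonneg _)
  let F : Fin q → Fin q → ℤ → ℝ := fun l i k =>
    if i = l then jap k ^ 3 * ‖u k - v k‖ else jap k ^ 3 * ‖u k‖ + jap k ^ 3 * ‖v k‖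
  have hF0 : ∀ l i k, 0 ≤ F l i k := fun l i k => by
    dsimp only [F]
    split_ifs
    · exact hn _ (fun k => u k - v k) _
    · exact add_nonneg (hn _ _ _) (hn _ _ _)
  have hFs : ∀ l i, Summable (F l i) := fun l i => by
    dsimp only [F]
    by_cases h : i = l
    · simp only [h, if_true]; exact hw 3
    · simp only [h, if_false]; exact (hu 3).add (hv 3)
  have hFt : ∀ l i, ∑' k, F l i k =
      if i = l then wOne 3 (fun k => u k - v k) else wOne 3 u + wOne 3 v := fun l i => by
    dsimp only [F]
    by_cases h : i = l
    · simp only [h, if_true]; rfl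
    · simp only [h, if_false]; exact (hu 3).tsum_add (hv 3)
  have hb := fun l => multilinear_bound (q := q) (A := fun k => jap k ^ (s + 3) * ‖v k‖)
    (B := fun k => jap k ^ s * ‖u k - v k‖) (F := F l)
    (hn _ _) (hn _ fun k => u k - v k) (hF0 l) (hv.summable_sq _) (hw.summable_sq _) (hFs l)
  have hprod : ∀ l : Fin q, ∏ i, ∑' k, F l i k =
      wOne 3 (fun k => u k - v k) * (wOne 3 u + wOne 3 v) ^ (q - 1) := fun l => by
    simp only [hFt]
    rw [← Finset.mul_prod_erase _ _ (Finset.mem_univ l), if_pos rfl]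
    congr 1
    rw [Finset.prod_congr rfl fun i hi => if_neg (Finset.ne_of_mem_erase hi)]
    simp
  have hle : ∀ z, ‖(if Q z then (1 : ℂ) else 0) * highSym s m z * lowSym μ z.2 *
        ((∏ i, u (z.2 i) - ∏ i, v (z.2 i)) * (v z.1 * (u (lastFreq z) - v (lastFreq z))))‖ ≤
      (q + 1) ^ s * ∑ l, jap z.1 ^ (s + 3) * ‖v z.1‖ *
        (jap (lastFreq z) ^ s * ‖u (lastFreq z) - v (lastFreq z)‖) * ∏ i, F l i (z.2 i) := by
    intro z
    have hFj : ∀ l, ∏ i, F l i (z.2 i) = (∏ i, jap (z.2 i) ^ 3) *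
        ∏ i, if i = l then ‖u (z.2 i) - v (z.2 i)‖ else ‖u (z.2 i)‖ + ‖v (z.2 i)‖ := fun l => by
      rw [← Finset.prod_mul_distrib]
      refine Finset.prod_congr rfl fun i _ => ?_
      dsimp only [F]
      split_ifs
      · rfl
      · ring
    have hpn := prod_jap_pow_nonneg 3 z.2
    have h1 := hn (s + 3) v z.1
    have h2 := hn s (fun k => u k - v k) (lastFreq z)
    have hrhs : 0 ≤ (q + 1 : ℝ) ^ s * ∑ l, jap z.1 ^ (s + 3) * ‖v z.1‖ *
        (jap (lastFreq z) ^ s * ‖u (lastFreq z) - v (lastFreq z)‖) * ∏ i, F l i (z.2 i) :=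
      mul_nonneg (by positivity) (Finset.sum_nonneg fun l _ =>
        mul_nonneg (mul_nonneg h1 h2) (Finset.prod_nonneg fun i _ => hF0 _ _ _))
    by_cases h : Q z
    · rw [if_pos h, one_mul, norm_mul, norm_mul, norm_mul, norm_mul]
      simp only [hFj, ← Finset.mul_sum]
      have h3 := norm_highSym_le_of_le (s := s) hm (hQ z h)
      have h4 := norm_lowSym_le hμ z.2
      have h5 := norm_prod_sub_prod_le (fun i => u (z.2 i)) (fun i => v (z.2 i))
      calc _ ≤ (q + 1) ^ s * (jap z.1 ^ (s + 3) * jap (lastFreq z) ^ s) *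
            (∏ i, jap (z.2 i) ^ 3) *
            ((∑ l, ∏ i, if i = l then ‖u (z.2 i) - v (z.2 i)‖ else
              ‖u (z.2 i)‖ + ‖v (z.2 i)‖) * (‖v z.1‖ * ‖u (lastFreq z) - v (lastFreq z)‖)) := by
            refine mul_le_mul (mul_le_mul h3 h4 (norm_nonneg _) ((norm_nonneg _).trans h3))
              (mul_le_mul_of_nonneg_right h5 (by positivity)) (by positivity)
              (mul_nonneg ((norm_nonneg _).trans h3) hpn)
        _ = _ := by ring
    · simpa [h] using hrhs
  have hS := (hasSum_sum fun l (_ : l ∈ Finset.univ) => (hb l).1.hasSum).mul_left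
    ((q + 1 : ℝ) ^ s)
  refine ⟨Summable.of_norm_bounded hS.summable hle, (tsum_of_norm_bounded hS hle).trans ?_⟩
  refine mul_le_mul_of_nonneg_left ?_ (by positivity)
  calc _ ≤ ∑ _l : Fin q, √(wTwo (s + 3) v) * √(wTwo s fun k => u k - v k) *
        (wOne 3 (fun k => u k - v k) * (wOne 3 u + wOne 3 v) ^ (q - 1)) :=
        Finset.sum_le_sum fun l _ => (hb l).2.trans_eq (by rw [hprod l]; rfl)
    _ = _ := by simp; ring

/-- The summand of the Fourier expansion of the energy term, before symmetrization. -/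
noncomputable def diffSummand (s : ℕ) {q : ℕ} (μ : Fin (q + 1) → ℕ) (u v : ℤ → ℂ)
    (k : Fin (q + 1) → ℤ) : ℂ :=
  lowSym μ k * ((∑ i, k i : ℤ) : ℂ) ^ (2 * s) * (∏ i, u (k i) - ∏ i, v (k i)) *
    (u (-∑ i, k i) - v (-∑ i, k i))

theorem diffSummand_insertNth (s : ℕ) {q : ℕ} (μ : Fin (q + 1) → ℕ) (u v : ℤ → ℂ)
    (j : Fin (q + 1)) (z : ℤ × (Fin q → ℤ)) :
    diffSummand s μ u v (j.insertNth z.1 z.2) =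
      highSym s (μ j) z * lowSym (fun i => μ (j.succAbove i)) z.2 *
          coeffProd u (fun k => u k - v k) (fun k => u k - v k) z +
        highSym s (μ j) z * lowSym (fun i => μ (j.succAbove i)) z.2 *
          ((∏ i, u (z.2 i) - ∏ i, v (z.2 i)) * (v z.1 * (u (lastFreq z) - v (lastFreq z)))) := by
  have h1 : ∑ i, (j.insertNth z.1 z.2 : Fin (q + 1) → ℤ) i = -lastFreq z := by
    rw [Fin.sum_univ_succAbove _ j]; simp [lastFreq]
  have h2 : (((-lastFreq z : ℤ)) : ℂ) ^ (2 * s) = (lastFreq z : ℂ) ^ (2 * s) := by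
    push_cast; rw [pow_mul, pow_mul, neg_sq]
  unfold diffSummand lowSym
  rw [h1, h2, Fin.prod_univ_succAbove _ j, Fin.prod_univ_succAbove _ j,
    Fin.prod_univ_succAbove _ j]
  simp only [Fin.insertNth_apply_same, Fin.insertNth_apply_succAbove, neg_neg, highSym, coeffProd]
  ring

theorem diffSummand_bound (s q : ℕ) (hs : 7 ≤ s) (C₀ : ℝ) (hC₀ : 0 < C₀)
    (μ : Fin (q + 1) → ℕ) (hμ : ∀ i, μ i ≤ 3) :
    ∃ C : ℝ, 0 ≤ C ∧ ∀ u v : ℤ → ℂ, Rapid u → Rapid v →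
      ‖∑' k, diffSummand s μ u v k +
        ∑ j : Fin (q + 1), ∑' z, energyCutoff C₀ z * energySym s (μ j) z *
          lowSym (fun i => μ (j.succAbove i)) z.2 *
            coeffProd u (fun k => u k - v k) (fun k => u k - v k) z‖ ≤
      C * (wTwo s (fun k => u k - v k) * wOne 7 u ^ q +
        √(wTwo (s + 3) v) * √(wTwo s fun k => u k - v k) *
          (wOne 3 (fun k => u k - v k) * (wOne 3 u + wOne 3 v) ^ (q - 1))) := by
  have hmax : ∀ k : Fin (q + 1) → ℤ, ∃ j, ∀ i, |(k i : ℝ)| ≤ |(k j : ℝ)| := fun k =>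
    Finite.exists_max fun i => |(k i : ℝ)|
  choose J hJ using hmax
  obtain ⟨Q, hQJ⟩ : ∃ Q : Fin (q + 1) → ℤ × (Fin q → ℤ) → Prop,
      ∀ j z, Q j z ↔ J (j.insertNth z.1 z.2) = j := ⟨_, fun _ _ => Iff.rfl⟩
  have hQ : ∀ j z, Q j z → ∀ i, |(z.2 i : ℝ)| ≤ |(z.1 : ℝ)| := fun j z h i => by
    have := hJ (j.insertNth z.1 z.2) (j.succAbove i)
    rwa [(hQJ j z).1 h, Fin.insertNth_apply_same, Fin.insertNth_apply_succAbove] at this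
  have hQ' : ∀ j z, ¬ Q j z → |(z.1 : ℝ)| ≤ lowSize z.2 := fun j z h => by
    obtain ⟨i, hi⟩ := Fin.exists_succAbove_eq (mt (hQJ j z).2 h)
    have := hJ (j.insertNth z.1 z.2) j
    rw [← hi, Fin.insertNth_apply_same, Fin.insertNth_apply_succAbove] at this
    exact this.trans (abs_le_lowSize _ _)
  have hH := fun j => high_part_bound s (μ j) q hs (hμ j) C₀ hC₀ (fun i => μ (j.succAbove i))
    (fun i => hμ _) (Q j) (hQ j) (hQ' j)
  choose C hC H using hH
  refine ⟨∑ j, C j + (q + 1) * ((q + 1) ^ s * q),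
    add_nonneg (Finset.sum_nonneg fun j _ => hC j) (by positivity), fun u v hu hv => ?_⟩
  have hw := hu.sub hv
  set w : ℤ → ℂ := fun k => u k - v k with hwdef
  have hA : ∀ j, Summable fun z => (if Q j z then (1 : ℂ) else 0) * highSym s (μ j) z *
      lowSym (fun i => μ (j.succAbove i)) z.2 * coeffProd u w w z := fun j =>
    (symbol_bound hu hw hw fun z => by
      rw [mul_assoc, norm_mul]
      exact (mul_le_of_le_one_left (norm_nonneg _) (norm_ite_one_le _)).trans
        (norm_highSym_mul_lowSym_le (hμ j) (fun i => hμ _) z)).1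
  have hB := fun j => low_part_bound s (μ j) q (hμ j) (fun i => μ (j.succAbove i))
    (fun i => hμ _) (Q j) (hQ j) hu hv
  have hT : ∀ j, HasSum (fun k => (if J k = j then (1 : ℂ) else 0) * diffSummand s μ u v k)
      (∑' z, (if Q j z then (1 : ℂ) else 0) * highSym s (μ j) z *
        lowSym (fun i => μ (j.succAbove i)) z.2 * coeffProd u w w z +
      ∑' z, (if Q j z then (1 : ℂ) else 0) * highSym s (μ j) z *
        lowSym (fun i => μ (j.succAbove i)) z.2 *
        ((∏ i, u (z.2 i) - ∏ i, v (z.2 i)) * (v z.1 * (u (lastFreq z) - v (lastFreq z))))) := by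
    intro j
    rw [← (Fin.insertNthEquiv (fun _ => ℤ) j).hasSum_iff]
    convert! (hA j).hasSum.add (hB j).1.hasSum using 2 with z
    have e : Fin.insertNthEquiv (fun _ => ℤ) j z = j.insertNth z.1 z.2 := rfl
    simp only [Function.comp_apply, e, diffSummand_insertNth, hQJ, hwdef]
    ring
  have hTs : ∑' k, diffSummand s μ u v k = _ :=
    HasSum.tsum_eq (by
      convert! hasSum_sum fun j (_ : j ∈ Finset.univ) => hT j using 2 with k
      rw [← Finset.sum_mul]
      simp)
  rw [hTs, ← Finset.sum_add_distrib]
  set X := wTwo s w * wOne 7 u ^ q with hX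
  set Y := √(wTwo (s + 3) v) * √(wTwo s w) * (wOne 3 w * (wOne 3 u + wOne 3 v) ^ (q - 1)) with hY
  have hX0 : 0 ≤ X := mul_nonneg (wTwo_nonneg _ _) (pow_nonneg (wOne_nonneg _ _) _)
  have hY0 : 0 ≤ Y := mul_nonneg (by positivity) (mul_nonneg (wOne_nonneg _ _)
    (pow_nonneg (add_nonneg (wOne_nonneg _ _) (wOne_nonneg _ _)) _))
  calc _ ≤ ∑ j, (C j * X + (q + 1) ^ s * q * Y) := by
        refine (norm_sum_le _ _).trans (Finset.sum_le_sum fun j _ => ?_)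
        rw [add_right_comm]
        refine (norm_add_le _ _).trans (add_le_add (H j u w hu hw) ((hB j).2.trans_eq ?_))
        rw [hY]; ring
    _ = (∑ j, C j) * X + (q + 1) * ((q + 1) ^ s * q) * Y := by
        rw [Finset.sum_add_distrib, ← Finset.sum_mul]; simp; ring
    _ ≤ _ := by
        have h1 : 0 ≤ ∑ j, C j := Finset.sum_nonneg fun j _ => hC j
        have h2 : (0 : ℝ) ≤ (q + 1) * ((q + 1) ^ s * q) := by positivity
        nlinarith [mul_nonneg h1 hY0, mul_nonneg h2 hX0]

/-- The number of derivatives falling on the `n`-th factor of the nonlinearity. -/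
def derivOrder (a b c n : ℕ) : ℕ :=
  if n < a then 3 else if n < a + b then 2 else if n < a + b + c then 1 else 0

theorem derivOrder_le (a b c n : ℕ) : derivOrder a b c n ≤ 3 := by
  unfold derivOrder; split_ifs <;> omega

theorem val_succAbove {q : ℕ} (j : Fin (q + 1)) (i : Fin q) :
    (j.succAbove i : ℕ) = if (i : ℕ) < j then (i : ℕ) else i + 1 := by
  simp only [Fin.succAbove, Fin.lt_def, Fin.val_castSucc]
  split_ifs <;> simp

theorem derivOrder_succAbove_of_lt {a b c q : ℕ} {j : Fin (q + 1)} (hj : (j : ℕ) < a) :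
    (fun i => derivOrder a b c (j.succAbove i)) = fun i : Fin q => derivOrder (a - 1) b c i := by
  funext i
  rw [val_succAbove]
  unfold derivOrder
  split_ifs <;> omega

theorem derivOrder_succAbove_of_ge {a b c q : ℕ} {j : Fin (q + 1)} (hj : a ≤ (j : ℕ))
    (hj' : (j : ℕ) < a + b) :
    (fun i => derivOrder a b c (j.succAbove i)) = fun i : Fin q => derivOrder a (b - 1) c i := by
  funext i
  rw [val_succAbove]
  unfold derivOrder
  split_ifs <;> omega

theorem sum_derivOrder {a b c d q : ℕ} (hq : q + 1 = a + b + c + d)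
    (G : ℕ → (Fin q → ℕ) → ℂ) (h0 : ∀ μ, G 0 μ = 0) (h1 : ∀ μ, G 1 μ = 0) :
    ∑ j : Fin (q + 1), G (derivOrder a b c j) (fun i => derivOrder a b c (j.succAbove i)) =
      a * G 3 (fun i => derivOrder (a - 1) b c i) + b * G 2 (fun i => derivOrder a (b - 1) c i) := by
  have h : ∀ j : Fin (q + 1),
      G (derivOrder a b c j) (fun i => derivOrder a b c (j.succAbove i)) =
      (fun n : ℕ => if n < a then G 3 (fun i => derivOrder (a - 1) b c i) else
        if n < a + b then G 2 (fun i => derivOrder a (b - 1) c i) else 0) j := by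
    intro j
    dsimp only
    split_ifs with h2 h3
    · rw [derivOrder_succAbove_of_lt h2]; simp [derivOrder, h2]
    · rw [derivOrder_succAbove_of_ge (not_lt.1 h2) h3]; simp [derivOrder, h2, h3]
    · have : derivOrder a b c j = 0 ∨ derivOrder a b c j = 1 := by
        unfold derivOrder; split_ifs <;> simp
      rcases this with e | e <;> rw [e]
      · exact h0 _
      · exact h1 _
  rw [Finset.sum_congr rfl fun j _ => h j, Fin.sum_univ_eq_sum_range (fun n : ℕ =>
      if n < a then G 3 (fun i => derivOrder (a - 1) b c i) else
        if n < a + b then G 2 (fun i => derivOrder a (b - 1) c i) else 0) (q + 1), hq, add_assoc,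
    Finset.sum_range_add, Finset.sum_range_add]
  rw [Finset.sum_congr rfl fun x hx => if_pos (Finset.mem_range.1 hx),
    Finset.sum_congr (s₁ := Finset.range b) rfl fun x hx => by
      rw [if_neg (by omega), if_pos (by have := Finset.mem_range.1 hx; omega)],
    Finset.sum_congr (s₁ := Finset.range (c + d)) rfl fun x _ => by
      rw [if_neg (by omega), if_neg (by omega)]]
  simp

/-- The frequency tuples summing to zero, parametrized by all but the last frequency. -/
def zeroSumEquiv (q : ℕ) :
    ℤ × (Fin q → ℤ) ≃ {k : Fin (q + 1 + 1) → ℤ // (∑ i, k i) = 0} where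
  toFun z := ⟨Fin.snoc (Fin.snoc z.2 z.1 : Fin (q + 1) → ℤ) (lastFreq z), by
    simp [Fin.sum_univ_castSucc, lastFreq]; ring⟩
  invFun k := (k.1 (Fin.last q).castSucc, fun i => k.1 i.castSucc.castSucc)
  left_inv z := by simp
  right_inv k := by
    have h := k.2
    rw [Fin.sum_univ_castSucc, Fin.sum_univ_castSucc] at h
    ext i
    refine Fin.lastCases ?_ (fun i => ?_) i
    · simp [lastFreq]; linarith
    · refine Fin.lastCases ?_ (fun i => ?_) i <;> simp

theorem zeroSumEquiv_last {q : ℕ} (z : ℤ × (Fin q → ℤ)) :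
    (zeroSumEquiv q z).1 (Fin.last (q + 1)) = lastFreq z := by
  simp [zeroSumEquiv]

theorem zeroSumEquiv_castSucc_last {q : ℕ} (z : ℤ × (Fin q → ℤ)) :
    (zeroSumEquiv q z).1 (Fin.last q).castSucc = z.1 := by
  simp [zeroSumEquiv]

theorem zeroSumEquiv_castSucc_castSucc {q : ℕ} (z : ℤ × (Fin q → ℤ)) (i : Fin q) :
    (zeroSumEquiv q z).1 i.castSucc.castSucc = z.2 i := by
  simp [zeroSumEquiv]

theorem ksum1_zeroSumEquiv {q : ℕ} (z : ℤ × (Fin q → ℤ)) :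
    ksum1 (q + 1) (zeroSumEquiv q z).1 = ∑ i, z.2 i := by
  unfold ksum1
  rw [Finset.sum_filter, Fin.sum_univ_castSucc, Fin.sum_univ_castSucc]
  simp [zeroSumEquiv_castSucc_castSucc]

theorem fmax_zeroSumEquiv {q : ℕ} (z : ℤ × (Fin q → ℤ)) :
    fmax (Finset.univ.filter (fun i : Fin (q + 1 + 1) => (i : ℕ) < q + 1 - 1))
      (fun i => |((zeroSumEquiv q z).1 i : ℝ)|) = fmax Finset.univ fun i => |(z.2 i : ℝ)| := by
  unfold fmax
  congr 1
  refine le_antisymm (Finset.sup_le fun i hi => ?_) (Finset.sup_le fun i _ => ?_)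
  · have hi' : (i : ℕ) < q := by simpa using hi
    have : i = (⟨i, hi'⟩ : Fin q).castSucc.castSucc := by ext; simp
    dsimp only
    rw [this, zeroSumEquiv_castSucc_castSucc]
    exact Finset.le_sup (f := fun i => Real.toNNReal |(z.2 i : ℝ)|) (Finset.mem_univ _)
  · dsimp only
    rw [← zeroSumEquiv_castSucc_castSucc]
    exact Finset.le_sup (f := fun i => Real.toNNReal |((zeroSumEquiv q z).1 i : ℝ)|) (by simp)

theorem Dabc_eq_prod (p a b c : ℕ) (k : Fin (p + 1) → ℤ) :
    Dabc p a b c k = ∏ i, (Complex.I * (k i : ℂ)) ^ derivOrder a b c i := by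
  unfold Dabc
  rw [Finset.prod_filter, Finset.prod_filter, Finset.prod_filter, ← Finset.prod_mul_distrib,
    ← Finset.prod_mul_distrib]
  refine Finset.prod_congr rfl fun i _ => ?_
  unfold derivOrder
  split_ifs <;> first | omega | simp

theorem Dabc_zeroSumEquiv {q a b c : ℕ} (h : a + b + c ≤ q) (z : ℤ × (Fin q → ℤ)) :
    Dabc (q + 1) a b c (zeroSumEquiv q z).1 = lowSym (fun i => derivOrder a b c i) z.2 := by
  rw [Dabc_eq_prod, Fin.prod_univ_castSucc, Fin.prod_univ_castSucc]
  have h1 : derivOrder a b c q = 0 := by unfold derivOrder; split_ifs <;> omega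
  have h2 : derivOrder a b c (q + 1) = 0 := by unfold derivOrder; split_ifs <;> omega
  simp [zeroSumEquiv_castSucc_castSucc, lowSym, h1, h2]

/-- The quadratic form of the modified energy attached to a factor with `m` derivatives. -/
noncomputable def energyForm (C₀ : ℝ) (s : ℕ) {q : ℕ} (u w : ℤ → ℂ) (m : ℕ) (μ : Fin q → ℕ) : ℂ :=
  ∑' z, energyCutoff C₀ z * energySym s m z * lowSym μ z.2 * coeffProd u w w z

theorem MNR_zeroSumEquiv {C₀ lam : ℝ} {s q a b c d : ℕ} (hq : q + 1 = a + b + c + d)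
    (z : ℤ × (Fin q → ℤ)) :
    (Complex.I * (z.1 : ℂ)) ^ (s + 1) * (Complex.I * (lastFreq z : ℂ)) ^ (s + 1) *
        MNR C₀ s (q + 1) lam a b c (zeroSumEquiv q z).1 +
      (if ∑ i, z.2 i = 0 then (1 : ℂ) else 0) * lam * b *
        ((z.1 : ℂ) ^ (2 * (s + 1)) * lowSym (fun i => derivOrder a (b - 1) c i) z.2) =
      lam * (a * (energyCutoff C₀ z * energySym s 3 z *
          lowSym (fun i => derivOrder (a - 1) b c i) z.2) +
        b * (energyCutoff C₀ z * energySym s 2 z *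
          lowSym (fun i => derivOrder a (b - 1) c i) z.2)) := by
  have hA : (a : ℂ) * Dabc (q + 1) (a - 1) b c (zeroSumEquiv q z).1 =
      a * lowSym (fun i => derivOrder (a - 1) b c i) z.2 := by
    rcases Nat.eq_zero_or_pos a with h | h
    · simp [h]
    · rw [Dabc_zeroSumEquiv (by omega)]
  have hB : (b : ℂ) * Dabc (q + 1) a (b - 1) c (zeroSumEquiv q z).1 =
      b * lowSym (fun i => derivOrder a (b - 1) c i) z.2 := by
    rcases Nat.eq_zero_or_pos b with h | h
    · simp [h]
    · rw [Dabc_zeroSumEquiv (by omega)]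
  have hM : MNR C₀ s (q + 1) lam a b c (zeroSumEquiv q z).1 =
      MH C₀ (q + 1) (zeroSumEquiv q z).1 * MNZ (q + 1) (zeroSumEquiv q z).1 * lam *
        (((s : ℂ) - 3 / 2) * (Complex.I * ((∑ i, z.2 i : ℤ) : ℂ)) *
          (a * lowSym (fun i => derivOrder (a - 1) b c i) z.2) +
        b * lowSym (fun i => derivOrder a (b - 1) c i) z.2) := by
    rw [← hA, ← hB, MNR, ksum1_zeroSumEquiv]; ring
  have hMH : MH C₀ (q + 1) (zeroSumEquiv q z).1 =
      if C₀ * fmax Finset.univ (fun i => |(z.2 i : ℝ)|) ≤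
        min (|(z.1 : ℝ)| ^ ((4 : ℝ) / 5)) (|(lastFreq z : ℝ)| ^ ((4 : ℝ) / 5)) then 1 else 0 := by
    unfold MH
    rw [fmax_zeroSumEquiv]
    have e : (⟨q + 1 - 1, by omega⟩ : Fin (q + 1 + 1)) = (Fin.last q).castSucc := by ext; simp
    rw [e, zeroSumEquiv_castSucc_last, zeroSumEquiv_last]
  have hNZ : MNZ (q + 1) (zeroSumEquiv q z).1 = if ∑ i, z.2 i = 0 then 0 else 1 := by
    unfold MNZ; rw [ksum1_zeroSumEquiv]; split_ifs <;> simp_all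
  rw [hM, hNZ, hMH, energyCutoff, energySym, energySym]
  by_cases h0 : ∑ i, z.2 i = 0
  · have hy : lastFreq z = -z.1 := by simp [lastFreq, h0]
    have hp : (Complex.I * (z.1 : ℂ)) ^ (s + 1) * (Complex.I * ((-z.1 : ℤ) : ℂ)) ^ (s + 1) =
        (z.1 : ℂ) ^ (2 * (s + 1)) := by
      rw [I_mul_pow_mul, pow_mul]; congr 1; push_cast; ring
    simp only [h0, hy, hp, leadFactor, if_true, Int.cast_zero]
    norm_num
    ring
  · simp only [h0, leadFactor, if_false, if_true, show (2 : ℕ) ≠ 3 by norm_num]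
    ring

theorem energyForm_eq_zero {C₀ : ℝ} {s q m : ℕ} {u w : ℤ → ℂ} (μ : Fin q → ℕ) (h3 : m ≠ 3)
    (h2 : m ≠ 2) : energyForm C₀ s u w m μ = 0 := by
  simp [energyForm, energySym, leadFactor, h3, h2]

theorem diffSummand_energy_bound (s q : ℕ) (hs : 7 ≤ s) (C₀ : ℝ) (hC₀ : 0 < C₀)
    {a b c d : ℕ} (hq : q + 1 = a + b + c + d) :
    ∃ C : ℝ, 0 ≤ C ∧ ∀ u v : ℤ → ℂ, Rapid u → Rapid v →
      ‖∑' k, diffSummand s (fun i : Fin (q + 1) => derivOrder a b c i) u v k +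
        (a * energyForm C₀ s u (fun k => u k - v k) 3
            (fun i : Fin q => derivOrder (a - 1) b c i) +
          b * energyForm C₀ s u (fun k => u k - v k) 2
            (fun i : Fin q => derivOrder a (b - 1) c i))‖ ≤
      C * (wTwo s (fun k => u k - v k) * wOne 7 u ^ q +
        √(wTwo (s + 3) v) * √(wTwo s fun k => u k - v k) *
          (wOne 3 (fun k => u k - v k) * (wOne 3 u + wOne 3 v) ^ (q - 1))) := by
  obtain ⟨C, hC, H⟩ := diffSummand_bound s q hs C₀ hC₀
    (fun i : Fin (q + 1) => derivOrder a b c i) fun i => derivOrder_le _ _ _ _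
  refine ⟨C, hC, fun u v hu hv => ?_⟩
  have h := H u v hu hv
  rw [← sum_derivOrder hq (energyForm C₀ s u fun k => u k - v k)
    (fun μ => energyForm_eq_zero μ (by norm_num) (by norm_num))
    (fun μ => energyForm_eq_zero μ (by norm_num) (by norm_num))]
  exact h

/-- The sum over resonant low frequencies, i.e. a Fourier expansion of the mean of a product. -/
noncomputable def resonantSum {q : ℕ} (μ : Fin q → ℕ) (u : ℤ → ℂ) : ℂ :=
  ∑' k : Fin q → ℤ, (if ∑ i, k i = 0 then (1 : ℂ) else 0) * (lowSym μ k * ∏ i, u (k i))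

theorem resonantSum_mul_dxNormSq {q s : ℕ} {μ : Fin q → ℕ} (hμ : ∀ i, μ i ≤ 3) {u : ℤ → ℂ}
    {H : ℝ → ℂ} (hu : Rapid u) (hw : Rapid (fhat H))
    (hconj : ∀ k, fhat H (-k) = (starRingEnd ℂ) (fhat H k)) :
    HasSum (fun z : ℤ × (Fin q → ℤ) => (if ∑ i, z.2 i = 0 then (1 : ℂ) else 0) *
        ((z.1 : ℂ) ^ (2 * s) * lowSym μ z.2) * coeffProd u (fhat H) (fhat H) z)
      (resonantSum μ u * (dxNormSq s H : ℂ)) := by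
  have h1 : Summable fun k : ℤ => (k : ℝ) ^ (2 * s) * ‖fhat H k‖ ^ 2 := by
    refine Summable.of_nonneg_of_le (fun k => ?_) (fun k => ?_) (hw.summable_sq s)
    · exact mul_nonneg ((even_two_mul s).pow_nonneg _) (sq_nonneg _)
    · rw [mul_pow, ← pow_mul, mul_comm s 2, pow_mul, pow_mul, ← sq_abs]
      gcongr
      exact abs_le_jap k
  have h1' : Summable fun k : ℤ => ‖(((k : ℝ) ^ (2 * s) * ‖fhat H k‖ ^ 2 : ℝ) : ℂ)‖ := by
    simpa only [Complex.norm_real] using h1.norm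
  have h2 : Summable fun k : Fin q → ℤ =>
      ‖(if ∑ i, k i = 0 then (1 : ℂ) else 0) * (lowSym μ k * ∏ i, u (k i))‖ := by
    have hP := (hasSum_pi_prod (n := q) (fun _ k => jap k ^ 3 * ‖u k‖) (fun _ k =>
      mul_nonneg (pow_nonneg (jap_pos k).le _) (norm_nonneg _)) fun _ => hu 3).summable
    refine Summable.of_nonneg_of_le (fun k => norm_nonneg _) (fun k => ?_) hP
    rw [norm_mul, norm_mul, norm_prod, Finset.prod_mul_distrib]
    exact (mul_le_of_le_one_left (by positivity) (norm_ite_one_le _)).trans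
      (mul_le_mul_of_nonneg_right (norm_lowSym_le hμ k) (by positivity))
  have e : ∀ z : ℤ × (Fin q → ℤ), (((z.1 : ℝ) ^ (2 * s) * ‖fhat H z.1‖ ^ 2 : ℝ) : ℂ) *
      ((if ∑ i, z.2 i = 0 then (1 : ℂ) else 0) * (lowSym μ z.2 * ∏ i, u (z.2 i))) =
      (if ∑ i, z.2 i = 0 then (1 : ℂ) else 0) *
        ((z.1 : ℂ) ^ (2 * s) * lowSym μ z.2) * coeffProd u (fhat H) (fhat H) z := by
    intro z
    by_cases h0 : ∑ i, z.2 i = 0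
    · have hy : lastFreq z = -z.1 := by simp [lastFreq, h0]
      rw [coeffProd, hy, hconj, Complex.mul_conj, Complex.normSq_eq_norm_sq]
      push_cast
      ring
    · simp [h0]
  have h4 := summable_mul_of_summable_norm h1' h2
  have h5 := tsum_mul_tsum_of_summable_norm h1' h2
  simp only [e] at h4 h5
  have h6 : (dxNormSq s H : ℂ) = ∑' k : ℤ, (((k : ℝ) ^ (2 * s) * ‖fhat H k‖ ^ 2 : ℝ) : ℂ) := by
    rw [dxNormSq, Complex.ofReal_tsum]
  rw [mul_comm (resonantSum μ u), h6, resonantSum, h5]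
  exact h4.hasSum

theorem Gam_add_resonantSum {q s : ℕ} (hs : 7 ≤ s) {C₀ lam : ℝ} {a b c d : ℕ}
    (hq : q + 1 = a + b + c + d) {F H : ℝ → ℂ} (hu : Rapid (fhat F)) (hw : Rapid (fhat H))
    (hconj : ∀ k, fhat H (-k) = (starRingEnd ℂ) (fhat H k)) :
    lam * b * (resonantSum (fun i : Fin q => derivOrder a (b - 1) c i) (fhat F) *
        (dxNormSq (s + 1) H : ℂ)) +
      Gam (q + 1) (fun k =>
          (Complex.I * (k (⟨q + 1 - 1, by omega⟩ : Fin (q + 1 + 1)) : ℂ)) ^ (s + 1)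
          * (Complex.I * (k (Fin.last (q + 1)) : ℂ)) ^ (s + 1)
          * MNR C₀ s (q + 1) lam a b c k) (tup (q + 1) F H) =
      lam * (a * energyForm C₀ s (fhat F) (fhat H) 3
          (fun i : Fin q => derivOrder (a - 1) b c i) +
        b * energyForm C₀ s (fhat F) (fhat H) 2
          (fun i : Fin q => derivOrder a (b - 1) c i)) := by
  have h3 := (summable_energySym (q := q) (m := 3) hs C₀ (fun i => derivOrder_le (a - 1) b c i)
    hu hw).hasSum
  have h2 := (summable_energySym (q := q) (m := 2) hs C₀ (fun i => derivOrder_le a (b - 1) c i)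
    hu hw).hasSum
  have hR := (resonantSum_mul_dxNormSq (q := q) (s := s + 1)
    (fun i => derivOrder_le a (b - 1) c i) hu hw hconj).mul_left ((lam : ℂ) * b)
  have hS := (((h3.mul_left (a : ℂ)).add (h2.mul_left (b : ℂ))).mul_left (lam : ℂ)).sub hR
  rw [← eq_sub_iff_add_eq', Gam, ← (zeroSumEquiv q).tsum_eq]
  refine Eq.trans (tsum_congr fun z => ?_) hS.tsum_eq
  have hprod : ∏ i, fhat (tup (q + 1) F H i) ((zeroSumEquiv q z).1 i) =
      coeffProd (fhat F) (fhat H) (fhat H) z := by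
    rw [Fin.prod_univ_castSucc, Fin.prod_univ_castSucc, zeroSumEquiv_last,
      zeroSumEquiv_castSucc_last]
    simp only [zeroSumEquiv_castSucc_castSucc]
    simp [tup, coeffProd]
    ring
  have e : (⟨q + 1 - 1, by omega⟩ : Fin (q + 1 + 1)) = (Fin.last q).castSucc := by ext; simp
  have hM := MNR_zeroSumEquiv (C₀ := C₀) (lam := lam) (s := s) hq z
  rw [hprod, e, zeroSumEquiv_last, zeroSumEquiv_castSucc_last]
  linear_combination (coeffProd (fhat F) (fhat H) (fhat H) z) * hM

theorem hasSum_pi_prod_of_summable_norm {n : ℕ} (u : Fin n → ℤ → ℂ) (z : Fin n → ℂ)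
    (hs : ∀ i, Summable fun k => ‖u i k‖) (hu : ∀ i, HasSum (u i) (z i)) :
    HasSum (fun k : Fin n → ℤ => ∏ i, u i (k i)) (∏ i, z i) := by
  induction n with
  | zero =>
    simp only [Finset.univ_eq_empty, Finset.prod_empty]
    exact hasSum_unique _
  | succ n ih =>
    have h1 := ih (fun i => u i.succ) (fun i => z i.succ) (fun i => hs _) (fun i => hu _)
    have hN : Summable fun k : Fin n → ℤ => ‖∏ i, u i.succ (k i)‖ := by
      simp only [norm_prod]
      exact (hasSum_pi_prod (n := n) (fun i k => ‖u i.succ k‖) (fun i k => norm_nonneg _)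
        fun i => hs i.succ).summable
    have h2 := HasSum.mul (hu 0) h1 (summable_mul_of_summable_norm (f := u 0)
      (g := fun k : Fin n → ℤ => ∏ i : Fin n, u i.succ (k i)) (hs 0) hN)
    rw [← (Fin.insertNthEquiv (fun _ => ℤ) 0).hasSum_iff, Fin.prod_univ_succ]
    convert! h2 using 2 with z
    simp [Fin.prod_univ_succ]

theorem norm_exp_I_mul (k : ℤ) (x : ℝ) : ‖Complex.exp (Complex.I * k * x)‖ = 1 := by
  have : Complex.I * k * x = ((k * x : ℝ) : ℂ) * Complex.I := by push_cast; ring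
  rw [this, Complex.norm_exp_ofReal_mul_I]

theorem fhat_neg_eq (v : ℝ → ℂ) (m : ℤ) :
    fhat v (-m) = (Complex.ofReal (2 * Real.pi))⁻¹ *
      ∫ x in (0:ℝ)..(2 * Real.pi), Complex.exp (Complex.I * m * x) * v x := by
  rw [fhat]
  congr 1
  refine intervalIntegral.integral_congr fun x _ => ?_
  simp only [Int.cast_neg]
  rw [mul_comm]
  congr 2
  ring

/-- Expansion of the mean of a product of functions given by their Fourier series. -/
theorem hasSum_integral_prod {n : ℕ} (u : Fin n → ℤ → ℂ) (F : Fin n → ℝ → ℂ)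
    (hs : ∀ i, Summable fun k => ‖u i k‖)
    (hu : ∀ i (x : ℝ), HasSum (fun k : ℤ => u i k * Complex.exp (Complex.I * k * x)) (F i x))
    {v : ℝ → ℂ} (hv : Continuous v) :
    HasSum (fun k : Fin n → ℤ => (∏ i, u i (k i)) * fhat v (-∑ i, k i))
      ((Complex.ofReal (2 * Real.pi))⁻¹ *
        ∫ x in (0:ℝ)..(2 * Real.pi), (∏ i, F i x) * v x) := by
  have hP : Summable fun k : Fin n → ℤ => ∏ i, ‖u i (k i)‖ :=
    (hasSum_pi_prod (fun i k => ‖u i k‖) (fun _ _ => norm_nonneg _) hs).summable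
  have h := intervalIntegral.hasSum_integral_of_dominated_convergence (μ := MeasureTheory.volume)
    (a := 0) (b := 2 * Real.pi) (f := fun x => (∏ i, F i x) * v x)
    (F := fun (k : Fin n → ℤ) x => (∏ i, u i (k i) * Complex.exp (Complex.I * k i * x)) * v x)
    (fun k x => (∏ i, ‖u i (k i)‖) * ‖v x‖) (fun k => ?_) (fun k => ?_) ?_ ?_ ?_
  · refine (h.mul_left (Complex.ofReal (2 * Real.pi))⁻¹).congr_fun fun k => ?_
    rw [fhat_neg_eq, mul_left_comm, ← intervalIntegral.integral_const_mul]
    congr 1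
    refine intervalIntegral.integral_congr fun x _ => ?_
    simp only [Finset.prod_mul_distrib, ← Complex.exp_sum]
    rw [mul_assoc (∏ i, u i (k i))]
    congr 3
    push_cast
    rw [Finset.mul_sum, Finset.sum_mul]
  · exact Continuous.aestronglyMeasurable (by fun_prop)
  · refine Filter.Eventually.of_forall fun x _ => ?_
    simp only [norm_mul, norm_prod, norm_exp_I_mul, mul_one, le_refl]
  · exact Filter.Eventually.of_forall fun x _ => hP.mul_right _
  · simp only [tsum_mul_right]
    exact (continuous_const.mul hv.norm).intervalIntegrable _ _
  · refine Filter.Eventually.of_forall fun x _ => HasSum.mul_right _ ?_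
    exact hasSum_pi_prod_of_summable_norm (fun i k => u i k * Complex.exp (Complex.I * k * x))
      _ (fun i => by simpa only [norm_mul, norm_exp_I_mul, mul_one] using hs i) fun i => hu i x

theorem fhat_of_hasDerivAt {F F' : ℝ → ℂ} (hF : ∀ x, HasDerivAt F (F' x) x)
    (hF' : Continuous F') (hper : Function.Periodic F (2 * Real.pi)) (k : ℤ) :
    fhat F' k = Complex.I * k * fhat F k := by
  have hexp : ∀ x : ℝ, HasDerivAt (fun x : ℝ => Complex.exp (-Complex.I * k * x))
      (-Complex.I * k * Complex.exp (-Complex.I * k * x)) x := by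
    intro x
    have := ((hasDerivAt_id x).ofReal_comp.const_mul (-Complex.I * k : ℂ)).cexp
    simpa [mul_comm] using this
  have h := intervalIntegral.integral_mul_deriv_eq_deriv_mul (a := 0) (b := 2 * Real.pi)
    (fun x _ => hF x) (fun x _ => hexp x) (hF'.intervalIntegrable _ _)
    (Continuous.intervalIntegrable (by fun_prop) _ _)
  have hp : F (2 * Real.pi) = F 0 := by simpa using hper 0
  have he : Complex.exp (-Complex.I * k * ((2 * Real.pi : ℝ) : ℂ)) = 1 := by
    rw [show -Complex.I * k * ((2 * Real.pi : ℝ) : ℂ) = ((-k : ℤ) : ℂ) * (2 * Real.pi * Complex.I) by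
      push_cast; ring]
    exact Complex.exp_int_mul_two_pi_mul_I _
  rw [hp, he] at h
  simp only [Complex.ofReal_zero, mul_zero, Complex.exp_zero, sub_self, zero_sub] at h
  have h2 : ∀ x : ℝ, F x * (-Complex.I * k * Complex.exp (-Complex.I * k * x)) =
      (-Complex.I * k) * (F x * Complex.exp (-Complex.I * k * x)) := fun x => by ring
  simp only [h2, intervalIntegral.integral_const_mul] at h
  rw [fhat, fhat]
  linear_combination (Complex.ofReal (2 * Real.pi))⁻¹ * h

theorem summable_inv_jap_sq : Summable fun k : ℤ => (jap k ^ 2)⁻¹ := by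
  have h : Summable fun n : ℕ => (((n : ℝ) + 1) ^ 2)⁻¹ := by
    have := (summable_nat_add_iff 1).2 (Real.summable_nat_pow_inv.2 (by norm_num : 1 < 2))
    simpa using this
  refine Summable.of_nat_of_neg ?_ ?_
  · refine h.congr fun n => ?_
    simp [jap, add_comm]
  · refine h.congr fun n => ?_
    simp [jap, add_comm]

theorem norm_fhat_le {F : ℝ → ℂ} (k : ℤ) :
    ‖fhat F k‖ ≤ (2 * Real.pi)⁻¹ * ∫ x in (0:ℝ)..(2 * Real.pi), ‖F x‖ := by
  have hpi : 0 ≤ 2 * Real.pi := by positivity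
  rw [fhat, norm_mul, norm_inv, Complex.norm_real, Real.norm_of_nonneg hpi]
  gcongr
  refine (intervalIntegral.norm_integral_le_integral_norm hpi).trans_eq ?_
  refine intervalIntegral.integral_congr fun x _ => ?_
  have := norm_exp_I_mul (-k) x
  rw [show Complex.I * ((-k : ℤ) : ℂ) * x = -Complex.I * k * x by push_cast; ring] at this
  simp only [norm_mul, this, mul_one]

theorem hasSum_fourierSeries {F : ℝ → ℂ} (hF : Continuous F)
    (hper : Function.Periodic F (2 * Real.pi)) (hs : Summable fun k => ‖fhat F k‖) (x : ℝ) :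
    HasSum (fun k : ℤ => fhat F k * Complex.exp (Complex.I * k * x)) (F x) := by
  have : Fact (0 < 2 * Real.pi) := ⟨by positivity⟩
  have hpi : (Real.pi : ℂ) ≠ 0 := by exact_mod_cast Real.pi_ne_zero
  let G : C(AddCircle (2 * Real.pi), ℂ) := ⟨hper.lift, hF.quotient_liftOn' _⟩
  have hexp : ∀ (k : ℤ) (x : ℝ), fourier k (x : AddCircle (2 * Real.pi)) =
      Complex.exp (Complex.I * k * x) := by
    intro k x
    rw [fourier_coe_apply]
    congr 1
    push_cast
    field_simp
  have hc : ∀ k, fourierCoeff G k = fhat F k := by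
    intro k
    rw [fourierCoeff_eq_intervalIntegral _ _ 0, fhat, zero_add, Complex.real_smul]
    congr 1
    · push_cast; rw [one_div]
    · refine intervalIntegral.integral_congr fun x _ => ?_
      simp only [hexp, smul_eq_mul]
      rw [mul_comm]
      congr 1
      push_cast
      ring_nf
  have h := has_pointwise_sum_fourier_series_of_summable (f := G)
    ((hs.of_norm).congr fun k => (hc k).symm) (x : AddCircle (2 * Real.pi))
  refine h.congr_fun fun k => ?_
  rw [hc, hexp, smul_eq_mul]

theorem contDiff_iteratedDeriv {f : ℝ → ℝ} (hf : ContDiff ℝ (⊤ : ℕ∞) f) (n : ℕ) :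
    ContDiff ℝ (⊤ : ℕ∞) (iteratedDeriv n f) := by
  rw [iteratedDeriv_eq_iterate]
  exact hf.iterate_deriv n

theorem periodic_iteratedDeriv {f : ℝ → ℝ} {T : ℝ} (hf : Function.Periodic f T) (n : ℕ) :
    Function.Periodic (iteratedDeriv n f) T := by
  induction n with
  | zero => simpa using hf
  | succ n ih =>
    intro x
    rw [iteratedDeriv_succ, ← deriv_comp_add_const]
    congr 1
    exact funext ih

theorem fhat_iteratedDeriv {f : ℝ → ℝ} (hf : ContDiff ℝ (⊤ : ℕ∞) f)
    (hper : Function.Periodic f (2 * Real.pi)) (n : ℕ) (k : ℤ) :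
    fhat (cF (iteratedDeriv n f)) k = (Complex.I * k) ^ n * fhat (cF f) k := by
  induction n with
  | zero => simp
  | succ n ih =>
    have hd : ∀ x, HasDerivAt (cF (iteratedDeriv n f)) (cF (iteratedDeriv (n + 1) f) x) x := by
      intro x
      have := ((contDiff_iteratedDeriv hf n).differentiable (by simp) x).hasDerivAt
      rw [← iteratedDeriv_succ] at this
      exact this.ofReal_comp
    have hc : Continuous (cF (iteratedDeriv (n + 1) f)) :=
      Complex.continuous_ofReal.comp (contDiff_iteratedDeriv hf (n + 1)).continuous
    have hp : Function.Periodic (cF (iteratedDeriv n f)) (2 * Real.pi) := fun x => by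
      simp only [cF, periodic_iteratedDeriv hper n x]
    rw [fhat_of_hasDerivAt hd hc hp, ih, pow_succ']
    ring

theorem rapid_fhat {f : ℝ → ℝ} (hf : ContDiff ℝ (⊤ : ℕ∞) f)
    (hper : Function.Periodic f (2 * Real.pi)) : Rapid (fhat (cF f)) := by
  intro n
  obtain ⟨B, hB⟩ : ∃ B : ℕ → ℝ, ∀ m (k : ℤ), |(k : ℝ)| ^ m * ‖fhat (cF f) k‖ ≤ B m := by
    refine ⟨fun m => _, fun m k => le_of_eq_of_le ?_ (norm_fhat_le (F := cF (iteratedDeriv m f)) k)⟩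
    rw [fhat_iteratedDeriv hf hper, norm_mul, norm_pow, norm_I_mul_intCast]
  refine Summable.of_nonneg_of_le (fun k => mul_nonneg (pow_nonneg (jap_pos k).le _) (norm_nonneg _))
    (fun k => ?_) (summable_inv_jap_sq.mul_left (2 ^ (n + 1) * (B 0 + B (n + 2))))
  rw [← div_eq_mul_inv, le_div_iff₀ (pow_pos (jap_pos k) 2)]
  have h1 : jap k ^ (n + 2) ≤ 2 ^ (n + 1) * (1 + |(k : ℝ)| ^ (n + 2)) := by
    have := add_pow_le (zero_le_one' ℝ) (abs_nonneg (k : ℝ)) (n + 2)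
    simpa [jap] using this
  calc jap k ^ n * ‖fhat (cF f) k‖ * jap k ^ 2 = jap k ^ (n + 2) * ‖fhat (cF f) k‖ := by ring
    _ ≤ 2 ^ (n + 1) * (1 + |(k : ℝ)| ^ (n + 2)) * ‖fhat (cF f) k‖ := by gcongr
    _ = 2 ^ (n + 1) * (|(k : ℝ)| ^ 0 * ‖fhat (cF f) k‖ +
          |(k : ℝ)| ^ (n + 2) * ‖fhat (cF f) k‖) := by ring
    _ ≤ _ := by gcongr <;> exact hB _ _

theorem fhat_cF_sub {f g : ℝ → ℝ} (hf : Continuous f) (hg : Continuous g) :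
    fhat (cF fun x => f x - g x) = fun k => fhat (cF f) k - fhat (cF g) k := by
  funext k
  simp only [fhat, ← mul_sub]
  have hf' := Complex.continuous_ofReal.comp hf
  have hg' := Complex.continuous_ofReal.comp hg
  rw [← intervalIntegral.integral_sub]
  · congr 1
    refine intervalIntegral.integral_congr fun x _ => ?_
    simp only [cF]
    push_cast
    ring
  · exact (hf'.mul (by fun_prop)).intervalIntegrable _ _
  · exact (hg'.mul (by fun_prop)).intervalIntegrable _ _

theorem fhat_cF_neg (f : ℝ → ℝ) (k : ℤ) :
    fhat (cF f) (-k) = (starRingEnd ℂ) (fhat (cF f) k) := by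
  rw [fhat, fhat, map_mul, map_inv₀, Complex.conj_ofReal, intervalIntegral, intervalIntegral,
    map_sub, ← integral_conj, ← integral_conj]
  congr 3 <;>
  · funext x
    simp [cF, ← Complex.exp_conj]

theorem fhat_one (m : ℤ) : fhat (cF fun _ => 1) m = if m = 0 then 1 else 0 := by
  have hpi : (Real.pi : ℂ) ≠ 0 := by exact_mod_cast Real.pi_ne_zero
  split_ifs with h
  · subst h
    simp [fhat, cF]
    field_simp
  · have := fhat_of_hasDerivAt (F := cF fun _ => 1) (F' := fun _ => 0)
      (fun x => hasDerivAt_const _ _) continuous_const (fun x => rfl) m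
    have h0 : fhat (fun _ => 0) m = 0 := by simp [fhat]
    rw [h0, eq_comm, mul_eq_zero] at this
    refine this.resolve_left ?_
    simp [h]

theorem hasSum_integral_prod_iteratedDeriv {n : ℕ} (μ : Fin n → ℕ) {f v : ℝ → ℝ}
    (hf : ContDiff ℝ (⊤ : ℕ∞) f) (hper : Function.Periodic f (2 * Real.pi)) (hv : Continuous v) :
    HasSum (fun k : Fin n → ℤ => lowSym μ k * (∏ i, fhat (cF f) (k i)) *
        fhat (cF v) (-∑ i, k i))
      (((2 * Real.pi)⁻¹ * ∫ x in (0:ℝ)..(2 * Real.pi),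
        (∏ i, iteratedDeriv (μ i) f x) * v x : ℝ) : ℂ) := by
  have hR : ∀ m, Rapid (fhat (cF (iteratedDeriv m f))) := fun m =>
    rapid_fhat (contDiff_iteratedDeriv hf m) (periodic_iteratedDeriv hper m)
  have hs : ∀ m, Summable fun k => ‖fhat (cF (iteratedDeriv m f)) k‖ := fun m => by
    simpa using hR m 0
  have h := hasSum_integral_prod (fun (i : Fin n) k => fhat (cF (iteratedDeriv (μ i) f)) k)
    (fun i x => cF (iteratedDeriv (μ i) f) x) (fun i => hs _)
    (fun i x => hasSum_fourierSeries
      (Complex.continuous_ofReal.comp (contDiff_iteratedDeriv hf (μ i)).continuous)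
      (fun x => congrArg Complex.ofReal (periodic_iteratedDeriv hper _ x)) (hs _) x)
    (v := cF v) (Complex.continuous_ofReal.comp hv)
  convert! h using 1
  · funext k
    simp only [fhat_iteratedDeriv hf hper, Finset.prod_mul_distrib, lowSym]
  · rw [Complex.ofReal_mul, Complex.ofReal_inv, ← intervalIntegral.integral_ofReal]
    simp [cF]

theorem prod_derivOrder (G : ℕ → ℝ) {a b c d n : ℕ} (hn : n = a + b + c + d) :
    ∏ i : Fin n, G (derivOrder a b c i) = G 3 ^ a * G 2 ^ b * G 1 ^ c * G 0 ^ d := by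
  subst hn
  rw [Finset.prod_range (fun i => G (derivOrder a b c i)) |>.symm, Finset.prod_range_add,
    Finset.prod_range_add, Finset.prod_range_add]
  congr 1
  · congr 1
    · congr 1
      · rw [Finset.prod_congr rfl (g := fun _ => G 3)]
        · simp
        · intro i hi
          simp [derivOrder, Finset.mem_range.1 hi]
      · rw [Finset.prod_congr rfl (g := fun _ => G 2)]
        · simp
        · intro i hi
          simp [derivOrder, Finset.mem_range.1 hi]
    · rw [Finset.prod_congr rfl (g := fun _ => G 1)]
      · simp
      · intro i hi
        have := Finset.mem_range.1 hi
        rw [derivOrder, if_neg (by omega), if_neg (by omega), if_pos (by omega)]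
  · rw [Finset.prod_congr rfl (g := fun _ => G 0)]
    · simp
    · intro i hi
      rw [derivOrder, if_neg (by omega), if_neg (by omega), if_neg (by omega)]

theorem PNj_eq_resonantSum {lam : ℝ} {a b c d q : ℕ} (hq : q + 1 = a + b + c + d) {f : ℝ → ℝ}
    (hf : ContDiff ℝ (⊤ : ℕ∞) f) (hper : Function.Periodic f (2 * Real.pi)) :
    (PNj lam a b c d f : ℂ) =
      lam * b * resonantSum (fun i : Fin q => derivOrder a (b - 1) c i) (fhat (cF f)) := by
  rcases Nat.eq_zero_or_pos b with rfl | hb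
  · simp [PNj]
  have h := hasSum_integral_prod_iteratedDeriv (fun i : Fin q => derivOrder a (b - 1) c i)
    hf hper (v := fun _ => 1) continuous_const
  have e : resonantSum (fun i : Fin q => derivOrder a (b - 1) c i) (fhat (cF f)) =
      (((2 * Real.pi)⁻¹ * ∫ x in (0:ℝ)..(2 * Real.pi), (iteratedDeriv 3 f x) ^ a *
        (iteratedDeriv 2 f x) ^ (b - 1) * (deriv f x) ^ c * (f x) ^ d : ℝ) : ℂ) := by
    rw [resonantSum]
    have hG : ∀ x, ∏ i : Fin q, iteratedDeriv (derivOrder a (b - 1) c i) f x =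
        (iteratedDeriv 3 f x) ^ a * (iteratedDeriv 2 f x) ^ (b - 1) * (deriv f x) ^ c *
          (f x) ^ d := fun x => by
      rw [prod_derivOrder (fun m => iteratedDeriv m f x) (d := d) (by omega)]
      simp
    simp only [hG, mul_one] at h
    rw [← h.tsum_eq]
    refine tsum_congr fun k => ?_
    rw [fhat_one, mul_comm]
    simp only [neg_eq_zero]
  rw [e, PNj]
  push_cast
  ring

theorem pairing_eq_tsum_diffSummand {s q : ℕ} {lam : ℝ} {a b c d : ℕ}
    (hq : q + 1 = a + b + c + d) {f g : ℝ → ℝ} (hf : ContDiff ℝ (⊤ : ℕ∞) f)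
    (hfp : Function.Periodic f (2 * Real.pi)) (hg : ContDiff ℝ (⊤ : ℕ∞) g)
    (hgp : Function.Periodic g (2 * Real.pi)) :
    ((((-1 : ℝ)) ^ s * ((2 * Real.pi)⁻¹ * ∫ x in (0:ℝ)..(2 * Real.pi),
        (NjF lam a b c d f x - NjF lam a b c d g x) *
          iteratedDeriv (2 * s) (fun y => f y - g y) x) : ℝ) : ℂ) =
      lam * ∑' k, diffSummand s (fun i : Fin (q + 1) => derivOrder a b c i) (fhat (cF f))
        (fhat (cF g)) k := by
  have hh : ContDiff ℝ (⊤ : ℕ∞) fun y => f y - g y := hf.sub hg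
  have hhp : Function.Periodic (fun y => f y - g y) (2 * Real.pi) := hfp.sub hgp
  set v := iteratedDeriv (2 * s) fun y => f y - g y with hv
  have hvc : Continuous v := (contDiff_iteratedDeriv hh _).continuous
  have h := (hasSum_integral_prod_iteratedDeriv (fun i : Fin (q + 1) => derivOrder a b c i)
    hf hfp hvc).sub (hasSum_integral_prod_iteratedDeriv
      (fun i : Fin (q + 1) => derivOrder a b c i) hg hgp hvc)
  have hN : ∀ (F : ℝ → ℝ) x, NjF lam a b c d F x =
      lam * ∏ i : Fin (q + 1), iteratedDeriv (derivOrder a b c i) F x := fun F x => by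
    rw [prod_derivOrder (fun m => iteratedDeriv m F x) hq, NjF]
    simp
    ring
  have hcont : ∀ F : ℝ → ℝ, ContDiff ℝ (⊤ : ℕ∞) F → IntervalIntegrable
      (fun x => (∏ i : Fin (q + 1), iteratedDeriv (derivOrder a b c i) F x) * v x)
      MeasureTheory.volume 0 (2 * Real.pi) := fun F hF =>
    ((continuous_finsetProd _ fun i _ => (contDiff_iteratedDeriv hF _).continuous).mul
      hvc).intervalIntegrable _ _
  have h2 := (h.mul_left ((lam : ℂ) * (-1) ^ s)).tsum_eq
  rw [← tsum_mul_left]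
  refine Eq.trans ?_ (h2.symm.trans (tsum_congr fun k => ?_))
  · simp only [hN, ← mul_sub, sub_mul, mul_assoc, intervalIntegral.integral_const_mul]
    rw [intervalIntegral.integral_sub (hcont f hf) (hcont g hg)]
    push_cast
    ring
  · rw [hv, fhat_iteratedDeriv hh hhp, fhat_cF_sub hf.continuous hg.continuous, diffSummand]
    have hs : ((-1 : ℂ) ^ s) * (Complex.I * ((-∑ i, k i : ℤ) : ℂ)) ^ (2 * s) =
        ((∑ i, k i : ℤ) : ℂ) ^ (2 * s) := by
      rw [pow_mul, pow_mul, ← mul_pow]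
      congr 1
      push_cast
      linear_combination (-(∑ i, (k i : ℂ)) ^ 2) * Complex.I_sq
    rw [← hs]
    ring

theorem jap_sq_le (k : ℤ) : jap k ^ 2 ≤ 2 * (1 + (k : ℝ) ^ 2) := by
  rw [jap, ← sq_abs (k : ℝ)]
  nlinarith [sq_nonneg (|(k : ℝ)| - 1)]

theorem Rapid.summable_hsNormC {F : ℝ → ℂ} (hF : Rapid (fhat F)) (n : ℕ) :
    Summable fun k : ℤ => (1 + (k : ℝ) ^ 2) ^ n * ‖fhat F k‖ ^ 2 := by
  refine Summable.of_nonneg_of_le (fun k => by positivity) (fun k => ?_) (hF.summable_sq n)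
  rw [mul_pow, ← pow_mul, mul_comm n 2, pow_mul]
  gcongr
  rw [jap, ← sq_abs (k : ℝ)]
  nlinarith [abs_nonneg (k : ℝ)]

theorem hsNormC_nonneg (n : ℕ) (F : ℝ → ℂ) : 0 ≤ hsNormC n F := Real.sqrt_nonneg _

theorem hsNormC_mono {F : ℝ → ℂ} (hF : Rapid (fhat F)) {m n : ℕ} (h : m ≤ n) :
    hsNormC m F ≤ hsNormC n F := by
  refine Real.sqrt_le_sqrt ((hF.summable_hsNormC m).tsum_le_tsum (fun k => ?_)
    (hF.summable_hsNormC n))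
  gcongr
  nlinarith [sq_nonneg (k : ℝ)]

theorem sqrt_wTwo_le {F : ℝ → ℂ} (hF : Rapid (fhat F)) (n : ℕ) :
    √(wTwo n (fhat F)) ≤ √(2 ^ n) * hsNormC n F := by
  rw [hsNormC, ← Real.sqrt_mul (by positivity), ← tsum_mul_left]
  refine Real.sqrt_le_sqrt ((hF.summable_sq n).tsum_le_tsum (fun k => ?_)
    ((hF.summable_hsNormC n).mul_left _))
  rw [mul_pow, ← pow_mul, mul_comm n 2, pow_mul, ← mul_assoc, ← mul_pow]
  gcongr
  exact jap_sq_le k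

theorem wOne_le {F : ℝ → ℂ} (hF : Rapid (fhat F)) (n : ℕ) :
    wOne n (fhat F) ≤ √(∑' k : ℤ, (jap k ^ 2)⁻¹) * √(2 ^ (n + 1)) * hsNormC (n + 1) F := by
  have h := (tsum_mul_le_sqrt (A := fun k => (jap k)⁻¹)
    (B := fun k => jap k ^ (n + 1) * ‖fhat F k‖) (fun k => inv_nonneg.2 (jap_pos k).le)
    (fun k => mul_nonneg (pow_nonneg (jap_pos k).le _) (norm_nonneg _))
    (by simpa only [inv_pow] using summable_inv_jap_sq) (hF.summable_sq (n + 1))).2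
  simp only [inv_pow] at h
  rw [mul_assoc]
  refine le_trans (le_of_eq_of_le ?_ h) (mul_le_mul_of_nonneg_left (sqrt_wTwo_le hF (n + 1))
    (Real.sqrt_nonneg _))
  refine tsum_congr fun k => ?_
  rw [pow_succ' (jap k), mul_assoc, inv_mul_cancel_left₀ (jap_pos k).ne']

theorem mul_pow_le_add_sq {X Y Q R : ℝ} (hQ : 0 ≤ Q) (hQR : Q ≤ R) {q : ℕ} (hq : 2 ≤ q) :
    X * Y * Q ^ (q - 1) ≤ X ^ 2 * R ^ q + Y ^ 2 * Q ^ (q - 2) := by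
  obtain ⟨r, rfl⟩ := Nat.exists_eq_add_of_le' hq
  have h1 : Q ^ (r + 2) ≤ R ^ (r + 2) := by gcongr
  have h2 : X ^ 2 * Q ^ (r + 2) ≤ X ^ 2 * R ^ (r + 2) := by gcongr
  have h3 : 0 ≤ Q ^ r * (2 * (X * Q) ^ 2 + 2 * Y ^ 2 - 2 * (X * Q * Y)) :=
    mul_nonneg (by positivity) (by nlinarith [sq_nonneg (X * Q - Y), sq_nonneg (X * Q), sq_nonneg Y])
  have e1 : r + 2 - 1 = r + 1 := rfl
  have e2 : r + 2 - 2 = r := rfl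
  rw [e1, e2]
  refine le_trans ?_ (add_le_add_left h2 _)
  ring_nf at h3 ⊢
  linarith

theorem energy_rhs_bound (s q : ℕ) (hq : 2 ≤ q) : ∃ K : ℝ, 0 ≤ K ∧ ∀ f g h : ℝ → ℂ,
    Rapid (fhat f) → Rapid (fhat g) → Rapid (fhat h) →
      wTwo s (fhat h) * wOne 7 (fhat f) ^ q +
        √(wTwo (s + 3) (fhat g)) * √(wTwo s (fhat h)) *
          (wOne 3 (fhat h) * (wOne 3 (fhat f) + wOne 3 (fhat g)) ^ (q - 1)) ≤
      K * (hsNormC s h ^ 2 * (hsNormC 8 f + hsNormC 8 g) ^ q +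
        hsNormC 7 h ^ 2 * hsNormC (s + 3) g ^ 2 * (hsNormC 7 f + hsNormC 7 g) ^ (q - 2)) := by
  obtain ⟨K₁, hK₁, H₁⟩ : ∃ K : ℝ, 0 ≤ K ∧ ∀ F : ℝ → ℂ, Rapid (fhat F) →
      wOne 7 (fhat F) ≤ K * hsNormC 8 F :=
    ⟨_, by positivity, fun F hF => wOne_le hF 7⟩
  obtain ⟨K₂, hK₂, H₂⟩ : ∃ K : ℝ, 0 ≤ K ∧ ∀ F : ℝ → ℂ, Rapid (fhat F) →
      wOne 3 (fhat F) ≤ K * hsNormC 7 F :=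
    ⟨√(∑' k : ℤ, (jap k ^ 2)⁻¹) * √(2 ^ (3 + 1)), by positivity, fun F hF =>
      (wOne_le hF 3).trans (mul_le_mul_of_nonneg_left (hsNormC_mono hF (by norm_num))
        (by positivity))⟩
  obtain ⟨K₃, hK₃, H₃⟩ : ∃ K : ℝ, 0 ≤ K ∧ ∀ F : ℝ → ℂ, Rapid (fhat F) →
      √(wTwo s (fhat F)) ≤ K * hsNormC s F := ⟨_, by positivity, fun F hF => sqrt_wTwo_le hF s⟩
  obtain ⟨K₄, hK₄, H₄⟩ : ∃ K : ℝ, 0 ≤ K ∧ ∀ F : ℝ → ℂ, Rapid (fhat F) →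
      √(wTwo (s + 3) (fhat F)) ≤ K * hsNormC (s + 3) F :=
    ⟨_, by positivity, fun F hF => sqrt_wTwo_le hF (s + 3)⟩
  refine ⟨K₃ ^ 2 * K₁ ^ q + K₄ * K₃ * (K₂ * K₂ ^ (q - 1)), by positivity,
    fun f g h hf hg hh => ?_⟩
  have n0 := fun n F => hsNormC_nonneg n F
  have w0 := fun n u => wOne_nonneg n u
  have hQ : 0 ≤ hsNormC 7 f + hsNormC 7 g := add_nonneg (n0 _ _) (n0 _ _)
  have hQR : hsNormC 7 f + hsNormC 7 g ≤ hsNormC 8 f + hsNormC 8 g :=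
    add_le_add (hsNormC_mono hf (by norm_num)) (hsNormC_mono hg (by norm_num))
  have hA : wTwo s (fhat h) * wOne 7 (fhat f) ^ q ≤ K₃ ^ 2 * K₁ ^ q *
      (hsNormC s h ^ 2 * (hsNormC 8 f + hsNormC 8 g) ^ q) := by
    calc wTwo s (fhat h) * wOne 7 (fhat f) ^ q
        = √(wTwo s (fhat h)) ^ 2 * wOne 7 (fhat f) ^ q := by rw [Real.sq_sqrt (wTwo_nonneg _ _)]
      _ ≤ (K₃ * hsNormC s h) ^ 2 * (K₁ * (hsNormC 8 f + hsNormC 8 g)) ^ q := by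
          gcongr
          · exact pow_nonneg (w0 _ _) _
          · exact H₃ h hh
          · exact w0 _ _
          · exact (H₁ f hf).trans (mul_le_mul_of_nonneg_left
              (le_add_of_nonneg_right (n0 _ _)) hK₁)
      _ = _ := by rw [mul_pow, mul_pow]; ring
  have hB : √(wTwo (s + 3) (fhat g)) * √(wTwo s (fhat h)) *
      (wOne 3 (fhat h) * (wOne 3 (fhat f) + wOne 3 (fhat g)) ^ (q - 1)) ≤
      K₄ * K₃ * (K₂ * K₂ ^ (q - 1)) * (hsNormC s h * (hsNormC 7 h * hsNormC (s + 3) g) *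
        (hsNormC 7 f + hsNormC 7 g) ^ (q - 1)) := by
    calc _ ≤ (K₄ * hsNormC (s + 3) g) * (K₃ * hsNormC s h) *
          ((K₂ * hsNormC 7 h) * (K₂ * (hsNormC 7 f + hsNormC 7 g)) ^ (q - 1)) := by
          have h1 : (wOne 3 (fhat f) + wOne 3 (fhat g)) ^ (q - 1) ≤
              (K₂ * (hsNormC 7 f + hsNormC 7 g)) ^ (q - 1) := by
            refine pow_le_pow_left₀ (add_nonneg (w0 _ _) (w0 _ _)) ?_ _
            rw [mul_add]
            exact add_le_add (H₂ f hf) (H₂ g hg)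
          have h2 : 0 ≤ (wOne 3 (fhat f) + wOne 3 (fhat g)) ^ (q - 1) :=
            pow_nonneg (add_nonneg (w0 _ _) (w0 _ _)) _
          have h3 := mul_nonneg hK₂ (n0 7 h)
          refine mul_le_mul (mul_le_mul (H₄ g hg) (H₃ h hh) (Real.sqrt_nonneg _)
            (mul_nonneg hK₄ (n0 _ _))) (mul_le_mul (H₂ h hh) h1 h2 h3)
            (mul_nonneg (w0 _ _) h2)
            (mul_nonneg (mul_nonneg hK₄ (n0 _ _)) (mul_nonneg hK₃ (n0 _ _)))
      _ = _ := by rw [mul_pow]; ring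
  have hC := mul_pow_le_add_sq (X := hsNormC s h) (Y := hsNormC 7 h * hsNormC (s + 3) g)
    hQ hQR hq
  rw [mul_pow (hsNormC 7 h)] at hC
  have hK : 0 ≤ K₄ * K₃ * (K₂ * K₂ ^ (q - 1)) := by positivity
  have hT : 0 ≤ K₃ ^ 2 * K₁ ^ q * (hsNormC 7 h ^ 2 * hsNormC (s + 3) g ^ 2 *
      (hsNormC 7 f + hsNormC 7 g) ^ (q - 2)) := by positivity
  have hD := mul_le_mul_of_nonneg_left hC hK
  linarith

/-- **Key modified-energy estimate (Proposition multi_est).** For `s ≥ 7`, `p_j ≥ 3`: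
`|(−1)^s(N_j(f)−N_j(g), ∂_x^{2s}(f−g))_{L²} + P_{N_j}(f)‖∂_x^{s+1}(f−g)‖_{L²}²
  + Γ^{(p_j)}((ik_{p_j})^{s+1}(ik_{p_j+1})^{s+1}M_{NR,j}; f,…,f,f−g,f−g)|
≲ ‖f−g‖_{H^s}²(‖f‖_{H⁸}+‖g‖_{H⁸})^{p_j−1}
  + ‖f−g‖_{H⁷}²(‖f‖_{H^s}+‖g‖_{H^s})²(‖f‖_{H⁷}+‖g‖_{H⁷})^{p_j−3}
  + ‖f−g‖_{H⁷}²‖g‖_{H^{s+3}}²(‖f‖_{H⁷}+‖g‖_{H⁷})^{p_j−3}`. -/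
theorem multi_est (s : ℕ) (hs : 7 ≤ s) (lam : ℝ) (a b c d : ℕ) (p : ℕ)
    (hpdef : p = a + b + c + d) (hp3 : 3 ≤ p) (C₀ : ℝ) (hC₀ : 0 < C₀) :
    ∃ C : ℝ, 0 < C ∧ ∀ f g : ℝ → ℝ,
      ContDiff ℝ (⊤ : ℕ∞) f → Function.Periodic f (2 * Real.pi) →
      ContDiff ℝ (⊤ : ℕ∞) g → Function.Periodic g (2 * Real.pi) →
      ‖((((-1 : ℝ)) ^ s * ((2 * Real.pi)⁻¹ *
            ∫ x in (0:ℝ)..(2 * Real.pi),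
              (NjF lam a b c d f x - NjF lam a b c d g x) *
                iteratedDeriv (2 * s) (fun y => f y - g y) x) : ℝ) : ℂ)
        + ((PNj lam a b c d f * dxNormSq (s + 1) (cF (fun x => f x - g x)) : ℝ) : ℂ)
        + Gam p (fun k =>
            (Complex.I * (k (⟨p - 1, by omega⟩ : Fin (p + 1)) : ℂ)) ^ (s + 1)
            * (Complex.I * (k (Fin.last p) : ℂ)) ^ (s + 1)
            * MNR C₀ s p lam a b c k)
          (tup p (cF f) (cF (fun x => f x - g x)))‖
      ≤ C * (hsNormC s (cF (fun x => f x - g x)) ^ 2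
              * (hsNormC 8 (cF f) + hsNormC 8 (cF g)) ^ (p - 1)
          + hsNormC 7 (cF (fun x => f x - g x)) ^ 2
              * (hsNormC s (cF f) + hsNormC s (cF g)) ^ 2
              * (hsNormC 7 (cF f) + hsNormC 7 (cF g)) ^ (p - 3)
          + hsNormC 7 (cF (fun x => f x - g x)) ^ 2
              * hsNormC (s + 3) (cF g) ^ 2
              * (hsNormC 7 (cF f) + hsNormC 7 (cF g)) ^ (p - 3)) := by
  obtain ⟨q, rfl⟩ : ∃ q, p = q + 1 := ⟨p - 1, by omega⟩
  obtain ⟨C, hC, H⟩ := diffSummand_energy_bound s q hs C₀ hC₀ hpdef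
  obtain ⟨K, hK, HK⟩ := energy_rhs_bound s q (by omega)
  refine ⟨|lam| * (C * K) + 1, by positivity, fun f g hf hfp hg hgp => ?_⟩
  have hu := rapid_fhat hf hfp
  have hv := rapid_fhat hg hgp
  have hw := rapid_fhat (hf.sub hg) (hfp.sub hgp)
  have hd := fhat_cF_sub hf.continuous hg.continuous
  have hG := Gam_add_resonantSum (C₀ := C₀) (lam := lam) hs hpdef hu hw (fhat_cF_neg _)
  have hH := H _ _ hu hv
  rw [← hd] at hH
  rw [pairing_eq_tsum_diffSummand hpdef hf hfp hg hgp, Complex.ofReal_mul (PNj _ _ _ _ _ _),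
    PNj_eq_resonantSum hpdef hf hfp, add_assoc, mul_assoc (_ * _) (resonantSum _ _), hG,
    ← mul_add, norm_mul, Complex.norm_real, Real.norm_eq_abs]
  have n0 := fun n F => hsNormC_nonneg n F
  have hB := mul_le_mul_of_nonneg_left
    (hH.trans (mul_le_mul_of_nonneg_left (HK _ _ _ hu hv hw) hC)) (abs_nonneg lam)
  refine hB.trans ?_
  have e1 : q + 1 - 1 = q := rfl
  have e2 : q + 1 - 3 = q - 2 := by omega
  rw [e1, e2, ← mul_assoc, ← mul_assoc, mul_assoc (|lam|)]
  have hQ7 := add_nonneg (n0 7 (cF f)) (n0 7 (cF g))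
  have hQ8 := add_nonneg (n0 8 (cF f)) (n0 8 (cF g))
  refine mul_le_mul (le_add_of_nonneg_right zero_le_one) ?_ (by positivity) (by positivity)
  refine add_le_add_left (le_add_of_nonneg_right ?_) _
  positivity

end FifthOrderStmt18
end

section
/- (Comparison lemma for the modified energy.) Fix the nonlinearity data (λ_j, a_j, b_j, c_j, d_j), j = 1,…,j₀, with p_j ≥ 2, and γ₀ ≠ 0, γ₁, γ₂ ∈ ℝ. For every integer s ≥ 1 one can choose the constant C₀ in the definition of M_H sufficiently large and a constant C_s > 0 sufficiently large so that, defining for real-valued f, g ∈ C^∞(𝕋) F_s(f,g) := (1/2)‖∂_x^s(f−g)‖_{L²}² + (1/2)‖f−g‖_{L²}² (1 + C_s Σ_{j=1}^{j₀} ‖f‖_{H⁴}^{s(p_j−1)}) + Σ_{j=1}^{j₀} Γ^{(p_j)}( (ik_{p_j})^{s+1}(ik_{p_j+1})^{s+1} M_{NR,j} / Φ^{(p_j)} ; f,…,f,f−g,f−g ) (the division by Φ^{(p_j)} is well defined since Φ^{(p_j)} ≠ 0 on the support of M_{NR,j}), the quantity F_s(f,g) is real and satisfies F_s(f,g) ≤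 ‖∂_x^s(f−g)‖_{L²}² + ‖f−g‖_{L²}² (1 + C_s Σ_{j=1}^{j₀} ‖f‖_{H⁴}^{s(p_j−1)}) ≤ 4 F_s(f,g) for all real-valued f, g ∈ C^∞(𝕋). -/
/- Comparison lemma: the modified energy F_s(f,g) is real and comparable to
   ‖∂_x^s(f−g)‖² + ‖f−g‖²(1 + C_s Σ_j ‖f‖_{H⁴}^{s(p_j−1)}). -/

namespace FifthOrderStmt19

open scoped NNReal Classical

/-- Maximum of a nonnegative real-valued family over a finset (`0` if the finset is empty). -/
noncomputable def fmax {α : Type*} (s : Finset α) (f : α → ℝ) : ℝ :=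
  ((s.sup fun i => Real.toNNReal (f i) : ℝ≥0) : ℝ)

/-- Fourier coefficient of a `2π`-periodic function `f : ℝ → ℂ`:
`f̂(k) = (1/2π) ∫_0^{2π} f(x) e^{-ikx} dx`. -/
noncomputable def fhat (f : ℝ → ℂ) (k : ℤ) : ℂ :=
  (Complex.ofReal (2 * Real.pi))⁻¹ *
    ∫ x in (0:ℝ)..(2 * Real.pi), f x * Complex.exp (-Complex.I * (k : ℂ) * (x : ℂ))

/-- The multilinear form
`Γ^(p)(M; f₁,…,f_{p+1}) = Σ_{k ∈ Z₀^(p)} M(k) ∏_{l=1}^{p+1} f̂_l(k_l)`,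
where `Z₀^(p) = {k ∈ ℤ^{p+1} : k₁ + ⋯ + k_{p+1} = 0}` (indices shifted to start at `0`). -/
noncomputable def Gam (p : ℕ) (M : (Fin (p + 1) → ℤ) → ℂ) (F : Fin (p + 1) → ℝ → ℂ) : ℂ :=
  ∑' k : {k : Fin (p + 1) → ℤ // (∑ i, k i) = 0}, M k.1 * ∏ i, fhat (F i) (k.1 i)

/-- The argument tuple `(f, …, f, g, g)`: `p − 1` copies of `f` followed by two copies of `g`. -/
def tup (p : ℕ) (f g : ℝ → ℂ) : Fin (p + 1) → ℝ → ℂ :=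
  fun i => if (i : ℕ) < p - 1 then f else g

/-- Sobolev norm `‖f‖_{H^s} = (Σ_k (1+k²)^s |f̂(k)|²)^{1/2}`. -/
noncomputable def hsNormC (s : ℕ) (f : ℝ → ℂ) : ℝ :=
  Real.sqrt (∑' k : ℤ, (1 + (k : ℝ) ^ 2) ^ s * ‖fhat f k‖ ^ 2)

/-- `‖∂_x^m f‖_{L²}² = Σ_k k^{2m} |f̂(k)|²`. -/
noncomputable def dxNormSq (m : ℕ) (f : ℝ → ℂ) : ℝ :=
  ∑' k : ℤ, (k : ℝ) ^ (2 * m) * ‖fhat f k‖ ^ 2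

/-- Complexification of a real-valued function. -/
def cF (f : ℝ → ℝ) : ℝ → ℂ := fun x => (f x : ℂ)

/-- `k_{(1,p-1)} = k₁ + ⋯ + k_{p-1}` (with indices shifted to start at `0`). -/
def ksum1 (p : ℕ) (k : Fin (p + 1) → ℤ) : ℤ :=
  ∑ i ∈ Finset.univ.filter (fun i : Fin (p + 1) => (i : ℕ) < p - 1), k i

/-- The high-frequency cut-off `M_H^(p)` with constant `C₀`:
`1` when `min{|k_p|^{4/5}, |k_{p+1}|^{4/5}} ≥ C₀ max{|k₁|,…,|k_{p-1}|}`, else `0`. -/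
noncomputable def MH (C₀ : ℝ) (p : ℕ) (k : Fin (p + 1) → ℤ) : ℂ :=
  if C₀ * fmax (Finset.univ.filter (fun i : Fin (p + 1) => (i : ℕ) < p - 1))
        (fun i => |(k i : ℝ)|)
      ≤ min (|(k (⟨p - 1, by omega⟩ : Fin (p + 1)) : ℝ)| ^ ((4:ℝ)/5))
            (|(k (Fin.last p) : ℝ)| ^ ((4:ℝ)/5))
  then 1 else 0

/-- The non-zero-sum cut-off `M_NZ^(p)`: `1` when `k_{(1,p-1)} ≠ 0`, else `0`. -/
def MNZ (p : ℕ) (k : Fin (p + 1) → ℤ) : ℂ :=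
  if ksum1 p k ≠ 0 then 1 else 0

/-- `D_{a,b,c}(k) = ∏_{l=1}^{a}(ik_l)³ ∏_{l=a+1}^{a+b}(ik_l)² ∏_{l=a+b+1}^{a+b+c}(ik_l)`. -/
noncomputable def Dabc (p a b c : ℕ) (k : Fin (p + 1) → ℤ) : ℂ :=
  (∏ i ∈ Finset.univ.filter (fun i : Fin (p + 1) => (i : ℕ) < a),
      (Complex.I * (k i : ℂ)) ^ 3)
    * (∏ i ∈ Finset.univ.filter (fun i : Fin (p + 1) => a ≤ (i : ℕ) ∧ (i : ℕ) < a + b),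
        (Complex.I * (k i : ℂ)) ^ 2)
    * (∏ i ∈ Finset.univ.filter
          (fun i : Fin (p + 1) => a + b ≤ (i : ℕ) ∧ (i : ℕ) < a + b + c),
        (Complex.I * (k i : ℂ)))

/-- The multiplier
`M_{NR} = M_H M_NZ λ ((s−3/2) a (ik_{(1,p-1)}) D_{a-1,b,c} + b D_{a,b-1,c})`
(the conventions for `a = 0` resp. `b = 0` are automatic since the corresponding
terms carry the factors `a` resp. `b`). -/
noncomputable def MNR (C₀ : ℝ) (s p : ℕ) (lam : ℝ) (a b c : ℕ)
    (k : Fin (p + 1) → ℤ) : ℂ :=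
  MH C₀ p k * MNZ p k * (lam : ℂ) *
    (((s : ℂ) - 3/2) * (a : ℂ) * (Complex.I * (ksum1 p k : ℂ)) * Dabc p (a - 1) b c k
      + (b : ℂ) * Dabc p a (b - 1) c k)

/-- `P_{N_j}(f) = (λ_j b_j/2π) ∫_𝕋 (∂_x³f)^{a_j}(∂_x²f)^{b_j-1}(∂_xf)^{c_j}f^{d_j} dx`. -/
noncomputable def PNj (lam : ℝ) (a b c d : ℕ) (f : ℝ → ℝ) : ℝ :=
  (lam * (b : ℝ) / (2 * Real.pi)) *
    ∫ x in (0:ℝ)..(2 * Real.pi),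
      (iteratedDeriv 3 f x) ^ a * (iteratedDeriv 2 f x) ^ (b - 1) *
        (deriv f x) ^ c * (f x) ^ d

/-- The linear phase `φ(k) = i(γ₀k⁵ − γ₁k³ + γ₂k)`. -/
noncomputable def philin (γ0 γ1 γ2 : ℝ) (k : ℤ) : ℂ :=
  Complex.I * ((γ0 : ℂ) * (k : ℂ)^5 - (γ1 : ℂ) * (k : ℂ)^3 + (γ2 : ℂ) * (k : ℂ))

/-- The resonance function `Φ^(p)(k) = φ(k_{(1,p)}) − Σ_{l=1}^p φ(k_l)`
(indices shifted to start at `0`). -/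
noncomputable def PhiF (γ0 γ1 γ2 : ℝ) (p : ℕ) (k : Fin (p + 1) → ℤ) : ℂ :=
  philin γ0 γ1 γ2 (∑ i ∈ Finset.univ.filter (fun i : Fin (p + 1) => (i : ℕ) < p), k i)
    - ∑ i ∈ Finset.univ.filter (fun i : Fin (p + 1) => (i : ℕ) < p), philin γ0 γ1 γ2 (k i)

lemma summable_one_add_sq_inv : Summable fun k : ℤ => (1 + (k : ℝ) ^ 2)⁻¹ := by
  have h := Real.summable_one_div_int_pow (p := 2) |>.2 (by norm_num)
  refine Summable.of_norm_bounded_eventually h ?_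
  have : ∀ᶠ k : ℤ in Filter.cofinite, k ≠ 0 := by
    rw [Filter.eventually_cofinite]
    simp
  filter_upwards [this] with k hk
  have hk' : (0 : ℝ) < (k : ℝ) ^ 2 := by positivity
  rw [Real.norm_of_nonneg (by positivity), one_div]
  exact inv_anti₀ hk' (by linarith)

lemma fhat_deriv {F : ℝ → ℂ} (hF : ContDiff ℝ 1 F) (hper : Function.Periodic F (2 * Real.pi))
    (k : ℤ) : fhat (deriv F) k = Complex.I * k * fhat F k := by
  have hexp : ∀ x : ℝ, HasDerivAt (fun x : ℝ => Complex.exp (-Complex.I * (k : ℂ) * (x : ℂ)))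
      (Complex.exp (-Complex.I * (k : ℂ) * (x : ℂ)) * (-Complex.I * k)) x := by
    intro x
    have h1 : HasDerivAt (fun x : ℝ => -Complex.I * (k : ℂ) * (x : ℂ)) (-Complex.I * k) x := by
      simpa using (Complex.ofRealCLM.hasDerivAt (x := x)).const_mul (-Complex.I * (k : ℂ))
    exact h1.cexp
  have hparts := intervalIntegral.integral_mul_deriv_eq_deriv_mul (a := 0) (b := 2 * Real.pi)
    (u := fun x : ℝ => Complex.exp (-Complex.I * (k : ℂ) * (x : ℂ))) (v := F)
    (u' := fun x : ℝ => Complex.exp (-Complex.I * (k : ℂ) * (x : ℂ)) * (-Complex.I * k))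
    (v' := deriv F) (fun x _ => hexp x)
    (fun x _ => (hF.differentiable one_ne_zero x).hasDerivAt)
    (Continuous.intervalIntegrable (by fun_prop) _ _)
    ((hF.continuous_deriv le_rfl).intervalIntegrable _ _)
  have hbd : Complex.exp (-Complex.I * (k : ℂ) * ((2 * Real.pi : ℝ) : ℂ)) = 1 := by
    rw [Complex.exp_eq_one_iff]
    refine ⟨-k, ?_⟩
    push_cast
    ring
  have hF0 : F (2 * Real.pi) = F 0 := by simpa using hper 0
  rw [hbd, hF0] at hparts
  simp only [Complex.ofReal_zero, mul_zero, Complex.exp_zero, one_mul, sub_self, zero_sub]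
    at hparts
  unfold fhat
  have e1 : ∫ x in (0 : ℝ)..(2 * Real.pi), deriv F x * Complex.exp (-Complex.I * k * x) =
      ∫ x in (0 : ℝ)..(2 * Real.pi), Complex.exp (-Complex.I * k * x) * deriv F x := by
    simp only [mul_comm]
  have e2 : ∫ x in (0 : ℝ)..(2 * Real.pi),
        Complex.exp (-Complex.I * k * x) * (-Complex.I * k) * F x =
      (-Complex.I * k) * ∫ x in (0 : ℝ)..(2 * Real.pi), F x * Complex.exp (-Complex.I * k * x) := by
    rw [← intervalIntegral.integral_const_mul]
    congr 1
    ext x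
    ring
  rw [e1, hparts, e2]
  ring

lemma exists_norm_fhat_le {F : ℝ → ℂ} :
    ∃ C : ℝ, 0 ≤ C ∧ ∀ k : ℤ, ‖fhat F k‖ ≤ C := by
  have hpi : (0 : ℝ) ≤ 2 * Real.pi := by positivity
  refine ⟨(2 * Real.pi)⁻¹ * ∫ x in (0 : ℝ)..(2 * Real.pi), ‖F x‖, ?_, fun k => ?_⟩
  · exact mul_nonneg (by positivity)
      (intervalIntegral.integral_nonneg hpi fun x _ => norm_nonneg _)
  · unfold fhat
    rw [norm_mul, norm_inv, Complex.norm_real, Real.norm_of_nonneg hpi]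
    gcongr
    refine (intervalIntegral.norm_integral_le_integral_norm hpi).trans_eq ?_
    congr 1
    ext x
    rw [norm_mul, show -Complex.I * (k : ℂ) * (x : ℂ) = ((-(k * x) : ℝ) : ℂ) * Complex.I by
      push_cast; ring, Complex.norm_exp_ofReal_mul_I, mul_one]

lemma exists_pow_mul_norm_fhat_le (N : ℕ) : ∀ {F : ℝ → ℂ}, ContDiff ℝ (⊤ : ℕ∞) F →
    Function.Periodic F (2 * Real.pi) →
    ∃ C : ℝ, 0 ≤ C ∧ ∀ k : ℤ, |(k : ℝ)| ^ N * ‖fhat F k‖ ≤ C := by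
  induction N with
  | zero => intro F _ _; simpa using exists_norm_fhat_le (F := F)
  | succ N ih =>
    intro F hF hper
    have hF' : ContDiff ℝ (⊤ : ℕ∞) (deriv F) := (contDiff_infty_iff_deriv.1 hF).2
    have hper' : Function.Periodic (deriv F) (2 * Real.pi) := by
      intro x
      rw [← deriv_comp_add_const]
      congr 1
      ext y
      exact hper y
    obtain ⟨C, hC, h⟩ := ih hF' hper'
    refine ⟨C, hC, fun k => ?_⟩
    have := h k
    rw [fhat_deriv (hF.of_le (by exact_mod_cast le_top)) hper, norm_mul, norm_mul,
      Complex.norm_I, one_mul,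
      Complex.norm_intCast] at this
    rw [pow_succ, mul_assoc]
    exact this

lemma summable_weighted_fhat_sq {F : ℝ → ℂ} (hF : ContDiff ℝ (⊤ : ℕ∞) F)
    (hper : Function.Periodic F (2 * Real.pi)) (m : ℕ) :
    Summable fun k : ℤ => (1 + (k : ℝ) ^ 2) ^ m * ‖fhat F k‖ ^ 2 := by
  obtain ⟨C₁, hC₁, h₁⟩ := exists_pow_mul_norm_fhat_le 0 hF hper
  obtain ⟨C₂, hC₂, h₂⟩ := exists_pow_mul_norm_fhat_le (2 * (m + 1)) hF hper
  set C := 2 ^ m * (C₁ + C₂)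
  have hC : 0 ≤ C := by positivity
  have key : ∀ k : ℤ, (1 + (k : ℝ) ^ 2) ^ (m + 1) * ‖fhat F k‖ ≤ C := by
    intro k
    have h := add_pow_le (zero_le_one (α := ℝ)) (sq_nonneg (k : ℝ)) (m + 1)
    have h1 := h₁ k
    have h2 := h₂ k
    rw [pow_mul, sq_abs] at h2
    simp only [pow_zero, one_mul] at h1
    simp only [one_pow, Nat.add_sub_cancel] at h
    calc (1 + (k : ℝ) ^ 2) ^ (m + 1) * ‖fhat F k‖
        ≤ (2 ^ m * (1 + ((k : ℝ) ^ 2) ^ (m + 1))) * ‖fhat F k‖ := by gcongr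
      _ = 2 ^ m * (‖fhat F k‖ + ((k : ℝ) ^ 2) ^ (m + 1) * ‖fhat F k‖) := by ring
      _ ≤ 2 ^ m * (C₁ + C₂) := by gcongr
  refine Summable.of_nonneg_of_le (fun k => by positivity) (fun k => ?_)
    (summable_one_add_sq_inv.mul_left (C ^ 2))
  have hk : 0 < 1 + (k : ℝ) ^ 2 := by positivity
  have hk1 : 1 ≤ (1 + (k : ℝ) ^ 2) ^ (m + 1) := one_le_pow₀ (by nlinarith)
  rw [← div_eq_mul_inv, le_div_iff₀ hk]
  calc (1 + (k : ℝ) ^ 2) ^ m * ‖fhat F k‖ ^ 2 * (1 + (k : ℝ) ^ 2)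
      = (1 + (k : ℝ) ^ 2) ^ (m + 1) * ‖fhat F k‖ ^ 2 * 1 := by ring
    _ ≤ (1 + (k : ℝ) ^ 2) ^ (m + 1) * ‖fhat F k‖ ^ 2 * (1 + (k : ℝ) ^ 2) ^ (m + 1) := by
      exact mul_le_mul_of_nonneg_left hk1 (by positivity)
    _ = ((1 + (k : ℝ) ^ 2) ^ (m + 1) * ‖fhat F k‖) ^ 2 := by ring
    _ ≤ C ^ 2 := by gcongr; exact key k

lemma summable_pow_mul_fhat_sq {F : ℝ → ℂ} (hF : ContDiff ℝ (⊤ : ℕ∞) F)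
    (hper : Function.Periodic F (2 * Real.pi)) (m : ℕ) :
    Summable fun k : ℤ => (k : ℝ) ^ (2 * m) * ‖fhat F k‖ ^ 2 := by
  refine Summable.of_nonneg_of_le (fun k => ?_) (fun k => ?_) (summable_weighted_fhat_sq hF hper m)
  · rw [pow_mul]; positivity
  · rw [pow_mul]; gcongr; linarith

/-- The Japanese bracket `⟨k⟩ = (1 + k²)^{1/2}`. -/
noncomputable def bracket (k : ℤ) : ℝ := Real.sqrt (1 + (k : ℝ) ^ 2)

lemma bracket_sq (k : ℤ) : bracket k ^ 2 = 1 + (k : ℝ) ^ 2 :=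
  Real.sq_sqrt (by positivity)

lemma one_le_bracket (k : ℤ) : 1 ≤ bracket k :=
  Real.one_le_sqrt.2 (by nlinarith [sq_nonneg (k : ℝ)])

lemma abs_le_bracket (k : ℤ) : |(k : ℝ)| ≤ bracket k :=
  Real.abs_le_sqrt (by linarith)

lemma tsum_bracket_cube_fhat_le {F : ℝ → ℂ} (hF : ContDiff ℝ (⊤ : ℕ∞) F)
    (hper : Function.Periodic F (2 * Real.pi)) :
    ∑' k : ℤ, ENNReal.ofReal (bracket k ^ 3 * ‖fhat F k‖) ≤
      ENNReal.ofReal (Real.sqrt (∑' k : ℤ, (1 + (k : ℝ) ^ 2)⁻¹) * hsNormC 4 F) := by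
  refine ENNReal.summable.tsum_le_of_sum_le fun S => ?_
  have hb : ∀ k, 0 < bracket k := fun k => zero_lt_one.trans_le (one_le_bracket k)
  rw [← ENNReal.ofReal_sum_of_nonneg fun k _ => by have := hb k; positivity]
  apply ENNReal.ofReal_le_ofReal
  unfold hsNormC
  rw [← Real.sqrt_mul (tsum_nonneg fun k => by positivity)]
  apply Real.le_sqrt_of_sq_le
  have hCS := Finset.sum_mul_sq_le_sq_mul_sq S (fun k => (bracket k)⁻¹)
    (fun k => bracket k ^ 4 * ‖fhat F k‖)
  have e1 : ∀ k, (bracket k)⁻¹ * (bracket k ^ 4 * ‖fhat F k‖) = bracket k ^ 3 * ‖fhat F k‖ := by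
    intro k
    have := (hb k).ne'
    field_simp
  have e2 : ∀ k, (bracket k)⁻¹ ^ 2 = (1 + (k : ℝ) ^ 2)⁻¹ := by
    intro k; rw [inv_pow, bracket_sq]
  have e3 : ∀ k, (bracket k ^ 4 * ‖fhat F k‖) ^ 2 = (1 + (k : ℝ) ^ 2) ^ 4 * ‖fhat F k‖ ^ 2 := by
    intro k; rw [← bracket_sq]; ring
  simp only [e1, e2, e3] at hCS
  refine hCS.trans ?_
  gcongr
  · exact summable_one_add_sq_inv.sum_le_tsum S fun k _ => by positivity
  · exact (summable_weighted_fhat_sq hF hper 4).sum_le_tsum S fun k _ => by positivity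

lemma tsum_pi_prod (w : ℤ → ENNReal) (n : ℕ) :
    ∑' q : Fin n → ℤ, ∏ i, w (q i) = (∑' k, w k) ^ n := by
  induction n with
  | zero => simp
  | succ n ih =>
    rw [← (Fin.consEquiv fun _ => ℤ).tsum_eq, ENNReal.summable.tsum_prod' fun _ => ENNReal.summable]
    simp only [Fin.consEquiv_apply, Fin.prod_univ_succ, Fin.cons_zero, Fin.cons_succ,
      ENNReal.tsum_mul_left, ENNReal.tsum_mul_right, ih]
    rw [pow_succ, mul_comm]

lemma tsum_zero_sum_le (n : ℕ) (w v : ℤ → ENNReal)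
    (e : {k : Fin (n + 2) → ℤ // ∑ i, k i = 0} → ℤ)
    (he : Function.Injective fun k : {k : Fin (n + 2) → ℤ // ∑ i, k i = 0} =>
      ((fun i : Fin n => k.1 i.castSucc.castSucc), e k)) :
    ∑' k : {k : Fin (n + 2) → ℤ // ∑ i, k i = 0},
        (∏ i : Fin n, w (k.1 i.castSucc.castSucc)) * v (e k) ≤
      (∑' k, w k) ^ n * ∑' k, v k := by
  have h := ENNReal.tsum_comp_le_tsum_of_injective he
    (fun z : (Fin n → ℤ) × ℤ => (∏ i, w (z.1 i)) * v z.2)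
  refine h.trans_eq ?_
  rw [ENNReal.summable.tsum_prod' fun _ => ENNReal.summable]
  simp only [ENNReal.tsum_mul_left, ENNReal.tsum_mul_right, tsum_pi_prod]

lemma zero_sum_split {n : ℕ} {k : Fin (n + 2) → ℤ} (hk : ∑ i, k i = 0) :
    ∑ i : Fin n, k i.castSucc.castSucc + k (Fin.last n).castSucc + k (Fin.last (n + 1)) = 0 := by
  rw [← hk, Fin.sum_univ_castSucc, Fin.sum_univ_castSucc]

lemma injective_zero_sum_castSucc (n : ℕ) :
    Function.Injective fun k : {k : Fin (n + 2) → ℤ // ∑ i, k i = 0} =>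
      ((fun i : Fin n => k.1 i.castSucc.castSucc), k.1 (Fin.last n).castSucc) := by
  rintro ⟨k, hk⟩ ⟨l, hl⟩ h
  simp only [Prod.mk.injEq, funext_iff] at h
  have hk' := zero_sum_split hk
  have hl' := zero_sum_split hl
  simp only [h.1, h.2] at hk'
  ext i
  refine Fin.lastCases ?_ (fun i => Fin.lastCases ?_ (fun i => ?_) i) i
  · change k _ = l _; linarith
  · exact h.2
  · exact h.1 i

lemma injective_zero_sum_last (n : ℕ) :
    Function.Injective fun k : {k : Fin (n + 2) → ℤ // ∑ i, k i = 0} =>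
      ((fun i : Fin n => k.1 i.castSucc.castSucc), k.1 (Fin.last (n + 1))) := by
  rintro ⟨k, hk⟩ ⟨l, hl⟩ h
  simp only [Prod.mk.injEq, funext_iff] at h
  have hk' := zero_sum_split hk
  have hl' := zero_sum_split hl
  simp only [h.1, h.2] at hk'
  ext i
  refine Fin.lastCases ?_ (fun i => Fin.lastCases ?_ (fun i => ?_) i) i
  · exact h.2
  · change k _ = l _; linarith
  · exact h.1 i

lemma enorm_Gam_le (n r : ℕ) (M : (Fin (n + 2) → ℤ) → ℂ) (f h : ℝ → ℂ) (B : ℝ) (hB : 0 ≤ B)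
    (hM : ∀ k : Fin (n + 2) → ℤ, ∑ i, k i = 0 →
      ‖M k‖ ≤ B * (∏ i : Fin n, bracket (k i.castSucc.castSucc) ^ 3) *
        (|(k (Fin.last n).castSucc : ℝ)| ^ r * |(k (Fin.last (n + 1)) : ℝ)| ^ r)) :
    ‖Gam (n + 1) M (tup (n + 1) f h)‖ₑ ≤
      ENNReal.ofReal B * ((∑' k : ℤ, ENNReal.ofReal (bracket k ^ 3 * ‖fhat f k‖)) ^ n *
        ∑' k : ℤ, ENNReal.ofReal ((k : ℝ) ^ (2 * r) * ‖fhat h k‖ ^ 2)) := by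
  have hb : ∀ k, 0 ≤ bracket k := fun k => zero_le_one.trans (one_le_bracket k)
  set w : ℤ → ENNReal := fun k => ENNReal.ofReal (bracket k ^ 3 * ‖fhat f k‖) with hw
  set v : ℤ → ENNReal := fun k => ENNReal.ofReal ((k : ℝ) ^ (2 * r) * ‖fhat h k‖ ^ 2) with hv
  have hterm : ∀ k : {k : Fin (n + 2) → ℤ // ∑ i, k i = 0},
      ‖M k.1 * ∏ i, fhat (tup (n + 1) f h i) (k.1 i)‖ₑ ≤
        ENNReal.ofReal B *
          ((∏ i : Fin n, w (k.1 i.castSucc.castSucc)) * (2⁻¹ * v (k.1 (Fin.last n).castSucc)) +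
            (∏ i : Fin n, w (k.1 i.castSucc.castSucc)) * (2⁻¹ * v (k.1 (Fin.last (n + 1))))) := by
    rintro ⟨k, hk⟩
    simp only
    have h2 : (2⁻¹ : ENNReal) = ENNReal.ofReal 2⁻¹ := by
      rw [ENNReal.ofReal_inv_of_pos (by norm_num)]; simp
    rw [hw, hv, h2, ← ofReal_norm]
    simp only
    rw [← ENNReal.ofReal_prod_of_nonneg (fun i _ => mul_nonneg (pow_nonneg (hb _) _) (norm_nonneg _)),
      ← mul_add]
    have hsq : ∀ x : ℤ, 0 ≤ (x : ℝ) ^ (2 * r) * ‖fhat h x‖ ^ 2 := fun x => by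
      rw [pow_mul]; positivity
    have hP : 0 ≤ ∏ i : Fin n, (bracket (k i.castSucc.castSucc) ^ 3 *
        ‖fhat f (k i.castSucc.castSucc)‖) :=
      Finset.prod_nonneg fun i _ => mul_nonneg (pow_nonneg (hb _) _) (norm_nonneg _)
    rw [← ENNReal.ofReal_mul (by norm_num), ← ENNReal.ofReal_mul (by norm_num),
      ← ENNReal.ofReal_add (mul_nonneg (by norm_num) (hsq _)) (mul_nonneg (by norm_num) (hsq _)),
      ← ENNReal.ofReal_mul hP, ← ENNReal.ofReal_mul hB]
    apply ENNReal.ofReal_le_ofReal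
    rw [norm_mul, norm_prod, Fin.prod_univ_castSucc, Fin.prod_univ_castSucc]
    simp only [tup, Fin.val_castSucc, Fin.is_lt, Nat.add_sub_cancel, if_true, Fin.val_last,
      lt_irrefl, if_false, not_lt.2 (Nat.le_succ n)]
    set x := k (Fin.last n).castSucc
    set z := k (Fin.last (n + 1))
    have hMk := hM k hk
    rw [Finset.prod_mul_distrib] at hP ⊢
    have hQ : 0 ≤ ∏ i : Fin n, bracket (k i.castSucc.castSucc) ^ 3 :=
      Finset.prod_nonneg fun i _ => pow_nonneg (hb _) _
    have hR : 0 ≤ ∏ i : Fin n, ‖fhat f (k i.castSucc.castSucc)‖ :=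
      Finset.prod_nonneg fun i _ => norm_nonneg _
    have hx : (x : ℝ) ^ (2 * r) = (|(x : ℝ)| ^ r) ^ 2 := by
      rw [← pow_mul, mul_comm r 2, pow_mul, pow_mul, sq_abs]
    have hz : (z : ℝ) ^ (2 * r) = (|(z : ℝ)| ^ r) ^ 2 := by
      rw [← pow_mul, mul_comm r 2, pow_mul, pow_mul, sq_abs]
    rw [hx, hz]
    generalize (∏ i : Fin n, bracket (k i.castSucc.castSucc) ^ 3) = Q at *
    generalize (∏ i : Fin n, ‖fhat f (k i.castSucc.castSucc)‖) = R at *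
    generalize |(x : ℝ)| ^ r = X at *
    generalize |(z : ℝ)| ^ r = Z at *
    calc ‖M k‖ * (R * ‖fhat h x‖ * ‖fhat h z‖)
        ≤ (B * Q * (X * Z)) * (R * ‖fhat h x‖ * ‖fhat h z‖) := by gcongr
      _ = B * (Q * R * ((X * ‖fhat h x‖) * (Z * ‖fhat h z‖))) := by ring
      _ ≤ B * (Q * R * (2⁻¹ * (X ^ 2 * ‖fhat h x‖ ^ 2) + 2⁻¹ * (Z ^ 2 * ‖fhat h z‖ ^ 2))) := by
        gcongr
        nlinarith [sq_nonneg (X * ‖fhat h x‖ - Z * ‖fhat h z‖)]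
  unfold Gam
  have hle : ‖∑' k : {k : Fin (n + 1 + 1) → ℤ // ∑ i, k i = 0},
        M k.1 * ∏ i, fhat (tup (n + 1) f h i) (k.1 i)‖ₑ ≤
      ∑' k : {k : Fin (n + 1 + 1) → ℤ // ∑ i, k i = 0},
        ‖M k.1 * ∏ i, fhat (tup (n + 1) f h i) (k.1 i)‖ₑ := enorm_tsum_le_tsum_enorm
  refine hle.trans ((ENNReal.tsum_le_tsum hterm).trans ?_)
  rw [ENNReal.tsum_mul_left, ENNReal.tsum_add]
  gcongr
  have h1 := tsum_zero_sum_le n w (fun x => 2⁻¹ * v x) _ (injective_zero_sum_castSucc n)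
  have h2 := tsum_zero_sum_le n w (fun x => 2⁻¹ * v x) _ (injective_zero_sum_last n)
  refine (add_le_add h1 h2).trans_eq ?_
  rw [ENNReal.tsum_mul_left, ← mul_add, ← add_mul, ENNReal.inv_two_add_inv_two, one_mul]

lemma norm_Gam_le (n r : ℕ) (M : (Fin (n + 2) → ℤ) → ℂ) {f h : ℝ → ℂ}
    (hf : ContDiff ℝ (⊤ : ℕ∞) f) (hfper : Function.Periodic f (2 * Real.pi))
    (hh : ContDiff ℝ (⊤ : ℕ∞) h) (hhper : Function.Periodic h (2 * Real.pi))
    (B : ℝ) (hB : 0 ≤ B)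
    (hM : ∀ k : Fin (n + 2) → ℤ, ∑ i, k i = 0 →
      ‖M k‖ ≤ B * (∏ i : Fin n, bracket (k i.castSucc.castSucc) ^ 3) *
        (|(k (Fin.last n).castSucc : ℝ)| ^ r * |(k (Fin.last (n + 1)) : ℝ)| ^ r)) :
    ‖Gam (n + 1) M (tup (n + 1) f h)‖ ≤
      B * Real.sqrt (∑' k : ℤ, (1 + (k : ℝ) ^ 2)⁻¹) ^ n * hsNormC 4 f ^ n * dxNormSq r h := by
  have key := enorm_Gam_le n r M f h B hB hM
  have hsq : ∀ x : ℤ, 0 ≤ (x : ℝ) ^ (2 * r) * ‖fhat h x‖ ^ 2 := fun x => by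
    rw [pow_mul]; positivity
  have hH : 0 ≤ hsNormC 4 f := Real.sqrt_nonneg _
  rw [← ENNReal.ofReal_tsum_of_nonneg hsq (summable_pow_mul_fhat_sq hh hhper r)] at key
  have h2 : ‖Gam (n + 1) M (tup (n + 1) f h)‖ₑ ≤ ENNReal.ofReal
      (B * ((Real.sqrt (∑' k : ℤ, (1 + (k : ℝ) ^ 2)⁻¹) * hsNormC 4 f) ^ n * dxNormSq r h)) := by
    refine key.trans ?_
    rw [ENNReal.ofReal_mul hB, ENNReal.ofReal_mul (by positivity),
      ENNReal.ofReal_pow (by positivity)]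
    gcongr
    · exact tsum_bracket_cube_fhat_le hf hfper
    · exact le_rfl
  rw [← ofReal_norm, ENNReal.ofReal_le_ofReal_iff
    (mul_nonneg hB (mul_nonneg (by positivity) (show 0 ≤ dxNormSq r h from tsum_nonneg hsq)))] at h2
  refine h2.trans_eq ?_
  rw [mul_pow]
  ring

lemma dxNormSq_interpolation {h : ℝ → ℂ} (hh : ContDiff ℝ (⊤ : ℕ∞) h)
    (hper : Function.Periodic h (2 * Real.pi)) (r : ℕ) {ε X : ℝ} (hε : 0 < ε) (hX : 0 ≤ X) :
    X * dxNormSq r h ≤ ε * dxNormSq (r + 1) h + ε⁻¹ ^ r * X ^ (r + 1) * dxNormSq 0 h := by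
  unfold dxNormSq
  have s0 := summable_pow_mul_fhat_sq hh hper
  rw [← tsum_mul_left, ← tsum_mul_left, ← tsum_mul_left,
    ← ((s0 (r + 1)).mul_left _).tsum_add ((s0 0).mul_left _)]
  refine ((s0 r).mul_left _).tsum_le_tsum (fun k => ?_)
    (((s0 (r + 1)).mul_left _).add ((s0 0).mul_left _))
  have key : X * (k : ℝ) ^ (2 * r) ≤ ε * (k : ℝ) ^ (2 * (r + 1)) + ε⁻¹ ^ r * X ^ (r + 1) := by
    rw [pow_mul, pow_mul]
    have ht : 0 ≤ (k : ℝ) ^ 2 := sq_nonneg _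
    generalize (k : ℝ) ^ 2 = t at *
    rcases le_total X (ε * t) with h1 | h1
    · have : X * t ^ r ≤ ε * t * t ^ r := by gcongr
      have h3 : 0 ≤ ε⁻¹ ^ r * X ^ (r + 1) := by positivity
      rw [pow_succ' t]
      linarith
    · have h2 : t ≤ ε⁻¹ * X := by
        rw [inv_mul_eq_div, le_div_iff₀ hε]; linarith
      have : X * t ^ r ≤ X * (ε⁻¹ * X) ^ r := by gcongr
      have h3 : 0 ≤ ε * t ^ (r + 1) := by positivity
      rw [mul_pow] at this
      have h4 : X * (ε⁻¹ ^ r * X ^ r) = ε⁻¹ ^ r * X ^ (r + 1) := by ring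
      linarith
  calc X * ((k : ℝ) ^ (2 * r) * ‖fhat h k‖ ^ 2)
      = (X * (k : ℝ) ^ (2 * r)) * ‖fhat h k‖ ^ 2 := by ring
    _ ≤ (ε * (k : ℝ) ^ (2 * (r + 1)) + ε⁻¹ ^ r * X ^ (r + 1)) * ‖fhat h k‖ ^ 2 := by gcongr
    _ = _ := by simp only [mul_zero, pow_zero]; ring

lemma fhat_cF_neg (f : ℝ → ℝ) (k : ℤ) :
    fhat (cF f) (-k) = (starRingEnd ℂ) (fhat (cF f) k) := by
  unfold fhat
  rw [map_mul, map_inv₀, Complex.conj_ofReal]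
  congr 1
  rw [← intervalIntegral.intervalIntegral_conj]
  congr 1
  ext x
  simp [cF, ← Complex.exp_conj]

lemma Gam_im_eq_zero (p : ℕ) (M : (Fin (p + 1) → ℤ) → ℂ) (F : Fin (p + 1) → ℝ → ℂ)
    (hM : ∀ k, M (-k) = (starRingEnd ℂ) (M k))
    (hF : ∀ i k, fhat (F i) (-k) = (starRingEnd ℂ) (fhat (F i) k)) : (Gam p M F).im = 0 := by
  rw [← Complex.conj_eq_iff_im]
  unfold Gam
  rw [Complex.conj_tsum]
  let e : {k : Fin (p + 1) → ℤ // ∑ i, k i = 0} ≃ {k : Fin (p + 1) → ℤ // ∑ i, k i = 0} :=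
    (Equiv.neg _).subtypeEquiv fun k => by simp
  rw [← e.tsum_eq]
  congr 1
  ext k
  have he : (e k).1 = -k.1 := rfl
  rw [he, hM, map_mul, map_prod, Complex.conj_conj]
  congr 1
  refine Finset.prod_congr rfl fun i _ => ?_
  rw [Pi.neg_apply, hF, Complex.conj_conj]

lemma Dabc_neg (p a b c : ℕ) (k : Fin (p + 1) → ℤ) :
    Dabc p a b c (-k) = (starRingEnd ℂ) (Dabc p a b c k) := by
  simp [Dabc, map_prod]

lemma ksum1_neg (p : ℕ) (k : Fin (p + 1) → ℤ) : ksum1 p (-k) = -ksum1 p k := by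
  simp [ksum1]

lemma MNR_neg (C₀ : ℝ) (s p : ℕ) (lam : ℝ) (a b c : ℕ) (k : Fin (p + 1) → ℤ) :
    MNR C₀ s p lam a b c (-k) = (starRingEnd ℂ) (MNR C₀ s p lam a b c k) := by
  have h1 : MH C₀ p (-k) = (starRingEnd ℂ) (MH C₀ p k) := by
    simp [MH, apply_ite (starRingEnd ℂ)]
  have h2 : MNZ p (-k) = (starRingEnd ℂ) (MNZ p k) := by
    simp [MNZ, ksum1_neg, apply_ite (starRingEnd ℂ)]
  have h3 : (starRingEnd ℂ) (2 : ℂ) = 2 := Complex.conj_ofReal 2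
  have h4 : (starRingEnd ℂ) (3 : ℂ) = 3 := Complex.conj_ofReal 3
  simp only [MNR, h1, h2, Dabc_neg, ksum1_neg, map_mul, map_add, map_sub, map_natCast, map_div₀,
    Complex.conj_I, Complex.conj_ofReal, map_intCast, h3, h4, Int.cast_neg]
  ring

lemma philin_neg (γ0 γ1 γ2 : ℝ) (k : ℤ) :
    philin γ0 γ1 γ2 (-k) = (starRingEnd ℂ) (philin γ0 γ1 γ2 k) := by
  simp only [philin, map_mul, map_add, map_sub, map_pow, Complex.conj_I, Complex.conj_ofReal,
    map_intCast, Int.cast_neg]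
  ring

lemma PhiF_neg (γ0 γ1 γ2 : ℝ) (p : ℕ) (k : Fin (p + 1) → ℤ) :
    PhiF γ0 γ1 γ2 p (-k) = (starRingEnd ℂ) (PhiF γ0 γ1 γ2 p k) := by
  simp only [PhiF, Pi.neg_apply, Finset.sum_neg_distrib, philin_neg, map_sub, map_sum]

lemma filter_lt_eq_map {n : ℕ} :
    Finset.univ.filter (fun i : Fin (n + 2) => (i : ℕ) < n) =
      Finset.univ.map (Fin.castSuccEmb.trans Fin.castSuccEmb : Fin n ↪ Fin (n + 2)) := by
  ext i
  simp only [Finset.mem_filter, Finset.mem_univ, true_and, Finset.mem_map,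
    Function.Embedding.trans_apply, Fin.coe_castSuccEmb]
  constructor
  · intro h
    exact ⟨⟨i, h⟩, rfl⟩
  · rintro ⟨j, rfl⟩
    simp

lemma ksum1_eq (n : ℕ) (k : Fin (n + 2) → ℤ) :
    ksum1 (n + 1) k = ∑ i : Fin n, k i.castSucc.castSucc := by
  simp only [ksum1, Nat.add_sub_cancel, filter_lt_eq_map, Finset.sum_map]
  rfl

lemma filter_lt_succ_eq_map {n : ℕ} :
    Finset.univ.filter (fun i : Fin (n + 1) => (i : ℕ) < n) =
      Finset.univ.map (Fin.castSuccEmb : Fin n ↪ Fin (n + 1)) := by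
  ext i
  simp only [Finset.mem_filter, Finset.mem_univ, true_and, Finset.mem_map, Fin.coe_castSuccEmb]
  constructor
  · intro h
    exact ⟨⟨i, h⟩, rfl⟩
  · rintro ⟨j, rfl⟩
    simp

lemma abs_le_of_MH_ne_zero {C₀ : ℝ} (hC : 0 ≤ C₀) {n : ℕ} {k : Fin (n + 2) → ℤ}
    (h : MH C₀ (n + 1) k ≠ 0) (i : Fin n) :
    C₀ * |(k i.castSucc.castSucc : ℝ)| ≤ |(k (Fin.last n).castSucc : ℝ)| ^ ((4 : ℝ) / 5) := by
  unfold MH at h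
  split_ifs at h with h1
  · refine le_trans ?_ (h1.trans (min_le_left _ _))
    gcongr
    unfold fmax
    rw [← Real.toNNReal_le_iff_le_coe]
    exact Finset.le_sup (f := fun i => Real.toNNReal |(k i : ℝ)|)
      (show i.castSucc.castSucc ∈ _ by simp)
  · exact absurd rfl h

lemma norm_Dabc_le {n a b c : ℕ} (h : a + b + c ≤ n) (k : Fin (n + 2) → ℤ) :
    ‖Dabc (n + 1) a b c k‖ ≤ ∏ i : Fin n, bracket (k i.castSucc.castSucc) ^ 3 := by
  have e : ∏ i : Fin n, bracket (k i.castSucc.castSucc) ^ 3 =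
      ∏ i ∈ Finset.univ.filter (fun i : Fin (n + 2) => (i : ℕ) < n), bracket (k i) ^ 3 := by
    rw [filter_lt_eq_map, Finset.prod_map]; rfl
  rw [e]
  simp only [Dabc, Finset.prod_filter, ← Finset.prod_mul_distrib, norm_prod]
  refine Finset.prod_le_prod (fun i _ => norm_nonneg _) fun i _ => ?_
  have h1 := one_le_bracket (k i)
  have h2 := abs_le_bracket (k i)
  have hn : ‖Complex.I * (k i : ℂ)‖ ≤ bracket (k i) := by simpa using h2
  have hpow : ∀ e ≤ 3, ‖Complex.I * (k i : ℂ)‖ ^ e ≤ bracket (k i) ^ 3 := fun e he =>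
    (pow_le_pow_left₀ (norm_nonneg _) hn e).trans (pow_le_pow_right₀ h1 he)
  have p0 := one_le_pow₀ h1 (n := 3)
  have p1 := hpow 1 (by norm_num)
  have p2 := hpow 2 (by norm_num)
  have p3 := hpow 3 (by norm_num)
  rw [pow_one] at p1
  have key : ∀ (P Q R S : Prop) [Decidable P] [Decidable Q] [Decidable R] [Decidable S],
      (P → ¬ Q ∧ ¬ R ∧ S) → (Q → ¬ R ∧ S) → (R → S) →
      ‖(if P then (Complex.I * (k i : ℂ)) ^ 3 else 1) * (if Q then (Complex.I * (k i : ℂ)) ^ 2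
        else 1) * (if R then (Complex.I * (k i : ℂ)) else 1)‖ ≤
        if S then bracket (k i) ^ 3 else 1 := by
    intro P Q R S _ _ _ _ hP hQ hR
    by_cases P <;> by_cases Q <;> by_cases R <;> by_cases S <;>
      simp_all only [if_true, if_false, not_true, not_false_iff, mul_one, one_mul, norm_one,
        norm_pow, le_refl, imp_self, forall_const, and_true, and_false, false_imp_iff]
  refine key _ _ _ _ (fun _ => ?_) (fun _ => ?_) (fun _ => ?_) <;> omega

/-- The real dispersion polynomial, with `φ(k) = i q(k)`. -/
def dispersion (γ0 γ1 γ2 x : ℝ) : ℝ := γ0 * x ^ 5 - γ1 * x ^ 3 + γ2 * x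

lemma dispersion_sub_lower {γ0 γ1 γ2 x y Q δ : ℝ} (hδ : 0 ≤ δ) (hδ1 : δ ≤ 1)
    (hy : 1 ≤ |y|) (hyQ : |y| ≤ Q) (hQ : Q ^ 5 ≤ δ ^ 5 * |x| ^ 4)
    {n : ℕ} (κ : Fin n → ℝ) (hκ : ∀ i, |κ i| ≤ Q)
    (hsmall : δ * ((38 + n) * (|γ0| + |γ1| + |γ2|)) ≤ |γ0|) :
    |γ0| * (|x| ^ 4 * |y|) ≤ |dispersion γ0 γ1 γ2 (y + x) - dispersion γ0 γ1 γ2 x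
      - ∑ i, dispersion γ0 γ1 γ2 (κ i)| ∧ Q ≤ |x| := by
  have hQ1 : 1 ≤ Q := hy.trans hyQ
  have hx1 : 1 ≤ |x| := by
    by_contra! hlt
    have h1 : |x| ^ 4 < 1 := pow_lt_one₀ (abs_nonneg x) hlt (by norm_num)
    have h2 : δ ^ 5 ≤ 1 := pow_le_one₀ hδ hδ1
    have h3 : 1 ≤ Q ^ 5 := one_le_pow₀ hQ1
    nlinarith [pow_nonneg (abs_nonneg x) 4]
  have hQx : Q ≤ δ * |x| := by
    refine le_of_pow_le_pow_left₀ (n := 5) (by norm_num) (by positivity) (hQ.trans ?_)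
    rw [mul_pow]
    gcongr
    norm_num
  have hQx' : Q ≤ |x| := hQx.trans (mul_le_of_le_one_left (abs_nonneg x) hδ1)
  refine ⟨?_, hQx'⟩
  set T := |x| ^ 4 * |y| with hT
  have hTn : 0 ≤ T := by positivity
  have hyx : |y| ≤ |x| := hyQ.trans hQx'
  have hyd : |y| ≤ δ * |x| := hyQ.trans hQx
  have h1d : 1 ≤ δ * |x| := hQ1.trans hQx
  have t1 : |x ^ 3 * y ^ 2| ≤ δ * T := by
    rw [abs_mul, abs_pow, abs_pow]
    calc |x| ^ 3 * |y| ^ 2 = |x| ^ 3 * |y| * |y| := by ring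
      _ ≤ |x| ^ 3 * |y| * (δ * |x|) := by gcongr
      _ = δ * T := by rw [hT]; ring
  have t2 : |x ^ 2 * y ^ 3| ≤ δ * T := by
    refine le_trans ?_ t1
    rw [abs_mul, abs_pow, abs_pow, abs_mul, abs_pow, abs_pow]
    calc |x| ^ 2 * |y| ^ 3 = |x| ^ 2 * |y| ^ 2 * |y| := by ring
      _ ≤ |x| ^ 2 * |y| ^ 2 * |x| := by gcongr
      _ = _ := by ring
  have t3 : |x * y ^ 4| ≤ δ * T := by
    refine le_trans ?_ t2
    rw [abs_mul, abs_pow, abs_mul, abs_pow, abs_pow]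
    calc |x| * |y| ^ 4 = |x| * |y| ^ 3 * |y| := by ring
      _ ≤ |x| * |y| ^ 3 * |x| := by gcongr
      _ = _ := by ring
  have t4 : |y ^ 5| ≤ δ * T := by
    refine le_trans ?_ t3
    rw [abs_mul, abs_pow, abs_pow]
    calc |y| ^ 5 = |y| ^ 4 * |y| := by ring
      _ ≤ |y| ^ 4 * |x| := by gcongr
      _ = _ := by ring
  have t5 : |x ^ 2 * y| ≤ δ * T := by
    rw [abs_mul, abs_pow]
    calc |x| ^ 2 * |y| = |x| ^ 2 * |y| * 1 * 1 := by ring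
      _ ≤ |x| ^ 2 * |y| * (δ * |x|) * |x| := by gcongr
      _ = δ * T := by rw [hT]; ring
  have t6 : |x * y ^ 2| ≤ δ * T := by
    refine le_trans ?_ t5
    rw [abs_mul, abs_pow, abs_mul, abs_pow]
    calc |x| * |y| ^ 2 = |x| * |y| * |y| := by ring
      _ ≤ |x| * |y| * |x| := by gcongr
      _ = _ := by ring
  have t7 : |y ^ 3| ≤ δ * T := by
    refine le_trans ?_ t6
    rw [abs_mul, abs_pow, abs_pow]
    calc |y| ^ 3 = |y| ^ 2 * |y| := by ring
      _ ≤ |y| ^ 2 * |x| := by gcongr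
      _ = _ := by ring
  have t8 : |y| ≤ δ * T := by
    refine le_trans ?_ t7
    rw [abs_pow]
    exact le_self_pow₀ hy (by norm_num)
  have hQ5 : Q ^ 5 ≤ δ * T := by
    refine hQ.trans ?_
    have : δ ^ 5 ≤ δ := pow_le_of_le_one hδ hδ1 (by norm_num)
    calc δ ^ 5 * |x| ^ 4 ≤ δ * |x| ^ 4 * 1 := by rw [mul_one]; gcongr
      _ ≤ δ * |x| ^ 4 * |y| := by gcongr
      _ = δ * T := by rw [hT]; ring
  set B := |γ0| + |γ1| + |γ2| with hB
  have tri : ∀ α β γ : ℝ, ∀ u v w E : ℝ, |u| ≤ E → |v| ≤ E → |w| ≤ E →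
      |α * u - β * v + γ * w| ≤ (|α| + |β| + |γ|) * E := by
    intro α β γ u v w E hu hv hw
    calc |α * u - β * v + γ * w| ≤ |α * u| + |β * v| + |γ * w| :=
          (abs_add_le _ _).trans (by gcongr; exact abs_sub _ _)
      _ = |α| * |u| + |β| * |v| + |γ| * |w| := by simp only [abs_mul]
      _ ≤ |α| * E + |β| * E + |γ| * E := by gcongr
      _ = _ := by ring
  have hsum : |∑ i, dispersion γ0 γ1 γ2 (κ i)| ≤ n * (B * (δ * T)) := by
    refine (Finset.abs_sum_le_sum_abs _ _).trans ?_
    have : ∀ i ∈ Finset.univ, |dispersion γ0 γ1 γ2 (κ i)| ≤ B * (δ * T) := by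
      intro i _
      have hp : ∀ e, 1 ≤ e → e ≤ 5 → |κ i ^ e| ≤ δ * T := fun e _ he => by
        rw [abs_pow]
        exact (pow_le_pow_left₀ (abs_nonneg _) (hκ i) e).trans
          ((pow_le_pow_right₀ hQ1 he).trans hQ5)
      have := hp 1 (by norm_num) (by norm_num)
      rw [pow_one] at this
      exact tri _ _ _ _ _ _ _ (hp 5 (by norm_num) (by norm_num)) (hp 3 (by norm_num) (by norm_num))
        this
    simpa using Finset.sum_le_card_nsmul _ _ _ this
  have herr : |γ0 * (10 * (x ^ 3 * y ^ 2) + 10 * (x ^ 2 * y ^ 3) + 5 * (x * y ^ 4) + y ^ 5)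
      - γ1 * (3 * (x ^ 2 * y) + 3 * (x * y ^ 2) + y ^ 3) + γ2 * y| ≤ B * (26 * (δ * T)) := by
    have hdT : 0 ≤ δ * T := by positivity
    rw [abs_le] at t1 t2 t3 t4 t5 t6 t7
    refine tri _ _ _ _ _ _ _ (abs_le.2 ⟨?_, ?_⟩) (abs_le.2 ⟨?_, ?_⟩) ?_ <;> linarith
  have hmain : |5 * γ0 * (x ^ 4 * y)| = 5 * (|γ0| * T) := by
    rw [abs_mul, abs_mul, abs_mul, abs_pow, hT]; norm_num; ring
  have hdec : dispersion γ0 γ1 γ2 (y + x) - dispersion γ0 γ1 γ2 x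
      - ∑ i, dispersion γ0 γ1 γ2 (κ i) = 5 * γ0 * (x ^ 4 * y)
      + ((γ0 * (10 * (x ^ 3 * y ^ 2) + 10 * (x ^ 2 * y ^ 3) + 5 * (x * y ^ 4) + y ^ 5)
      - γ1 * (3 * (x ^ 2 * y) + 3 * (x * y ^ 2) + y ^ 3) + γ2 * y)
      - ∑ i, dispersion γ0 γ1 γ2 (κ i)) := by
    unfold dispersion; ring
  rw [hdec]
  have hrest := (abs_sub (γ0 * (10 * (x ^ 3 * y ^ 2) + 10 * (x ^ 2 * y ^ 3) + 5 * (x * y ^ 4)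
      + y ^ 5) - γ1 * (3 * (x ^ 2 * y) + 3 * (x * y ^ 2) + y ^ 3) + γ2 * y)
      (∑ i, dispersion γ0 γ1 γ2 (κ i))).trans (add_le_add herr hsum)
  have hlow := abs_sub_abs_le_abs_add (5 * γ0 * (x ^ 4 * y))
    ((γ0 * (10 * (x ^ 3 * y ^ 2) + 10 * (x ^ 2 * y ^ 3) + 5 * (x * y ^ 4) + y ^ 5)
      - γ1 * (3 * (x ^ 2 * y) + 3 * (x * y ^ 2) + y ^ 3) + γ2 * y)
      - ∑ i, dispersion γ0 γ1 γ2 (κ i))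
  have hsT : δ * ((38 + n) * B) * T ≤ |γ0| * T := by gcongr
  have hBn : 0 ≤ B * (δ * T) := by positivity
  have hg : 0 ≤ |γ0| * T := by positivity
  nlinarith

lemma philin_eq (γ0 γ1 γ2 : ℝ) (k : ℤ) :
    philin γ0 γ1 γ2 k = Complex.I * (dispersion γ0 γ1 γ2 k : ℂ) := by
  simp [philin, dispersion]

lemma norm_PhiF_eq (γ0 γ1 γ2 : ℝ) {n : ℕ} (k : Fin (n + 2) → ℤ) :
    ‖PhiF γ0 γ1 γ2 (n + 1) k‖ = |dispersion γ0 γ1 γ2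
        ((ksum1 (n + 1) k : ℝ) + (k (Fin.last n).castSucc : ℝ))
      - dispersion γ0 γ1 γ2 (k (Fin.last n).castSucc)
      - ∑ i : Fin n, dispersion γ0 γ1 γ2 (k i.castSucc.castSucc)| := by
  rw [PhiF, filter_lt_succ_eq_map, Finset.sum_map, Finset.sum_map, Fin.sum_univ_castSucc,
    Fin.sum_univ_castSucc, ksum1_eq]
  simp only [Fin.coe_castSuccEmb, philin_eq]
  rw [← Finset.mul_sum, ← mul_add, ← mul_sub, norm_mul, Complex.norm_I, one_mul,
    ← Real.norm_eq_abs, ← Complex.norm_real]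
  congr 1
  push_cast
  ring

lemma norm_PhiF_lower {γ0 γ1 γ2 : ℝ} {n : ℕ} {C₀ : ℝ} (hC : 0 < C₀)
    (hC1 : (n : ℝ) ≤ C₀) (hC2 : n * ((38 + n) * (|γ0| + |γ1| + |γ2|)) ≤ C₀ * |γ0|)
    {k : Fin (n + 2) → ℤ} (hH : MH C₀ (n + 1) k ≠ 0) (hNZ : ksum1 (n + 1) k ≠ 0) :
    |γ0| * (|(k (Fin.last n).castSucc : ℝ)| ^ 4 * |(ksum1 (n + 1) k : ℝ)|) ≤
        ‖PhiF γ0 γ1 γ2 (n + 1) k‖ ∧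
      |(ksum1 (n + 1) k : ℝ)| ≤ |(k (Fin.last n).castSucc : ℝ)| := by
  rw [norm_PhiF_eq]
  set x : ℝ := (k (Fin.last n).castSucc : ℝ)
  set Q : ℝ := n * (|x| ^ ((4 : ℝ) / 5) / C₀) with hQ
  have hx5 : (|x| ^ ((4 : ℝ) / 5)) ^ 5 = |x| ^ 4 := by
    rw [← Real.rpow_natCast, ← Real.rpow_mul (abs_nonneg x), ← Real.rpow_natCast]
    norm_num
  have hκ : ∀ i : Fin n, |(k i.castSucc.castSucc : ℝ)| ≤ |x| ^ ((4 : ℝ) / 5) / C₀ := fun i => by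
    rw [le_div_iff₀ hC, mul_comm]
    exact abs_le_of_MH_ne_zero hC.le hH i
  have hyQ : |(ksum1 (n + 1) k : ℝ)| ≤ Q := by
    rw [ksum1_eq]
    push_cast
    refine (Finset.abs_sum_le_sum_abs _ _).trans ?_
    simpa using Finset.sum_le_card_nsmul Finset.univ _ _ fun i _ => hκ i
  have hy : 1 ≤ |(ksum1 (n + 1) k : ℝ)| := by
    exact_mod_cast Int.one_le_abs hNZ
  have hκQ : ∀ i : Fin n, |(k i.castSucc.castSucc : ℝ)| ≤ Q := fun i => by
    have hn : (1 : ℝ) ≤ n := by exact_mod_cast i.pos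
    exact (hκ i).trans (le_mul_of_one_le_left (by positivity) hn)
  have h := dispersion_sub_lower (γ0 := γ0) (γ1 := γ1) (γ2 := γ2) (x := x) (δ := n / C₀)
    (by positivity) ((div_le_one hC).2 hC1) hy hyQ
    (by rw [hQ, div_pow, mul_pow, div_pow, hx5]; exact le_of_eq (by ring)) _ hκQ
    (by rw [div_mul_eq_mul_div, div_le_iff₀ hC]; linarith)
  exact ⟨h.1, hyQ.trans h.2⟩

lemma norm_MNR_le {C₀ : ℝ} {s n : ℕ} {lam : ℝ} {a b c : ℕ} (habc : a + b + c ≤ n + 1)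
    {k : Fin (n + 2) → ℤ} (hNZ : ksum1 (n + 1) k ≠ 0) :
    ‖MNR C₀ s (n + 1) lam a b c k‖ ≤ |lam| * (|(s : ℝ) - 3 / 2| * a + b) *
      |(ksum1 (n + 1) k : ℝ)| * ∏ i : Fin n, bracket (k i.castSucc.castSucc) ^ 3 := by
  have hy : 1 ≤ |(ksum1 (n + 1) k : ℝ)| := by exact_mod_cast Int.one_le_abs hNZ
  set P := ∏ i : Fin n, bracket (k i.castSucc.castSucc) ^ 3
  set y := ksum1 (n + 1) k
  have hP : 0 ≤ P := Finset.prod_nonneg fun i _ =>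
    pow_nonneg (zero_le_one.trans (one_le_bracket _)) _
  have h1 : (a : ℝ) * ‖Dabc (n + 1) (a - 1) b c k‖ ≤ a * P := by
    rcases Nat.eq_zero_or_pos a with rfl | ha
    · simp
    · gcongr
      exact norm_Dabc_le (by omega) k
  have h2 : (b : ℝ) * ‖Dabc (n + 1) a (b - 1) c k‖ ≤ b * P := by
    rcases Nat.eq_zero_or_pos b with rfl | hb
    · simp
    · gcongr
      exact norm_Dabc_le (by omega) k
  have h3 : ‖MH C₀ (n + 1) k‖ ≤ 1 := by
    unfold MH; split_ifs <;> simp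
  have h4 : ‖MNZ (n + 1) k‖ ≤ 1 := by
    unfold MNZ; split_ifs <;> simp
  have h5 : ‖(s : ℂ) - 3 / 2‖ = |(s : ℝ) - 3 / 2| := by
    rw [← Real.norm_eq_abs, ← Complex.norm_real]; push_cast; rfl
  have h6 : ‖((s : ℂ) - 3 / 2) * (a : ℂ) * (Complex.I * (y : ℂ)) * Dabc (n + 1) (a - 1) b c k
      + (b : ℂ) * Dabc (n + 1) a (b - 1) c k‖ ≤
      (|(s : ℝ) - 3 / 2| * a + b) * |(y : ℝ)| * P := by
    refine (norm_add_le _ _).trans ?_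
    simp only [norm_mul, h5, Complex.norm_natCast, Complex.norm_I, Complex.norm_intCast, one_mul]
    have h7 : (b : ℝ) * P * 1 ≤ b * P * |(y : ℝ)| := by gcongr
    calc |(s : ℝ) - 3 / 2| * a * |(y : ℝ)| * ‖Dabc (n + 1) (a - 1) b c k‖
          + b * ‖Dabc (n + 1) a (b - 1) c k‖
        = |(s : ℝ) - 3 / 2| * |(y : ℝ)| * (a * ‖Dabc (n + 1) (a - 1) b c k‖)
          + b * ‖Dabc (n + 1) a (b - 1) c k‖ := by ring
      _ ≤ |(s : ℝ) - 3 / 2| * |(y : ℝ)| * (a * P) + b * P := by gcongr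
      _ ≤ |(s : ℝ) - 3 / 2| * |(y : ℝ)| * (a * P) + b * P * |(y : ℝ)| := by linarith
      _ = _ := by ring
  unfold MNR
  rw [norm_mul, norm_mul, norm_mul, Complex.norm_real, Real.norm_eq_abs]
  calc ‖MH C₀ (n + 1) k‖ * ‖MNZ (n + 1) k‖ * |lam| * _
      ≤ 1 * 1 * |lam| * ((|(s : ℝ) - 3 / 2| * a + b) * |(y : ℝ)| * P) := by gcongr
    _ = _ := by ring

lemma norm_multiplier_le {γ0 γ1 γ2 : ℝ} (hγ0 : γ0 ≠ 0) {n : ℕ} {C₀ : ℝ} (hC : 0 < C₀)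
    (hC1 : (n : ℝ) ≤ C₀) (hC2 : n * ((38 + n) * (|γ0| + |γ1| + |γ2|)) ≤ C₀ * |γ0|)
    (r : ℕ) (lam : ℝ) {a b c : ℕ} (habc : a + b + c ≤ n + 1)
    (k : Fin (n + 2) → ℤ) (hk : ∑ i, k i = 0) :
    ‖(Complex.I * (k (Fin.last n).castSucc : ℂ)) ^ (r + 2)
        * (Complex.I * (k (Fin.last (n + 1)) : ℂ)) ^ (r + 2)
        * MNR C₀ (r + 1) (n + 1) lam a b c k / PhiF γ0 γ1 γ2 (n + 1) k‖ ≤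
      (4 * |lam| * (|((r + 1 : ℕ) : ℝ) - 3 / 2| * a + b) / |γ0|) *
        (∏ i : Fin n, bracket (k i.castSucc.castSucc) ^ 3) *
        (|(k (Fin.last n).castSucc : ℝ)| ^ r * |(k (Fin.last (n + 1)) : ℝ)| ^ r) := by
  have hP : 0 ≤ ∏ i : Fin n, bracket (k i.castSucc.castSucc) ^ 3 := Finset.prod_nonneg fun i _ =>
    pow_nonneg (zero_le_one.trans (one_le_bracket _)) _
  by_cases hH : MH C₀ (n + 1) k = 0
  · rw [MNR, hH]
    simp only [zero_mul, mul_zero, zero_div, norm_zero]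
    positivity
  by_cases hNZ : ksum1 (n + 1) k = 0
  · rw [MNR, MNZ, hNZ]
    simp only [ne_eq, not_true, if_false, zero_mul, mul_zero, zero_div, norm_zero]
    positivity
  obtain ⟨hlow, hyx⟩ := norm_PhiF_lower hC hC1 hC2 hH hNZ
  have hMNR := norm_MNR_le (C₀ := C₀) (s := r + 1) (lam := lam) habc hNZ
  have hy : 1 ≤ |(ksum1 (n + 1) k : ℝ)| := by exact_mod_cast Int.one_le_abs hNZ
  have hz : |(k (Fin.last (n + 1)) : ℝ)| ≤ 2 * |(k (Fin.last n).castSucc : ℝ)| := by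
    have h0 := zero_sum_split hk
    rw [← ksum1_eq] at h0
    have h1 : (k (Fin.last (n + 1)) : ℝ) =
        -((ksum1 (n + 1) k : ℝ) + (k (Fin.last n).castSucc : ℝ)) := by
      have : k (Fin.last (n + 1)) = -(ksum1 (n + 1) k + k (Fin.last n).castSucc) := by linarith
      rw [this]; push_cast; rfl
    rw [h1, abs_neg]
    exact (abs_add_le _ _).trans (by linarith)
  simp only [norm_div, norm_mul, norm_pow, Complex.norm_I, Complex.norm_intCast, one_mul]
  set E := |((r + 1 : ℕ) : ℝ) - 3 / 2| * a + b
  have hE : 0 ≤ E := by positivity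
  generalize (∏ i : Fin n, bracket (k i.castSucc.castSucc) ^ 3) = P at *
  have hZn := abs_nonneg (k (Fin.last (n + 1)) : ℝ)
  generalize |(k (Fin.last (n + 1)) : ℝ)| = Z at *
  have hX : 0 < |(k (Fin.last n).castSucc : ℝ)| := by linarith
  have hZ : 0 ≤ Z := hZn
  generalize |(k (Fin.last n).castSucc : ℝ)| = X at *
  generalize |(ksum1 (n + 1) k : ℝ)| = Y at *
  have hγ : 0 < |γ0| := abs_pos.2 hγ0
  have hY : 0 < Y := by linarith
  rw [div_le_iff₀ (lt_of_lt_of_le (by positivity) hlow)]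
  calc X ^ (r + 2) * Z ^ (r + 2) * ‖MNR C₀ (r + 1) (n + 1) lam a b c k‖
      = X ^ (r + 2) * (Z ^ r * Z ^ 2) * ‖MNR C₀ (r + 1) (n + 1) lam a b c k‖ := by ring
    _ ≤ X ^ (r + 2) * (Z ^ r * (2 * X) ^ 2) * (|lam| * E * Y * P) := by gcongr
    _ = 4 * |lam| * E / |γ0| * P * (X ^ r * Z ^ r) * (|γ0| * (X ^ 4 * Y)) := by
      field_simp
      ring
    _ ≤ _ := by gcongr

/-- A size of the cut-off constant that makes the resonance function nondegenerate. -/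
noncomputable def cutoffThreshold (γ0 γ1 γ2 : ℝ) (p : ℕ) : ℝ :=
  p + p * ((38 + p) * (|γ0| + |γ1| + |γ2|)) / |γ0|

lemma cutoffThreshold_nonneg (γ0 γ1 γ2 : ℝ) (p : ℕ) : 0 ≤ cutoffThreshold γ0 γ1 γ2 p := by
  unfold cutoffThreshold
  positivity

lemma exists_norm_Gam_resonant_le {γ0 : ℝ} (γ1 γ2 : ℝ) (hγ0 : γ0 ≠ 0) {p : ℕ} (hp : 2 ≤ p)
    {C₀ : ℝ} (hC : 0 < C₀) (hthr : cutoffThreshold γ0 γ1 γ2 p ≤ C₀) (r : ℕ) (lam : ℝ)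
    {a b c : ℕ} (habc : a + b + c ≤ p) :
    ∃ D : ℝ, 0 ≤ D ∧ ∀ f h : ℝ → ℂ,
      ContDiff ℝ (⊤ : ℕ∞) f → Function.Periodic f (2 * Real.pi) →
      ContDiff ℝ (⊤ : ℕ∞) h → Function.Periodic h (2 * Real.pi) →
      ‖Gam p (fun k =>
          (Complex.I * (k (⟨p - 1, by omega⟩ : Fin (p + 1)) : ℂ)) ^ (r + 1 + 1)
            * (Complex.I * (k (Fin.last p) : ℂ)) ^ (r + 1 + 1)
            * MNR C₀ (r + 1) p lam a b c k / PhiF γ0 γ1 γ2 p k) (tup p f h)‖ ≤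
        D * (hsNormC 4 f ^ (p - 1) * dxNormSq r h) := by
  obtain ⟨n, rfl⟩ : ∃ n, p = n + 1 := ⟨p - 1, by omega⟩
  have hγ : 0 < |γ0| := abs_pos.2 hγ0
  have hle : cutoffThreshold γ0 γ1 γ2 n ≤ C₀ := by
    refine le_trans ?_ hthr
    unfold cutoffThreshold
    gcongr <;> omega
  unfold cutoffThreshold at hle
  have h1 : (n : ℝ) ≤ C₀ := by
    have : 0 ≤ n * ((38 + n) * (|γ0| + |γ1| + |γ2|)) / |γ0| := by positivity
    linarith
  have h2 : n * ((38 + n) * (|γ0| + |γ1| + |γ2|)) ≤ C₀ * |γ0| := by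
    rw [← div_le_iff₀ hγ]
    have : (0 : ℝ) ≤ n := Nat.cast_nonneg n
    linarith
  refine ⟨(4 * |lam| * (|((r + 1 : ℕ) : ℝ) - 3 / 2| * a + b) / |γ0|) *
    Real.sqrt (∑' k : ℤ, (1 + (k : ℝ) ^ 2)⁻¹) ^ n, by positivity, fun f h hf hfp hh hhp => ?_⟩
  have := norm_Gam_le n r _ hf hfp hh hhp _ (by positivity)
    (norm_multiplier_le hγ0 hC h1 h2 r lam habc)
  refine this.trans_eq ?_
  rw [mul_assoc]
  rfl

/-- **Comparison lemma for the modified energy.** For every `s ≥ 1` one can choose the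
cut-off constant `C₀` in `M_H` and a constant `C_s` so large that the modified energy
`F_s(f,g) = (1/2)‖∂_x^s(f−g)‖_{L²}² + (1/2)‖f−g‖_{L²}²(1 + C_s Σ_j ‖f‖_{H⁴}^{s(p_j−1)})
  + Σ_j Γ^{(p_j)}((ik_{p_j})^{s+1}(ik_{p_j+1})^{s+1}M_{NR,j}/Φ^{(p_j)}; f,…,f,f−g,f−g)`
is real and satisfies
`F_s(f,g) ≤ ‖∂_x^s(f−g)‖² + ‖f−g‖²(1 + C_s Σ_j ‖f‖_{H⁴}^{s(p_j−1)}) ≤ 4 F_s(f,g)`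
for all real-valued smooth `2π`-periodic `f, g`. -/
theorem comparison_lemma
    (γ0 γ1 γ2 : ℝ) (hγ0 : γ0 ≠ 0)
    (j0 : ℕ) (lam : Fin j0 → ℝ) (a b c d : Fin j0 → ℕ)
    (hp : ∀ j : Fin j0, 2 ≤ a j + b j + c j + d j)
    (s : ℕ) (hs : 1 ≤ s) :
    ∃ C₀ : ℝ, 0 < C₀ ∧ ∃ Cs : ℝ, 0 < Cs ∧
      ∀ f g : ℝ → ℝ,
        ContDiff ℝ (⊤ : ℕ∞) f → Function.Periodic f (2 * Real.pi) →
        ContDiff ℝ (⊤ : ℕ∞) g → Function.Periodic g (2 * Real.pi) →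
        ∀ Fs : ℂ,
          Fs = (((1/2 : ℝ) * dxNormSq s (cF (fun x => f x - g x)) : ℝ) : ℂ)
            + (((1/2 : ℝ) * dxNormSq 0 (cF (fun x => f x - g x))
                * (1 + Cs * ∑ j : Fin j0,
                    hsNormC 4 (cF f) ^ (s * (a j + b j + c j + d j - 1))) : ℝ) : ℂ)
            + ∑ j : Fin j0,
                Gam (a j + b j + c j + d j)
                  (fun k =>
                    (Complex.I * (k (⟨a j + b j + c j + d j - 1, by omega⟩ :
                        Fin (a j + b j + c j + d j + 1)) : ℂ)) ^ (s + 1)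
                    * (Complex.I * (k (Fin.last (a j + b j + c j + d j)) : ℂ)) ^ (s + 1)
                    * MNR C₀ s (a j + b j + c j + d j) (lam j) (a j) (b j) (c j) k
                    / PhiF γ0 γ1 γ2 (a j + b j + c j + d j) k)
                  (tup (a j + b j + c j + d j) (cF f) (cF (fun x => f x - g x))) →
          ∀ A : ℝ,
            A = dxNormSq s (cF (fun x => f x - g x))
              + dxNormSq 0 (cF (fun x => f x - g x))
                * (1 + Cs * ∑ j : Fin j0,
                    hsNormC 4 (cF f) ^ (s * (a j + b j + c j + d j - 1))) →
            Fs.im = 0 ∧ Fs.re ≤ A ∧ A ≤ 4 * Fs.re := by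
  obtain ⟨r, rfl⟩ : ∃ r, s = r + 1 := ⟨s - 1, by omega⟩
  set C₀ : ℝ := 1 + ∑ j, cutoffThreshold γ0 γ1 γ2 (a j + b j + c j + d j) with hC₀
  have hthr0 : ∀ j ∈ Finset.univ, 0 ≤ cutoffThreshold γ0 γ1 γ2 (a j + b j + c j + d j) :=
    fun j _ => cutoffThreshold_nonneg _ _ _ _
  have hC : 0 < C₀ := by have := Finset.sum_nonneg hthr0; linarith
  have hthr : ∀ j, cutoffThreshold γ0 γ1 γ2 (a j + b j + c j + d j) ≤ C₀ := fun j => by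
    have := Finset.single_le_sum hthr0 (Finset.mem_univ j)
    linarith
  choose D hD hGam using fun j => exists_norm_Gam_resonant_le γ1 γ2 hγ0 (hp j) hC (hthr j) r
    (lam j) (Nat.le_add_right (a j + b j + c j) (d j))
  have hDsum : 0 ≤ ∑ j, D j := Finset.sum_nonneg fun j _ => hD j
  set ε : ℝ := (4 * (1 + ∑ j, D j))⁻¹ with hε
  have hεpos : 0 < ε := by positivity
  refine ⟨C₀, hC, 4 * ((1 + ∑ j, D j) * ε⁻¹ ^ r), by positivity, ?_⟩
  intro f g hf hfp hg hgp Fs hFs A hA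
  have hcf : ContDiff ℝ (⊤ : ℕ∞) (cF f) := Complex.ofRealCLM.contDiff.comp hf
  have hcfp : Function.Periodic (cF f) (2 * Real.pi) := fun x => by simp [cF, hfp x]
  have hch : ContDiff ℝ (⊤ : ℕ∞) (cF fun x => f x - g x) :=
    Complex.ofRealCLM.contDiff.comp (hf.sub hg)
  have hchp : Function.Periodic (cF fun x => f x - g x) (2 * Real.pi) := fun x => by
    simp [cF, hfp x, hgp x]
  have hb := fun j => hGam j (cF f) (cF fun x => f x - g x) hcf hcfp hch hchp
  have hreal : ∀ j, (Gam (a j + b j + c j + d j) (fun k =>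
      (Complex.I * (k (⟨a j + b j + c j + d j - 1, by omega⟩ :
          Fin (a j + b j + c j + d j + 1)) : ℂ)) ^ (r + 1 + 1)
        * (Complex.I * (k (Fin.last (a j + b j + c j + d j)) : ℂ)) ^ (r + 1 + 1)
        * MNR C₀ (r + 1) (a j + b j + c j + d j) (lam j) (a j) (b j) (c j) k
        / PhiF γ0 γ1 γ2 (a j + b j + c j + d j) k)
      (tup (a j + b j + c j + d j) (cF f) (cF fun x => f x - g x))).im = 0 := by
    intro j
    refine Gam_im_eq_zero _ _ _ (fun k => ?_) (fun i k => ?_)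
    · simp only [MNR_neg, PhiF_neg, Pi.neg_apply, map_mul, map_div₀, map_pow, Complex.conj_I,
        map_intCast, Int.cast_neg, mul_neg, neg_mul]
    · unfold tup
      split_ifs <;> exact fhat_cF_neg _ _
  set G : Fin j0 → ℂ := fun j => Gam (a j + b j + c j + d j) (fun k =>
      (Complex.I * (k (⟨a j + b j + c j + d j - 1, by omega⟩ :
          Fin (a j + b j + c j + d j + 1)) : ℂ)) ^ (r + 1 + 1)
        * (Complex.I * (k (Fin.last (a j + b j + c j + d j)) : ℂ)) ^ (r + 1 + 1)
        * MNR C₀ (r + 1) (a j + b j + c j + d j) (lam j) (a j) (b j) (c j) k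
        / PhiF γ0 γ1 γ2 (a j + b j + c j + d j) k)
      (tup (a j + b j + c j + d j) (cF f) (cF fun x => f x - g x)) with hG
  change ∀ j, (G j).im = 0 at hreal
  change ∀ j, ‖G j‖ ≤ _ at hb
  change Fs = _ + _ + ∑ j, G j at hFs
  set h : ℝ → ℂ := cF fun x => f x - g x
  set H := hsNormC 4 (cF f)
  have hH : 0 ≤ H := Real.sqrt_nonneg _
  have hdx : ∀ m, 0 ≤ dxNormSq m h := fun m => tsum_nonneg fun k => by
    rw [pow_mul]; positivity
  set S := ∑ j, H ^ ((r + 1) * (a j + b j + c j + d j - 1))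
  have hS : 0 ≤ S := Finset.sum_nonneg fun j _ => by positivity
  have hGj : ∀ j ∈ Finset.univ, ‖G j‖ ≤
      D j * (ε * dxNormSq (r + 1) h + ε⁻¹ ^ r * S * dxNormSq 0 h) := by
    intro j _
    refine (hb j).trans (mul_le_mul_of_nonneg_left ?_ (hD j))
    refine (dxNormSq_interpolation hch hchp r hεpos (by positivity)).trans ?_
    have := hdx 0
    have hle : (H ^ (a j + b j + c j + d j - 1)) ^ (r + 1) ≤ S := by
      rw [← pow_mul, mul_comm]
      exact Finset.single_le_sum
        (f := fun j => H ^ ((r + 1) * (a j + b j + c j + d j - 1)))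
        (fun j _ => by positivity) (Finset.mem_univ j)
    gcongr
  have hsum : ‖∑ j, G j‖ ≤
      4⁻¹ * dxNormSq (r + 1) h + (1 + ∑ j, D j) * ε⁻¹ ^ r * S * dxNormSq 0 h := by
    refine (norm_sum_le _ _).trans ((Finset.sum_le_sum hGj).trans ?_)
    rw [← Finset.sum_mul]
    have h0 := hdx 0
    have h1 := hdx (r + 1)
    calc (∑ j, D j) * (ε * dxNormSq (r + 1) h + ε⁻¹ ^ r * S * dxNormSq 0 h)
        ≤ (1 + ∑ j, D j) * (ε * dxNormSq (r + 1) h + ε⁻¹ ^ r * S * dxNormSq 0 h) := by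
          gcongr
          linarith
      _ = ((1 + ∑ j, D j) * ε) * dxNormSq (r + 1) h
          + (1 + ∑ j, D j) * ε⁻¹ ^ r * S * dxNormSq 0 h := by ring
      _ = _ := by
        congr 2
        rw [hε]
        field_simp
  have hre := abs_le.1 ((Complex.abs_re_le_norm _).trans hsum)
  have h0 := hdx 0
  have h1 := hdx (r + 1)
  refine ⟨?_, ?_, ?_⟩
  · rw [hFs, Complex.add_im, Complex.add_im, Complex.ofReal_im, Complex.ofReal_im, Complex.im_sum]
    simp [hreal]
  all_goals
    rw [hFs, hA, Complex.add_re, Complex.add_re, Complex.ofReal_re, Complex.ofReal_re]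
    have h2 : 0 ≤ (1 + ∑ j, D j) * ε⁻¹ ^ r * S * dxNormSq 0 h := by positivity
    nlinarith [hre.1, hre.2]

end FifthOrderStmt19
end
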